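/- arXiv:math/0212329 — 2 statements merged into one kernel-verified Lean document; each statement's English description precedes it below -/
import Mathlib

section
/- For a locally compact metric space X, an abelian group A, and an integer n, the following are equivalent: (1) dim_A X ≤ n; (2) H^{n+1}_c(U;A) = 0 for every precompact open subset U of X; (3) for every pair B ⊆ C of compact subsets of X, the restriction homomorphism H^n(C;A) → H^n(B;A) is surjective. -/
open Set Function

open scoped ENNReal

noncomputable section

/-! ### Alexander–Spanier (Čech) cohomology -/

namespace AS

variable (A : Type*) [AddCommGroup A]

/-- Alexander–Spanier `n`-cochains on `X` with coefficients in `A`. -/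
abbrev Cochain (X : Type*) (n : ℕ) : Type _ := (Fin (n + 1) → X) → A

/-- The Alexander–Spanier coboundary operator. -/
def d (X : Type*) (n : ℕ) : Cochain A X n →+ Cochain A X (n + 1) :=
  AddMonoidHom.mk' (fun φ s => ∑ i : Fin (n + 2), ((-1 : ℤ) ^ (i : ℕ)) • φ (s ∘ i.succAbove))
    (fun φ ψ => funext fun s => by
      simp [smul_add, Finset.sum_add_distrib])

/-- An open cover of `X`. -/
def IsOpenCover {X : Type*} [TopologicalSpace X] (U : Set (Set X)) : Prop :=
  (∀ u ∈ U, IsOpen u) ∧ ⋃₀ U = univ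

/-- A tuple is `U`-small if it is contained in a single member of `U`. -/
def Small {X : Type*} (U : Set (Set X)) {k : ℕ} (s : Fin k → X) : Prop :=
  ∃ u ∈ U, ∀ i, s i ∈ u

/-- The subgroup of cochains vanishing on all tuples that are small with respect to
some open cover (i.e. vanishing in a neighbourhood of the diagonal). -/
def locZero (X : Type*) [TopologicalSpace X] (n : ℕ) : AddSubgroup (Cochain A X n) where
  carrier := {φ | ∃ U, IsOpenCover U ∧ ∀ s : Fin (n + 1) → X, Small U s → φ s = 0}
  zero_mem' := ⟨{univ}, ⟨fun u hu => by rw [mem_singleton_iff] at hu; rw [hu]; exact isOpen_univ,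
      by simp⟩, fun s _ => rfl⟩
  add_mem' := by
    rintro φ ψ ⟨U, ⟨hUo, hUc⟩, hφ⟩ ⟨W, ⟨hWo, hWc⟩, hψ⟩
    refine ⟨(fun p : Set X × Set X => p.1 ∩ p.2) '' (U ×ˢ W), ⟨?_, ?_⟩, ?_⟩
    · rintro _ ⟨⟨u, w⟩, ⟨hu, hw⟩, rfl⟩
      exact (hUo u hu).inter (hWo w hw)
    · apply eq_univ_of_forall
      intro x
      have hx1 : x ∈ ⋃₀ U := hUc ▸ mem_univ x
      have hx2 : x ∈ ⋃₀ W := hWc ▸ mem_univ x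
      obtain ⟨u, hu, hxu⟩ := hx1
      obtain ⟨w, hw, hxw⟩ := hx2
      exact ⟨u ∩ w, ⟨⟨u, w⟩, ⟨hu, hw⟩, rfl⟩, hxu, hxw⟩
    · rintro s ⟨_, ⟨⟨u, w⟩, ⟨hu, hw⟩, rfl⟩, hs⟩
      have h1 : φ s = 0 := hφ s ⟨u, hu, fun i => (hs i).1⟩
      have h2 : ψ s = 0 := hψ s ⟨w, hw, fun i => (hs i).2⟩
      show φ s + ψ s = 0
      rw [h1, h2, add_zero]
  neg_mem' := by
    rintro φ ⟨U, hU, hφ⟩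
    exact ⟨U, hU, fun s hs => by show -φ s = 0; rw [hφ s hs, neg_zero]⟩

/-- The Alexander–Spanier cochain complex: cochains modulo locally zero cochains. -/
abbrev QC (X : Type*) [TopologicalSpace X] (n : ℕ) : Type _ := Cochain A X n ⧸ locZero A X n

lemma d_locZero (X : Type*) [TopologicalSpace X] (n : ℕ) :
    locZero A X n ≤ (locZero A X (n + 1)).comap (d A X n) := by
  rintro φ ⟨U, hU, hφ⟩
  refine ⟨U, hU, fun s ⟨u, hu, hs⟩ => ?_⟩
  show (d A X n φ) s = 0
  have : ∀ i : Fin (n + 2), φ (s ∘ i.succAbove) = 0 :=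
    fun i => hφ _ ⟨u, hu, fun j => hs _⟩
  simp only [d, AddMonoidHom.mk'_apply]
  exact Finset.sum_eq_zero fun i _ => by rw [this i, smul_zero]

/-- The induced differential on the Alexander–Spanier complex. -/
def dQ (X : Type*) [TopologicalSpace X] (n : ℕ) : QC A X n →+ QC A X (n + 1) :=
  QuotientAddGroup.map _ _ (d A X n) (d_locZero A X n)

/-- Cocycles. -/
def cocycles (X : Type*) [TopologicalSpace X] (n : ℕ) : AddSubgroup (QC A X n) :=
  (dQ A X n).ker

/-- Coboundaries (the trivial subgroup in degree `0`). -/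
def cobounds (X : Type*) [TopologicalSpace X] (n : ℕ) : AddSubgroup (QC A X n) :=
  match n with
  | 0 => ⊥
  | (m + 1) => (dQ A X m).range

/-- Alexander–Spanier cohomology of `X` with coefficients in `A`; for paracompact Hausdorff
(e.g. metric) spaces this is naturally isomorphic to Čech cohomology. -/
def ASH (n : ℕ) (X : Type*) [TopologicalSpace X] : Type _ :=
  ↥(cocycles A X n) ⧸ ((cobounds A X n).comap (cocycles A X n).subtype)

instance (n : ℕ) (X : Type*) [TopologicalSpace X] : AddCommGroup (ASH A n X) :=
  inferInstanceAs (AddCommGroup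
    (↥(cocycles A X n) ⧸ ((cobounds A X n).comap (cocycles A X n).subtype)))

end AS

namespace AS

variable (A : Type*) [AddCommGroup A]

/-- Pullback of Alexander–Spanier cochains along a map. -/
def pull {X Y : Type*} (f : X → Y) (n : ℕ) : Cochain A Y n →+ Cochain A X n :=
  AddMonoidHom.mk' (fun φ s => φ (f ∘ s)) (fun φ ψ => rfl)

lemma pull_d {X Y : Type*} (f : X → Y) (n : ℕ) (φ : Cochain A Y n) :
    pull A f (n + 1) (d A Y n φ) = d A X n (pull A f n φ) := rfl

lemma pull_locZero {X Y : Type*} [TopologicalSpace X] [TopologicalSpace Y] {f : X → Y}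
    (hf : Continuous f) (n : ℕ) :
    locZero A Y n ≤ (locZero A X n).comap (pull A f n) := by
  rintro φ ⟨U, ⟨hUo, hUc⟩, hφ⟩
  refine ⟨(f ⁻¹' ·) '' U, ⟨?_, ?_⟩, ?_⟩
  · rintro _ ⟨u, hu, rfl⟩
    exact (hUo u hu).preimage hf
  · apply eq_univ_of_forall
    intro x
    have : f x ∈ ⋃₀ U := hUc ▸ mem_univ _
    obtain ⟨u, hu, hx⟩ := this
    exact ⟨f ⁻¹' u, ⟨u, hu, rfl⟩, hx⟩
  · rintro s ⟨_, ⟨u, hu, rfl⟩, hs⟩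
    exact hφ _ ⟨u, hu, fun i => hs i⟩

/-- Pullback on the Alexander–Spanier complex. -/
def pullQ {X Y : Type*} [TopologicalSpace X] [TopologicalSpace Y] {f : X → Y}
    (hf : Continuous f) (n : ℕ) : QC A Y n →+ QC A X n :=
  QuotientAddGroup.map _ _ (pull A f n) (pull_locZero A hf n)

lemma pullQ_d {X Y : Type*} [TopologicalSpace X] [TopologicalSpace Y] {f : X → Y}
    (hf : Continuous f) (n : ℕ) (x : QC A Y n) :
    pullQ A hf (n + 1) (dQ A Y n x) = dQ A X n (pullQ A hf n x) := by
  refine QuotientAddGroup.induction_on x ?_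
  intro φ
  simp only [pullQ, dQ, QuotientAddGroup.map_mk, pull_d]

lemma pullQ_cocycles {X Y : Type*} [TopologicalSpace X] [TopologicalSpace Y] {f : X → Y}
    (hf : Continuous f) (n : ℕ) {x : QC A Y n} (hx : x ∈ cocycles A Y n) :
    pullQ A hf n x ∈ cocycles A X n := by
  have : dQ A Y n x = 0 := hx
  show dQ A X n (pullQ A hf n x) = 0
  rw [← pullQ_d, this, map_zero]

lemma pullQ_cobounds {X Y : Type*} [TopologicalSpace X] [TopologicalSpace Y] {f : X → Y}
    (hf : Continuous f) (n : ℕ) {x : QC A Y n} (hx : x ∈ cobounds A Y n) :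
    pullQ A hf n x ∈ cobounds A X n := by
  match n with
  | 0 =>
    have : x = 0 := hx
    rw [this, map_zero]
    exact (⊥ : AddSubgroup (QC A X 0)).zero_mem
  | (m + 1) =>
    obtain ⟨y, rfl⟩ := hx
    exact ⟨pullQ A hf m y, (pullQ_d A hf m y).symm⟩

/-- The map on cocycles induced by a continuous map. -/
def pullZ {X Y : Type*} [TopologicalSpace X] [TopologicalSpace Y] {f : X → Y}
    (hf : Continuous f) (n : ℕ) : ↥(cocycles A Y n) →+ ↥(cocycles A X n) :=
  AddMonoidHom.codRestrict ((pullQ A hf n).comp (cocycles A Y n).subtype) _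
    (fun x => pullQ_cocycles A hf n x.2)

/-- The homomorphism induced on Alexander–Spanier (Čech) cohomology by a continuous map.
Note the contravariance: a map `f : X → Y` induces `ASHmap : ASH A n Y →+ ASH A n X`. -/
def ASHmap {X Y : Type*} [TopologicalSpace X] [TopologicalSpace Y] {f : X → Y}
    (hf : Continuous f) (n : ℕ) : ASH A n Y →+ ASH A n X :=
  QuotientAddGroup.map _ _ (pullZ A hf n) (by
    rintro ⟨x, hx⟩ hmem
    have : x ∈ cobounds A Y n := hmem
    exact pullQ_cobounds A hf n this)

end AS

namespace AS

variable (A : Type*) [AddCommGroup A]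

/-- Čech cohomology with compact supports: for compact `B` this is the (Alexander–Spanier =
Čech) cohomology of `B` itself, and for noncompact `B` it is that of the one-point
compactification of `B`. -/
def Hc (n : ℕ) (B : Type*) [TopologicalSpace B] : Type _ :=
  open scoped Classical in
  if CompactSpace B then ASH A n B else ASH A n (OnePoint B)

end AS

/-- The cohomological dimension `dim_A X` of a space `X` with respect to an abelian group `A`:
the supremum of the integers `n` for which there is a locally compact subset `B ⊆ X` with
`H^n_c(B; A) ≠ 0`. -/
noncomputable def cohDim (A : Type*) [AddCommGroup A] (X : Type*) [TopologicalSpace X] : ℕ∞ :=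
  sSup {e : ℕ∞ | ∃ n : ℕ, e = (n : ℕ∞) ∧
    ∃ B : Set X, LocallyCompactSpace B ∧ Nontrivial (AS.Hc A n B)}

namespace AS

section Slice

variable {A X : Type*} {k : ℕ}

/-- Fix the first variable of a function of several variables. -/
def slice (x : X) (φ : (Fin (k + 1) → X) → A) : (Fin k → X) → A :=
  fun s => φ (Fin.cons x s : Fin (k + 1) → X)

lemma eq_of_slice {φ ψ : (Fin (k + 1) → X) → A} (h : ∀ x, slice x φ = slice x ψ) : φ = ψ := by
  funext s
  have := congrFun (h (s 0)) (Fin.tail s)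
  simpa [slice, Fin.cons_self_tail] using this

end Slice

section Tuples

variable {A : Type*} [AddCommGroup A] {X Y : Type*} {k : ℕ}

/-- The coboundary operator on functions of `k` variables. In contrast to `AS.d` it includes the
augmentation `k = 0`. -/
def cobd (A : Type*) [AddCommGroup A] (X : Type*) (k : ℕ) :
    ((Fin k → X) → A) →+ ((Fin (k + 1) → X) → A) :=
  AddMonoidHom.mk' (fun φ s => ∑ i : Fin (k + 1), ((-1 : ℤ) ^ (i : ℕ)) • φ (s ∘ i.succAbove))
    (fun φ ψ => funext fun s => by simp [smul_add, Finset.sum_add_distrib])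

lemma cobd_apply (φ : (Fin k → X) → A) (s : Fin (k + 1) → X) :
    cobd A X k φ s = ∑ i : Fin (k + 1), ((-1 : ℤ) ^ (i : ℕ)) • φ (s ∘ i.succAbove) := rfl

lemma d_eq_cobd (n : ℕ) (φ : Cochain A X n) : d A X n φ = cobd A X (n + 1) φ := rfl

lemma cobd_congr {φ ψ : (Fin k → X) → A} {s : Fin (k + 1) → X}
    (h : ∀ i : Fin (k + 1), φ (s ∘ i.succAbove) = ψ (s ∘ i.succAbove)) :
    cobd A X k φ s = cobd A X k ψ s := by
  simp only [cobd_apply, h]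

lemma cobd_eq_zero {φ : (Fin k → X) → A} {s : Fin (k + 1) → X}
    (h : ∀ i : Fin (k + 1), φ (s ∘ i.succAbove) = 0) : cobd A X k φ s = 0 := by
  simp [cobd_apply, h]

lemma cobd_comp (f : X → Y) (φ : (Fin k → Y) → A) (s : Fin (k + 1) → X) :
    cobd A X k (fun t => φ (f ∘ t)) s = cobd A Y k φ (f ∘ s) := rfl

lemma slice_add (x : X) (φ ψ : (Fin (k + 1) → X) → A) :
    slice x (φ + ψ) = slice x φ + slice x ψ := rfl

lemma slice_sub (x : X) (φ ψ : (Fin (k + 1) → X) → A) :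
    slice x (φ - ψ) = slice x φ - slice x ψ := rfl

lemma cons_comp_succAbove_succ (x : X) (s : Fin (k + 1) → X) (i : Fin (k + 1)) :
    (Fin.cons x s : Fin (k + 2) → X) ∘ i.succ.succAbove =
      (Fin.cons x (s ∘ i.succAbove) : Fin (k + 1) → X) := by
  funext j
  refine Fin.cases ?_ (fun j => ?_) j <;> simp

lemma cons_comp_succAbove_zero (x : X) (s : Fin k → X) :
    (Fin.cons x s : Fin (k + 1) → X) ∘ (0 : Fin (k + 1)).succAbove = s := by
  funext j
  simp

lemma slice_cobd (x : X) (φ : (Fin (k + 1) → X) → A) :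
    slice x (cobd A X (k + 1) φ) = φ - cobd A X k (slice x φ) := by
  funext s
  simp only [slice, cobd_apply, Pi.sub_apply]
  rw [Fin.sum_univ_succ, cons_comp_succAbove_zero]
  simp only [cons_comp_succAbove_succ, Fin.val_zero, pow_zero, one_smul, Fin.val_succ, pow_succ,
    mul_neg, mul_one, neg_smul, Finset.sum_neg_distrib, sub_eq_add_neg]

lemma slice_cobd_zero (x : X) (φ : (Fin 0 → X) → A) : slice x (cobd A X 0 φ) = φ := by
  funext s
  simp only [slice, cobd_apply, Fin.sum_univ_succ, cons_comp_succAbove_zero]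
  simp

lemma cobd_cobd (φ : (Fin k → X) → A) : cobd A X (k + 1) (cobd A X k φ) = 0 := by
  induction k with
  | zero =>
    refine eq_of_slice fun x => ?_
    rw [slice_cobd, slice_cobd_zero, sub_self]
    rfl
  | succ k ih =>
    refine eq_of_slice fun x => ?_
    rw [slice_cobd, slice_cobd, map_sub, ih, sub_zero, sub_self]
    rfl

/-- The prism operator: a cochain homotopy between the identity and pullback along `r`. -/
def prism (r : X → X) : (k : ℕ) → ((Fin (k + 1) → X) → A) → ((Fin k → X) → A)
  | 0, _ => 0
  | k + 1, φ => fun s =>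
      slice (r (s 0)) (slice (s 0) φ) (r ∘ Fin.tail s) - prism r k (slice (s 0) φ) (Fin.tail s)

lemma slice_prism (r : X → X) (x : X) (φ : (Fin (k + 2) → X) → A) :
    slice x (prism r (k + 1) φ) =
      (fun s => slice (r x) (slice x φ) (r ∘ s)) - prism r k (slice x φ) := by
  funext s
  simp [slice, prism]

lemma prism_sub (r : X → X) (φ ψ : (Fin (k + 1) → X) → A) :
    prism r k (φ - ψ) = prism r k φ - prism r k ψ := by
  induction k with
  | zero => simp [prism]
  | succ k ih =>
    refine eq_of_slice fun x => ?_
    rw [slice_sub, slice_prism, slice_prism, slice_prism, slice_sub, ih]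
    funext s
    simp only [slice, Pi.sub_apply]
    abel

lemma prism_homotopy (r : X → X) (φ : (Fin (k + 1) → X) → A) :
    cobd A X k (prism r k φ) + prism r (k + 1) (cobd A X (k + 1) φ) = (fun s => φ (r ∘ s)) - φ := by
  induction k with
  | zero =>
    refine eq_of_slice fun x => ?_
    rw [slice_add, slice_prism, slice_cobd_zero, slice_cobd]
    funext s
    have hr : r ∘ (Fin.cons x s : Fin 1 → X) = Fin.cons (r x) s := by
      funext j
      refine Fin.cases ?_ (fun j => j.elim0) j
      simp
    have hs : r ∘ s = s := Subsingleton.elim _ _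
    have h := congrFun (slice_cobd_zero (r x) (slice x φ)) s
    simp only [slice] at h
    simp [slice, prism, hr, hs, h]
  | succ k ih =>
    refine eq_of_slice fun x => ?_
    have h := ih (slice x φ)
    rw [slice_add, slice_prism, slice_cobd, slice_prism, slice_cobd, slice_sub, slice_cobd,
      prism_sub, map_sub]
    have h' : (fun s => φ (r ∘ (Fin.cons x s : Fin (k + 2) → X))) =
        fun s => slice (r x) φ (r ∘ s) := by
      funext s
      simp only [slice]
      congr 1
      funext j
      refine Fin.cases ?_ (fun j => ?_) j <;> simp
    have h'' : slice x ((fun s => φ (r ∘ s)) - φ) =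
        (fun s => slice (r x) φ (r ∘ s)) - slice x φ := by
      rw [slice_sub, ← h']
      rfl
    rw [h'']
    have e : prism r (k + 1) (cobd A X (k + 1) (slice x φ)) =
        (fun s => slice x φ (r ∘ s)) - slice x φ - cobd A X k (prism r k (slice x φ)) := by
      rw [← h]; abel
    rw [e]
    funext s
    have := cobd_comp r (slice (r x) (slice x φ)) s
    simp only [Pi.add_apply, Pi.sub_apply, this]
    abel

lemma prism_eq_zero {r : X → X} {S : Set X} {φ : (Fin (k + 1) → X) → A}
    (hφ : ∀ t, (∀ i, t i ∈ S) → φ t = 0) {s : Fin k → X} (hs : ∀ i, s i ∈ S)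
    (hr : ∀ i, r (s i) ∈ S) : prism r k φ s = 0 := by
  induction k with
  | zero => rfl
  | succ k ih =>
    have h1 : ∀ t, (∀ i, t i ∈ S) → slice (s 0) φ t = 0 := fun t ht =>
      hφ _ fun i => by refine Fin.cases ?_ (fun j => ?_) i <;> simp [hs, ht]
    have h2 : prism r k (slice (s 0) φ) (Fin.tail s) = 0 :=
      ih h1 (fun i => hs i.succ) (fun i => hr i.succ)
    change _ - prism r k (slice (s 0) φ) (Fin.tail s) = 0
    rw [h2, sub_zero]
    exact h1 _ fun i => by
      refine Fin.cases ?_ (fun j => ?_) i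
      · simpa using hr 0
      · simpa [Fin.tail] using hr j.succ

/-- Extension by zero of a function of several variables along an injection. -/
def push (f : X → Y) (φ : (Fin k → X) → A) : (Fin k → Y) → A :=
  open scoped Classical in
  fun s => if h : ∃ t, s = f ∘ t then φ h.choose else 0

lemma push_comp {f : X → Y} (hf : Injective f) (φ : (Fin k → X) → A) (t : Fin k → X) :
    push f φ (f ∘ t) = φ t := by
  have h : ∃ t', f ∘ t = f ∘ t' := ⟨t, rfl⟩
  rw [push, dif_pos h]
  congr 1
  exact (hf.comp_left h.choose_spec).symm

lemma push_of_notMem {f : X → Y} (φ : (Fin k → X) → A) {s : Fin k → Y} (i : Fin k)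
    (h : s i ∉ range f) : push f φ s = 0 := by
  rw [push, dif_neg]
  rintro ⟨t, rfl⟩
  exact h ⟨t i, rfl⟩

lemma cobd_push {f : X → Y} (hf : Injective f) (φ : (Fin k → X) → A) (t : Fin (k + 1) → X) :
    cobd A Y k (push f φ) (f ∘ t) = cobd A X k φ t := by
  rw [← cobd_comp]
  exact cobd_congr fun i => push_comp hf φ _

end Tuples

end AS

namespace AS

section Metric

variable {A : Type*} [AddCommGroup A] {X : Type*} [MetricSpace X] {k : ℕ}

/-- A function of several variables vanishes on all sufficiently small tuples in `C`. -/
def VanishesOnSmall (C : Set X) (φ : (Fin k → X) → A) : Prop :=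
  ∃ ε > 0, ∀ s : Fin k → X, (∀ i, s i ∈ C) → (∀ i j, dist (s i) (s j) < ε) → φ s = 0

lemma VanishesOnSmall.mono {B C : Set X} (h : B ⊆ C) {φ : (Fin k → X) → A}
    (hφ : VanishesOnSmall C φ) : VanishesOnSmall B φ := by
  obtain ⟨ε, hε, H⟩ := hφ
  exact ⟨ε, hε, fun s hs => H s fun i => h (hs i)⟩

lemma VanishesOnSmall.add {C : Set X} {φ ψ : (Fin k → X) → A}
    (hφ : VanishesOnSmall C φ) (hψ : VanishesOnSmall C ψ) : VanishesOnSmall C (φ + ψ) := by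
  obtain ⟨ε, hε, H⟩ := hφ
  obtain ⟨δ, hδ, H'⟩ := hψ
  refine ⟨min ε δ, lt_min hε hδ, fun s hs hd => ?_⟩
  rw [Pi.add_apply, H s hs fun i j => (hd i j).trans_le (min_le_left _ _),
    H' s hs fun i j => (hd i j).trans_le (min_le_right _ _), add_zero]

lemma VanishesOnSmall.neg {C : Set X} {φ : (Fin k → X) → A}
    (hφ : VanishesOnSmall C φ) : VanishesOnSmall C (-φ) := by
  obtain ⟨ε, hε, H⟩ := hφ
  exact ⟨ε, hε, fun s hs hd => by rw [Pi.neg_apply, H s hs hd, neg_zero]⟩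

lemma VanishesOnSmall.sub {C : Set X} {φ ψ : (Fin k → X) → A}
    (hφ : VanishesOnSmall C φ) (hψ : VanishesOnSmall C ψ) : VanishesOnSmall C (φ - ψ) :=
  sub_eq_add_neg φ ψ ▸ hφ.add hψ.neg

lemma VanishesOnSmall.zero (C : Set X) : VanishesOnSmall C (0 : (Fin k → X) → A) :=
  ⟨1, one_pos, fun _ _ _ => rfl⟩

/-- A function that vanishes on tuples avoiding a compact set `K` and vanishes locally also
vanishes uniformly on small tuples. -/
lemma VanishesOnSmall.of_local {B K : Set X} (hK : IsCompact K)
    {φ : (Fin k → X) → A} (h0 : ∀ s, (∀ i, s i ∈ B \ K) → φ s = 0)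
    (hloc : ∀ x ∈ K, ∃ ε > 0, ∀ s, (∀ i, s i ∈ B) → (∀ i, s i ∈ Metric.ball x ε) → φ s = 0) :
    VanishesOnSmall B φ := by
  choose! e he H using hloc
  obtain ⟨δ, hδ, hL⟩ := lebesgue_number_lemma_of_metric hK
    (c := fun x : K => Metric.ball (x : X) (e x)) (fun x => Metric.isOpen_ball)
    (fun x hx => mem_iUnion.2 ⟨⟨x, hx⟩, Metric.mem_ball_self (he x hx)⟩)
  refine ⟨δ, hδ, fun s hs hd => ?_⟩
  by_cases hsK : ∃ i, s i ∈ K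
  · obtain ⟨i, hi⟩ := hsK
    obtain ⟨x, hx⟩ := hL _ hi
    exact H x x.2 s hs fun j => hx (Metric.mem_ball.2 (hd j i))
  · push Not at hsK
    exact h0 s fun i => ⟨hs i, hsK i⟩

/-- A (discontinuous) map close to the identity which retracts a neighbourhood of `L` to `L`. -/
lemma exists_retraction (L : Set X) {ρ : ℝ} (hρ : 0 < ρ) :
    ∃ r : X → X, (∀ x ∈ L, r x = x) ∧ (∀ x ∈ Metric.thickening ρ L, r x ∈ L) ∧
      (∀ x, dist x (r x) < ρ) ∧ ∀ x ∉ Metric.thickening ρ L, r x = x := by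
  have : ∀ x, ∃ y, (x ∈ L → y = x) ∧ (x ∈ Metric.thickening ρ L → y ∈ L) ∧ dist x y < ρ ∧
      (x ∉ Metric.thickening ρ L → y = x) := by
    intro x
    by_cases hx : x ∈ L
    · exact ⟨x, fun _ => rfl, fun _ => hx, by simpa using hρ, fun _ => rfl⟩
    by_cases hx' : x ∈ Metric.thickening ρ L
    · obtain ⟨y, hy, hxy⟩ := Metric.mem_thickening_iff.1 hx'
      exact ⟨y, fun h => (hx h).elim, fun _ => hy, hxy, fun h => (h hx').elim⟩
    · exact ⟨x, fun _ => rfl, fun h => (hx' h).elim, by simpa using hρ, fun _ => rfl⟩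
  choose r h1 h2 h3 h4 using this
  exact ⟨r, h1, h2, h3, h4⟩

lemma dist_retraction_lt {r : X → X} {ρ δ ε : ℝ} (hr : ∀ x, dist x (r x) < ρ)
    (h : 2 * ρ + δ ≤ ε) {x y : X} (hxy : dist x y < δ) : dist (r x) (r y) < ε := by
  have h1 := hr x
  have h2 := hr y
  have h3 := dist_triangle4 (r x) x y (r y)
  rw [dist_comm (r x) x] at h3
  linarith

lemma dist_left_retraction_lt {r : X → X} {ρ δ ε : ℝ} (hr : ∀ x, dist x (r x) < ρ)
    (h : 2 * ρ + δ ≤ ε) {x y : X} (hxy : dist x y < δ) : dist x (r y) < ε := by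
  have h2 := hr y
  have h1 := hr x
  have h3 := dist_triangle x y (r y)
  have := dist_nonneg (x := x) (y := r x)
  linarith

/-- On small tuples, pullback along a map close to the identity changes a cocycle by the coboundary
of its prism. -/
lemma cobd_prism_apply_of_small {B : Set X} {φ : (Fin (k + 1) → X) → A} {ε ρ δ : ℝ} {r : X → X}
    (hφ : ∀ s, (∀ i, s i ∈ B) → (∀ i j, dist (s i) (s j) < ε) → cobd A X (k + 1) φ s = 0)
    (hrB : ∀ x ∈ B, r x ∈ B) (hr : ∀ x, dist x (r x) < ρ) (h : 2 * ρ + δ ≤ ε) {s : Fin (k + 1) → X}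
    (hs : ∀ i, s i ∈ B) (hd : ∀ i j, dist (s i) (s j) < δ) :
    cobd A X k (prism r k φ) s = φ (r ∘ s) - φ s := by
  have h1 := congrFun (prism_homotopy r φ) s
  have h2 : prism r (k + 1) (cobd A X (k + 1) φ) s = 0 := by
    refine prism_eq_zero (S := range s ∪ range (r ∘ s)) (fun t ht => hφ t ?_ ?_)
      (fun i => Or.inl ⟨i, rfl⟩) (fun i => Or.inr ⟨i, rfl⟩)
    · intro i
      rcases ht i with ⟨j, hj⟩ | ⟨j, hj⟩ <;> rw [← hj]
      exacts [hs j, hrB _ (hs j)]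
    · intro i i'
      rcases ht i with ⟨j, hj⟩ | ⟨j, hj⟩ <;> rcases ht i' with ⟨j', hj'⟩ | ⟨j', hj'⟩ <;>
        rw [← hj, ← hj']
      · have h1 := hd j j'
        have h2 := hr (s j)
        have := dist_nonneg (x := s j) (y := r (s j))
        linarith
      · exact dist_left_retraction_lt hr h (hd j j')
      · rw [dist_comm]
        exact dist_left_retraction_lt hr h (hd j' j)
      · exact dist_retraction_lt hr h (hd j j')
  simpa [h2] using h1

/-- Gluing: a cocycle on `B ⊆ K ∪ F` which is zero on `B ∩ F` and which on `K` is a coboundary of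
a cochain that is zero on `K ∩ F` is a coboundary on `B`. -/
lemma exists_glue {B K F : Set X} (hK : IsCompact K) (hF : IsClosed F) (hKB : K ⊆ B)
    (hB : B ⊆ K ∪ F) {φ : (Fin (k + 2) → X) → A} {β : (Fin (k + 1) → X) → A}
    (hφ : VanishesOnSmall B (cobd A X (k + 2) φ)) (hφF : VanishesOnSmall (B ∩ F) φ)
    (hφβ : VanishesOnSmall K (φ - cobd A X (k + 1) β)) (hβ : VanishesOnSmall (K ∩ F) β) :
    ∃ γ : (Fin (k + 1) → X) → A, VanishesOnSmall B (φ - cobd A X (k + 1) γ) ∧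
      ((∀ s, (∀ i, s i ∈ B ∩ F) → φ s = 0) → ∀ s, (∀ i, s i ∈ B \ K) → γ s = 0) := by
  classical
  obtain ⟨ε1, hε1, H1⟩ := hφ
  obtain ⟨ε2, hε2, H2⟩ := hφF
  obtain ⟨ε3, hε3, H3⟩ := hφβ
  obtain ⟨ε4, hε4, H4⟩ := hβ
  obtain ⟨ε, hε, hεle⟩ : ∃ ε > 0, ε ≤ ε1 ∧ ε ≤ ε2 ∧ ε ≤ ε3 ∧ ε ≤ ε4 :=
    ⟨min (min ε1 ε2) (min ε3 ε4), by positivity, by simp⟩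
  obtain ⟨hle1, hle2, hle3, hle4⟩ := hεle
  obtain ⟨r, hrL, hrN, hrd, hrid⟩ := exists_retraction (K ∩ F) (show 0 < ε / 4 by positivity)
  have hcpt : IsCompact (K \ Metric.thickening (ε / 4) (K ∩ F)) :=
    hK.diff Metric.isOpen_thickening
  have hsub : K \ Metric.thickening (ε / 4) (K ∩ F) ⊆ Fᶜ := fun x hx hxF =>
    hx.2 (Metric.self_subset_thickening (by positivity) _ ⟨hx.1, hxF⟩)
  obtain ⟨η, hη, hηF⟩ := hcpt.exists_thickening_subset_open hF.isOpen_compl hsub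
  have hrB : ∀ x ∈ B, r x ∈ B := fun x hx => by
    by_cases h : x ∈ Metric.thickening (ε / 4) (K ∩ F)
    · exact hKB (hrN x h).1
    · rwa [hrid x h]
  have hrK : ∀ x ∈ K, r x ∈ K := fun x hx => by
    by_cases h : x ∈ Metric.thickening (ε / 4) (K ∩ F)
    · exact (hrN x h).1
    · rwa [hrid x h]
  have hrF : ∀ x ∈ B \ K, r x ∈ B ∩ F := fun x hx => by
    by_cases h : x ∈ Metric.thickening (ε / 4) (K ∩ F)
    · exact ⟨hKB (hrN x h).1, (hrN x h).2⟩
    · rw [hrid x h]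
      exact ⟨hx.1, (hB hx.1).resolve_left hx.2⟩
  let β' : (Fin (k + 1) → X) → A := fun t =>
    if (∀ i, t i ∈ K) ∧ ∀ i j, dist (t i) (t j) < ε then β t else 0
  have hβ'F : ∀ t, (∀ i, t i ∈ B ∩ F) → β' t = 0 := fun t ht => by
    by_cases h : (∀ i, t i ∈ K) ∧ ∀ i j, dist (t i) (t j) < ε
    · simp only [β', if_pos h]
      exact H4 t (fun i => ⟨h.1 i, (ht i).2⟩) fun i j => (h.2 i j).trans_le hle4
    · simp only [β', if_neg h]
  refine ⟨(fun t => β' (r ∘ t)) - prism r (k + 1) φ, ⟨min (ε / 4) η, by positivity, ?_⟩, ?_⟩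
  · intro s hs hd
    have hd1 : ∀ i j, dist (s i) (s j) < ε / 4 := fun i j => (hd i j).trans_le (min_le_left _ _)
    have hd2 : ∀ i j, dist (s i) (s j) < η := fun i j => (hd i j).trans_le (min_le_right _ _)
    have hrs : ∀ i j, dist (r (s i)) (r (s j)) < ε := fun i j =>
      dist_retraction_lt hrd (by linarith) (hd1 i j)
    have hP := cobd_prism_apply_of_small H1 hrB hrd (δ := ε / 4) (by linarith) hs hd1
    have key : φ (r ∘ s) = cobd A X (k + 1) β' (r ∘ s) := by
      by_cases hi : ∃ i, s i ∈ K \ Metric.thickening (ε / 4) (K ∩ F)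
      · obtain ⟨i, hi⟩ := hi
        have hsK : ∀ j, s j ∈ K := fun j => (hB (hs j)).resolve_right
          (hηF (Metric.mem_thickening_iff.2 ⟨_, hi, hd2 j i⟩))
        have h3 := H3 (r ∘ s) (fun j => hrK _ (hsK j)) fun i j => (hrs i j).trans_le hle3
        rw [Pi.sub_apply, sub_eq_zero] at h3
        rw [h3]
        refine cobd_congr fun i => ?_
        simp only [β']
        rw [if_pos ⟨fun j => hrK _ (hsK _), fun j l => hrs _ _⟩]
      · push Not at hi
        have hsF : ∀ j, r (s j) ∈ B ∩ F := fun j => by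
          by_cases hj : s j ∈ K
          · have h : s j ∈ Metric.thickening (ε / 4) (K ∩ F) := by
              by_contra h
              exact hi j ⟨hj, h⟩
            exact ⟨hKB (hrN _ h).1, (hrN _ h).2⟩
          · exact hrF _ ⟨hs j, hj⟩
        rw [H2 (r ∘ s) hsF fun i j => (hrs i j).trans_le hle2,
          cobd_eq_zero (s := r ∘ s) fun i => hβ'F _ fun j => hsF (i.succAbove j)]
    have hc := cobd_comp r β' s
    rw [map_sub, Pi.sub_apply, Pi.sub_apply, hP, hc, ← key]
    abel
  · intro h0 s hs
    have h1 : β' (r ∘ s) = 0 := hβ'F _ fun i => hrF _ (hs i)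
    have h2 : prism r (k + 1) φ s = 0 := prism_eq_zero h0
      (fun i => ⟨(hs i).1, (hB (hs i).1).resolve_left (hs i).2⟩) fun i => hrF _ (hs i)
    rw [Pi.sub_apply, h1, h2, sub_zero]

variable (A) in
/-- Cocycles on compact subsets extend to cocycles on larger compact subsets. -/
def ExtendsCocycles (X : Type*) [MetricSpace X] (n : ℕ) : Prop :=
  ∀ B C : Set X, IsCompact B → IsCompact C → B ⊆ C → ∀ φ : (Fin (n + 1) → X) → A,
    VanishesOnSmall B (cobd A X (n + 1) φ) →
      ∃ ψ, VanishesOnSmall C (cobd A X (n + 1) ψ) ∧ VanishesOnSmall B (φ - ψ)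

variable (A) in
/-- Compactly supported cocycles of degree `m + 1` on `B` are coboundaries of compactly supported
cochains. -/
def AcyclicWithCompactSupports (B : Set X) (m : ℕ) : Prop :=
  ∀ K ⊆ B, IsCompact K → ∀ φ : (Fin (m + 2) → X) → A, (∀ s, (∀ i, s i ∈ B \ K) → φ s = 0) →
    VanishesOnSmall B (cobd A X (m + 2) φ) → ∃ K' ⊆ B, IsCompact K' ∧
      ∃ β : (Fin (m + 1) → X) → A, (∀ s, (∀ i, s i ∈ B \ K') → β s = 0) ∧
        VanishesOnSmall B (φ - cobd A X (m + 1) β)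

/-- A cochain can be corrected by a cocycle so as to vanish where it is already closed. -/
lemma ExtendsCocycles.exists_correction {n : ℕ} (hE : ExtendsCocycles A X n) {B C : Set X}
    (hB : IsCompact B) (hC : IsCompact C) (hBC : B ⊆ C) {φ : (Fin (n + 2) → X) → A}
    {β : (Fin (n + 1) → X) → A} (hβ : VanishesOnSmall B (cobd A X (n + 1) β))
    {K : Set X} (hKC : K ⊆ C) (hφ : VanishesOnSmall K (φ - cobd A X (n + 1) β)) :
    ∃ β' : (Fin (n + 1) → X) → A, VanishesOnSmall K (φ - cobd A X (n + 1) β') ∧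
      VanishesOnSmall B β' := by
  obtain ⟨ψ, hψ, hψB⟩ := hE B C hB hC hBC β hβ
  refine ⟨β - ψ, ?_, hψB⟩
  rw [map_sub, show φ - (cobd A X (n + 1) β - cobd A X (n + 1) ψ) =
    φ - cobd A X (n + 1) β + cobd A X (n + 1) ψ by abel]
  exact hφ.add (hψ.mono hKC)

lemma ExtendsCocycles.exists_primitive {n : ℕ} (hE : ExtendsCocycles A X n) {K : Set X}
    (hK : IsCompact K) (φ : (Fin (n + 2) → X) → A)
    (hφ : VanishesOnSmall K (cobd A X (n + 2) φ)) :
    ∃ β : (Fin (n + 1) → X) → A, VanishesOnSmall K (φ - cobd A X (n + 1) β) := by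
  suffices h : ∃ C, IsCompact C ∧ K ⊆ C ∧ C ⊆ K ∧ ∃ β : (Fin (n + 1) → X) → A,
      VanishesOnSmall C (φ - cobd A X (n + 1) β) by
    obtain ⟨C, -, hKC, -, β, hβ⟩ := h
    exact ⟨β, hβ.mono hKC⟩
  refine hK.induction_on (p := fun S => ∃ C, IsCompact C ∧ S ⊆ C ∧ C ⊆ K ∧
    ∃ β : (Fin (n + 1) → X) → A, VanishesOnSmall C (φ - cobd A X (n + 1) β)) ?_ ?_ ?_ ?_
  · exact ⟨∅, isCompact_empty, Subset.rfl, empty_subset _, 0, 1, one_pos,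
      fun s hs => (hs 0).elim⟩
  · rintro S T hST ⟨C, hC, hTC, h⟩
    exact ⟨C, hC, hST.trans hTC, h⟩
  · rintro S T ⟨C, hC, hSC, hCK, β, hβ⟩ ⟨D, hD, hTD, hDK, γ, hγ⟩
    refine ⟨C ∪ D, hC.union hD, union_subset_union hSC hTD, union_subset hCK hDK, ?_⟩
    have hβγ : VanishesOnSmall (C ∩ D) (cobd A X (n + 1) (β - γ)) := by
      have := (hγ.mono (inter_subset_right (s := C) (t := D))).sub
        (hβ.mono (inter_subset_left (s := C) (t := D)))
      convert this using 1
      rw [map_sub]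
      abel
    have hφβ : VanishesOnSmall C ((φ - cobd A X (n + 1) γ) - cobd A X (n + 1) (β - γ)) := by
      convert hβ using 1
      rw [map_sub]
      abel
    obtain ⟨β', hβ', hβ'D⟩ := hE.exists_correction (hC.inter hD) hC inter_subset_left hβγ
      Subset.rfl hφβ
    have hcl : VanishesOnSmall (C ∪ D) (cobd A X (n + 2) (φ - cobd A X (n + 1) γ)) := by
      rw [map_sub, cobd_cobd, sub_zero]
      exact hφ.mono (union_subset hCK hDK)
    obtain ⟨δ, hδ, -⟩ := exists_glue hC hD.isClosed subset_union_left Subset.rfl hcl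
      (hγ.mono inter_subset_right) hβ' hβ'D
    refine ⟨γ + δ, ?_⟩
    convert hδ using 1
    rw [map_add]
    abel
  · intro x hx
    obtain ⟨ε, hε, H⟩ := hφ
    refine ⟨Metric.closedBall x (ε / 3) ∩ K, Filter.inter_mem
      (mem_nhdsWithin_of_mem_nhds (Metric.closedBall_mem_nhds x (by positivity)))
      self_mem_nhdsWithin,
      K ∩ Metric.closedBall x (ε / 3), hK.inter_right Metric.isClosed_closedBall,
      (inter_comm _ _).subset, inter_subset_left, slice x φ, 1, one_pos, fun s hs _ => ?_⟩
    rw [← slice_cobd]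
    refine H _ (fun i => ?_) fun i j => ?_
    · refine Fin.cases ?_ (fun i => ?_) i
      · simpa using hx
      · simpa using (hs i).1
    · have hb : ∀ i, dist ((Fin.cons x s : Fin (n + 3) → X) i) x ≤ ε / 3 := fun i => by
        refine Fin.cases ?_ (fun i => ?_) i
        · simpa using (by positivity : 0 ≤ ε / 3)
        · simpa using (hs i).2
      have := dist_triangle_right ((Fin.cons x s : Fin (n + 3) → X) i)
        ((Fin.cons x s : Fin (n + 3) → X) j) x
      linarith [hb i, hb j]

lemma ExtendsCocycles.succ {n : ℕ} (hE : ExtendsCocycles A X n) : ExtendsCocycles A X (n + 1) := by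
  intro B C hB _ _ φ hφ
  obtain ⟨β, hβ⟩ := hE.exists_primitive hB φ hφ
  refine ⟨cobd A X (n + 1) β, ?_, hβ⟩
  rw [cobd_cobd]
  exact VanishesOnSmall.zero _

lemma ExtendsCocycles.mono {n m : ℕ} (hnm : n ≤ m) (hE : ExtendsCocycles A X n) :
    ExtendsCocycles A X m := by
  induction m, hnm using Nat.le_induction with
  | base => exact hE
  | succ m _ ih => exact ih.succ

lemma ExtendsCocycles.acyclicWithCompactSupports {n : ℕ} (hE : ExtendsCocycles A X n) {B : Set X}
    [LocallyCompactSpace B] : AcyclicWithCompactSupports A B n := by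
  intro K₀ hK₀B hK₀ φ hφ0 hφ
  obtain ⟨K, O, hK, hO, hKB, hK₀O, hOK⟩ : ∃ K O : Set X, IsCompact K ∧ IsOpen O ∧ K ⊆ B ∧
      K₀ ⊆ O ∧ B ∩ O ⊆ K := by
    have hc : IsCompact ((↑) ⁻¹' K₀ : Set B) := by
      rw [Subtype.isCompact_iff, Subtype.image_preimage_coe, inter_eq_right.2 hK₀B]
      exact hK₀
    obtain ⟨K, hK, hK₀K⟩ := exists_compact_superset hc
    obtain ⟨O, hO, hOK⟩ := isOpen_induced_iff.1 (isOpen_interior (s := K))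
    refine ⟨(↑) '' K, O, hK.image continuous_subtype_val, hO, Subtype.coe_image_subset _ _, ?_, ?_⟩
    · intro x hx
      have : (⟨x, hK₀B hx⟩ : B) ∈ ((↑) ⁻¹' O : Set B) := hOK ▸ hK₀K hx
      exact this
    · rintro x ⟨hxB, hxO⟩
      have : (⟨x, hxB⟩ : B) ∈ interior K := hOK ▸ hxO
      exact ⟨_, interior_subset this, rfl⟩
  have hBF : B ⊆ K ∪ Oᶜ := fun x hx => by
    by_cases h : x ∈ O
    exacts [Or.inl (hOK ⟨hx, h⟩), Or.inr h]
  have hφF : ∀ s, (∀ i, s i ∈ B ∩ Oᶜ) → φ s = 0 := fun s hs =>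
    hφ0 s fun i => ⟨(hs i).1, fun h => (hs i).2 (hK₀O h)⟩
  obtain ⟨β, hβ⟩ := hE.exists_primitive hK φ (hφ.mono hKB)
  have hφL : VanishesOnSmall (K ∩ Oᶜ) φ :=
    ⟨1, one_pos, fun s hs _ => hφF s fun i => ⟨hKB (hs i).1, (hs i).2⟩⟩
  have hβL : VanishesOnSmall (K ∩ Oᶜ) (cobd A X (n + 1) β) := by
    have := hφL.sub (hβ.mono (inter_subset_left (s := K) (t := Oᶜ)))
    rwa [sub_sub_cancel] at this
  obtain ⟨β', hβ', hβ'L⟩ := hE.exists_correction (hK.inter_right hO.isClosed_compl) hK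
    inter_subset_left hβL Subset.rfl hβ
  obtain ⟨γ, hγ, hγ0⟩ := exists_glue hK hO.isClosed_compl hKB hBF hφ
    ⟨1, one_pos, fun s hs _ => hφF s hs⟩ hβ' hβ'L
  exact ⟨K, hKB, hK, γ, hγ0 hφF, hγ⟩

/-- If precompact open sets are acyclic with compact supports, then cocycles extend. -/
lemma extendsCocycles_of_acyclic [LocallyCompactSpace X] {n : ℕ}
    (h : ∀ U : Set X, IsOpen U → IsCompact (closure U) → AcyclicWithCompactSupports A U n) :
    ExtendsCocycles A X n := by
  classical
  intro B C hB hC hBC φ ⟨ε, hε, hφ⟩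
  obtain ⟨U, hU, hCU, hUc⟩ := exists_isOpen_superset_and_isCompact_closure hC
  obtain ⟨ρ₀, hρ₀, hρ₀U⟩ := hB.exists_cthickening_subset_open hU (hBC.trans hCU)
  obtain ⟨ρ, hρ, hρε, hρρ₀⟩ : ∃ ρ > 0, 3 * ρ ≤ ε ∧ ρ ≤ ρ₀ :=
    ⟨min (ε / 3) ρ₀, by positivity, by linarith [min_le_left (ε / 3) ρ₀], min_le_right _ _⟩
  have hρU : Metric.cthickening ρ B ⊆ U := (Metric.cthickening_mono hρρ₀ B).trans hρ₀U
  obtain ⟨r, hrB, hrN, hrd, -⟩ := exists_retraction B hρ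
  let φ₁ : (Fin (n + 1) → X) → A := fun s =>
    if ∀ i, s i ∈ Metric.thickening ρ B then φ (r ∘ s) else 0
  have hφ₁N : ∀ s, (∀ i, s i ∈ Metric.thickening ρ B) → (∀ i j, dist (s i) (s j) < ρ) →
      cobd A X (n + 1) φ₁ s = 0 := fun s hs hd => by
    have h1 : cobd A X (n + 1) φ₁ s = cobd A X (n + 1) (fun t => φ (r ∘ t)) s :=
      cobd_congr fun i => if_pos fun j => hs _
    rw [h1, cobd_comp]
    exact hφ _ (fun i => hrN _ (hs i)) fun i j =>
      dist_retraction_lt hrd (by linarith) (hd i j)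
  let V := U \ B
  have hV : IsOpen V := hU.sdiff hB.isClosed
  let K := Metric.cthickening ρ B \ Metric.thickening (ρ / 2) B
  have hKV : K ⊆ V := fun x hx =>
    ⟨hρU hx.1, fun hxB => hx.2 (Metric.self_subset_thickening (by positivity) _ hxB)⟩
  have hK : IsCompact K :=
    (hUc.of_isClosed_subset Metric.isClosed_cthickening (hρU.trans subset_closure)).diff
      Metric.isOpen_thickening
  let ω : (Fin (n + 2) → X) → A := fun s =>
    if ∀ i j, dist (s i) (s j) < ρ / 2 then cobd A X (n + 1) φ₁ s else 0
  have hω0 : ∀ s, (∀ i, s i ∈ V \ K) → ω s = 0 := fun s hs => by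
    by_cases hd : ∀ i j, dist (s i) (s j) < ρ / 2
    swap
    · exact if_neg hd
    simp only [ω, if_pos hd]
    by_cases hi : ∃ i, s i ∈ Metric.thickening (ρ / 2) B
    · obtain ⟨i, hi⟩ := hi
      refine hφ₁N s (fun j => ?_) fun i j => (hd i j).trans (by linarith)
      obtain ⟨b, hb, hib⟩ := Metric.mem_thickening_iff.1 hi
      refine Metric.mem_thickening_iff.2 ⟨b, hb, ?_⟩
      linarith [dist_triangle (s j) (s i) b, hd j i]
    · push Not at hi
      have hj : ∀ j, s j ∉ Metric.thickening ρ B := fun j hj =>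
        (hs j).2 ⟨Metric.thickening_subset_cthickening _ _ hj, hi j⟩
      exact cobd_eq_zero fun i => if_neg fun h => hj _ (h 0)
  have hωd : VanishesOnSmall V (cobd A X (n + 2) ω) := by
    refine ⟨ρ / 2, by positivity, fun s _ hd => ?_⟩
    have h1 : cobd A X (n + 2) ω s = cobd A X (n + 2) (cobd A X (n + 1) φ₁) s :=
      cobd_congr fun i => if_pos fun j l => hd _ _
    rw [h1, cobd_cobd]
    rfl
  obtain ⟨K', hK'V, hK', β, hβ0, δ, hδ, hβ⟩ := h V hV
    (hUc.of_isClosed_subset isClosed_closure (closure_mono sdiff_subset)) K hKV hK ω hω0 hωd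
  obtain ⟨δ', hδ', hK'B⟩ := hK'.exists_thickening_subset_open hB.isClosed.isOpen_compl
    fun x hx => (hK'V hx).2
  let β' : (Fin (n + 1) → X) → A := fun s => if ∀ i, s i ∈ V then β s else 0
  refine ⟨φ₁ - β', ⟨min (ρ / 2) (min δ δ'), by positivity, fun s hs hd => ?_⟩,
    1, one_pos, fun s hs _ => ?_⟩
  · have hd1 : ∀ i j, dist (s i) (s j) < ρ / 2 := fun i j => (hd i j).trans_le (min_le_left _ _)
    have hd2 : ∀ i j, dist (s i) (s j) < δ := fun i j =>
      (hd i j).trans_le ((min_le_right _ _).trans (min_le_left _ _))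
    have hd3 : ∀ i j, dist (s i) (s j) < δ' := fun i j =>
      (hd i j).trans_le ((min_le_right _ _).trans (min_le_right _ _))
    rw [map_sub, Pi.sub_apply]
    by_cases hi : ∃ i, s i ∈ B
    · obtain ⟨i, hi⟩ := hi
      rw [hφ₁N s (fun j => Metric.mem_thickening_iff.2 ⟨_, hi, (hd1 j i).trans (by linarith)⟩)
        fun i j => (hd1 i j).trans (by linarith), cobd_eq_zero, sub_zero]
      intro l
      by_cases hl : ∀ j, (s ∘ l.succAbove) j ∈ V
      · simp only [β', if_pos hl]
        exact hβ0 _ fun j => ⟨hl j, fun hj =>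
          hK'B (Metric.mem_thickening_iff.2 ⟨_, hj, hd3 i _⟩) hi⟩
      · exact if_neg hl
    · push Not at hi
      have hsV : ∀ i, s i ∈ V := fun i => ⟨hCU (hs i), hi i⟩
      have h1 := hβ s hsV hd2
      have h2 : cobd A X (n + 1) β' s = cobd A X (n + 1) β s :=
        cobd_congr fun i => if_pos fun j => hsV _
      rw [h2, ← h1, Pi.sub_apply]
      simp only [ω, if_pos hd1]
  · have h1 : φ₁ s = φ s := by
      have : r ∘ s = s := funext fun i => hrB _ (hs i)
      simp only [φ₁, this]
      exact if_pos fun i => Metric.self_subset_thickening hρ _ (hs i)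
    have h2 : β' s = 0 := if_neg fun h => (h 0).2 (hs 0)
    rw [Pi.sub_apply, Pi.sub_apply, h1, h2, sub_zero, sub_self]

end Metric

end AS

namespace AS

section Translation

variable {A : Type*} [AddCommGroup A]

lemma mem_locZero_iff {Y : Type*} [TopologicalSpace Y] {n : ℕ} {φ : Cochain A Y n} :
    φ ∈ locZero A Y n ↔
      ∀ y, ∃ u : Set Y, IsOpen u ∧ y ∈ u ∧ ∀ s : Fin (n + 1) → Y, (∀ i, s i ∈ u) → φ s = 0 := by
  constructor
  · rintro ⟨U, ⟨hUo, hUc⟩, h⟩ y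
    obtain ⟨u, hu, hy⟩ : y ∈ ⋃₀ U := hUc ▸ mem_univ y
    exact ⟨u, hUo u hu, hy, fun s hs => h s ⟨u, hu, hs⟩⟩
  · intro h
    choose u hu hy H using h
    refine ⟨range u, ⟨?_, ?_⟩, ?_⟩
    · rintro _ ⟨y, rfl⟩
      exact hu y
    · exact eq_univ_of_forall fun y => ⟨u y, ⟨y, rfl⟩, hy y⟩
    · rintro s ⟨_, ⟨y, rfl⟩, hs⟩
      exact H y s hs

lemma dQ_mk {Y : Type*} [TopologicalSpace Y] {n : ℕ} (φ : Cochain A Y n) :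
    dQ A Y n (QuotientAddGroup.mk φ) = QuotientAddGroup.mk (d A Y n φ) := rfl

lemma mk_mem_cocycles_iff {Y : Type*} [TopologicalSpace Y] {n : ℕ} {φ : Cochain A Y n} :
    (QuotientAddGroup.mk φ : QC A Y n) ∈ cocycles A Y n ↔ d A Y n φ ∈ locZero A Y (n + 1) :=
  QuotientAddGroup.eq_zero_iff (d A Y n φ)

lemma mk_mem_cobounds_succ_iff {Y : Type*} [TopologicalSpace Y] {n : ℕ}
    {φ : Cochain A Y (n + 1)} :
    (QuotientAddGroup.mk φ : QC A Y (n + 1)) ∈ cobounds A Y (n + 1) ↔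
      ∃ β, φ - d A Y n β ∈ locZero A Y (n + 1) := by
  constructor
  · rintro ⟨y, hy⟩
    obtain ⟨β, rfl⟩ := QuotientAddGroup.mk_surjective y
    refine ⟨β, ?_⟩
    rw [dQ_mk, QuotientAddGroup.eq] at hy
    rwa [sub_eq_neg_add]
  · rintro ⟨β, hβ⟩
    refine ⟨QuotientAddGroup.mk β, ?_⟩
    rw [dQ_mk, QuotientAddGroup.eq]
    rwa [sub_eq_neg_add] at hβ

lemma subsingleton_ASH_succ_iff {Y : Type*} [TopologicalSpace Y] {n : ℕ} :
    Subsingleton (ASH A (n + 1) Y) ↔ ∀ φ : Cochain A Y (n + 1),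
      d A Y (n + 1) φ ∈ locZero A Y (n + 2) → ∃ β, φ - d A Y n β ∈ locZero A Y (n + 1) := by
  have h1 : Subsingleton (ASH A (n + 1) Y) ↔
      (cobounds A Y (n + 1)).comap (cocycles A Y (n + 1)).subtype = ⊤ := by
    constructor
    · intro h
      exact QuotientAddGroup.addSubgroup_eq_top_of_subsingleton _ h
    · intro h
      rw [ASH, h]
      exact QuotientAddGroup.subsingleton_quotient_top
  rw [h1, AddSubgroup.eq_top_iff']
  constructor
  · intro h φ hφ
    exact mk_mem_cobounds_succ_iff.1 (h ⟨_, mk_mem_cocycles_iff.2 hφ⟩)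
  · rintro h ⟨x, hx⟩
    obtain ⟨φ, rfl⟩ := QuotientAddGroup.mk_surjective x
    exact mk_mem_cobounds_succ_iff.2 (h φ (mk_mem_cocycles_iff.1 hx))

lemma surjective_ASHmap_iff {Y Z : Type*} [TopologicalSpace Y] [TopologicalSpace Z] {f : Y → Z}
    (hf : Continuous f) (hf' : Injective f) {n : ℕ} :
    Surjective (ASHmap A hf n) ↔ ∀ φ : Cochain A Y n, d A Y n φ ∈ locZero A Y (n + 1) →
      ∃ ψ : Cochain A Z n, d A Z n ψ ∈ locZero A Z (n + 1) ∧
        φ - pull A f n ψ ∈ locZero A Y n := by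
  constructor
  · intro h φ hφ
    obtain ⟨x, hx⟩ := h (QuotientAddGroup.mk ⟨_, mk_mem_cocycles_iff.2 hφ⟩)
    obtain ⟨⟨z, hz⟩, rfl⟩ := QuotientAddGroup.mk_surjective x
    obtain ⟨ψ, rfl⟩ := QuotientAddGroup.mk_surjective z
    have h1 : (QuotientAddGroup.mk (-pull A f n ψ + φ) : QC A Y n) ∈ cobounds A Y n :=
      QuotientAddGroup.eq.1 hx
    match n with
    | 0 =>
      refine ⟨ψ, mk_mem_cocycles_iff.1 hz, ?_⟩
      rw [sub_eq_neg_add]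
      exact (QuotientAddGroup.eq_zero_iff _).1 h1
    | n + 1 =>
      obtain ⟨β, hβ⟩ := mk_mem_cobounds_succ_iff.1 h1
      refine ⟨ψ + d A Z n (push f β), ?_, ?_⟩
      · have : d A Z (n + 1) (d A Z n (push f β)) = 0 := cobd_cobd _
        rw [map_add, this, add_zero]
        exact mk_mem_cocycles_iff.1 hz
      · have : pull A f (n + 1) (d A Z n (push f β)) = d A Y n β :=
          funext fun t => cobd_push hf' β t
        rw [map_add, this]
        convert hβ using 1
        abel
  · intro h x
    obtain ⟨⟨y, hy⟩, rfl⟩ := QuotientAddGroup.mk_surjective x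
    obtain ⟨φ, rfl⟩ := QuotientAddGroup.mk_surjective y
    obtain ⟨ψ, hψ, hφψ⟩ := h φ (mk_mem_cocycles_iff.1 hy)
    refine ⟨QuotientAddGroup.mk ⟨_, mk_mem_cocycles_iff.2 hψ⟩, ?_⟩
    have h1 : (QuotientAddGroup.mk (pull A f n ψ) : QC A Y n) = QuotientAddGroup.mk φ := by
      rw [QuotientAddGroup.eq]
      rwa [sub_eq_neg_add] at hφψ
    exact congrArg (QuotientAddGroup.mk (s := (cobounds A Y n).comap (cocycles A Y n).subtype))
      (Subtype.ext h1 : pullZ A hf n ⟨_, mk_mem_cocycles_iff.2 hψ⟩ = ⟨_, hy⟩)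

lemma pull_push_val {X : Type*} {C : Set X} {n : ℕ} (φ : Cochain A C n) :
    pull A ((↑) : C → X) n (push (↑) φ) = φ :=
  funext fun t => push_comp Subtype.val_injective φ t

lemma sub_cobd_slice {Y : Type*} {k : ℕ} (y : Y) (φ : (Fin (k + 1) → Y) → A) :
    φ - cobd A Y k (slice y φ) = slice y (cobd A Y (k + 1) φ) := (slice_cobd y φ).symm

/-- The map `X → OnePoint B` collapsing the complement of `B` to `∞`. -/
def collapse {X : Type*} (B : Set X) (x : X) : OnePoint B :=
  open scoped Classical in
  if h : x ∈ B then ((⟨x, h⟩ : B) : OnePoint B) else OnePoint.infty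

lemma collapse_coe {X : Type*} {B : Set X} (x : B) : collapse B x = (x : OnePoint B) := by
  simp [collapse]

variable {X : Type*} [MetricSpace X]

lemma VanishesOnSmall.pull_mem_locZero {B : Set X} {n : ℕ} {φ : Cochain A X n}
    (hφ : VanishesOnSmall B φ) : pull A ((↑) : B → X) n φ ∈ locZero A B n := by
  obtain ⟨ε, hε, H⟩ := hφ
  refine mem_locZero_iff.2 fun y => ⟨Metric.ball y (ε / 2), Metric.isOpen_ball,
    Metric.mem_ball_self (by positivity), fun s hs => H _ (fun i => (s i).2) fun i j => ?_⟩
  have h1 : dist (s i) y < ε / 2 := hs i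
  have h2 : dist (s j) y < ε / 2 := hs j
  have h3 := dist_triangle_right (s i) (s j) y
  change dist (s i) (s j) < ε
  linarith

lemma pull_mem_locZero_iff {C : Set X} (hC : IsCompact C) {n : ℕ} {φ : Cochain A X n} :
    pull A ((↑) : C → X) n φ ∈ locZero A C n ↔ VanishesOnSmall C φ := by
  refine ⟨fun h => ?_, VanishesOnSmall.pull_mem_locZero⟩
  refine .of_local hC (fun s hs => ((hs 0).2 (hs 0).1).elim) fun x hx => ?_
  obtain ⟨u, hu, hxu, H⟩ := mem_locZero_iff.1 h ⟨x, hx⟩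
  obtain ⟨ε, hε, hball⟩ := Metric.isOpen_iff.1 hu _ hxu
  exact ⟨ε, hε, fun s hs hsx => H (fun i => ⟨s i, hs i⟩) fun i => hball (hsx i)⟩

lemma extendsCocycles_iff {n : ℕ} : ExtendsCocycles A X n ↔
    ∀ B C : Set X, IsCompact B → IsCompact C → ∀ hBC : B ⊆ C,
      Surjective (ASHmap A (continuous_inclusion hBC) n) := by
  refine forall₅_congr fun B C hB hC hBC => ?_
  rw [surjective_ASHmap_iff _ (inclusion_injective hBC)]
  constructor
  · intro h φ hφ
    obtain ⟨ψ, hψ, hφψ⟩ := h (push (↑) φ) (by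
      refine (pull_mem_locZero_iff (n := n + 1) hB).1 ?_
      convert hφ using 1
      exact congrArg (d A B n) (pull_push_val φ))
    refine ⟨pull A (↑) n ψ, (pull_mem_locZero_iff (n := n + 1) hC).2 hψ, ?_⟩
    convert (pull_mem_locZero_iff (n := n) hB).2 hφψ using 1
    rw [map_sub, pull_push_val]
    rfl
  · intro h φ hφ
    obtain ⟨ψ, hψ, hφψ⟩ := h (pull A (↑) n φ) ((pull_mem_locZero_iff (n := n + 1) hB).2 hφ)
    refine ⟨push (↑) ψ, (pull_mem_locZero_iff (n := n + 1) hC).1 ?_,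
      (pull_mem_locZero_iff (n := n) hB).1 ?_⟩
    · convert hψ using 1
      exact congrArg (d A C n) (pull_push_val ψ)
    · convert hφψ using 1
      rw [map_sub]
      congr 1
      exact congrArg (pull A (inclusion hBC) n) (pull_push_val ψ)

lemma subsingleton_ASH_iff_of_isCompact {B : Set X} (hB : IsCompact B) {m : ℕ} :
    Subsingleton (ASH A (m + 1) B) ↔ AcyclicWithCompactSupports A B m := by
  rw [subsingleton_ASH_succ_iff]
  constructor
  · intro h K _ _ φ _ hφ
    obtain ⟨β, hβ⟩ := h (pull A (↑) (m + 1) φ) ((pull_mem_locZero_iff (n := m + 2) hB).2 hφ)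
    refine ⟨B, Subset.rfl, hB, push (↑) β, fun s hs => ((hs 0).2 (hs 0).1).elim,
      (pull_mem_locZero_iff (n := m + 1) hB).1 ?_⟩
    convert hβ using 1
    rw [map_sub]
    congr 1
    exact congrArg (d A B m) (pull_push_val β)
  · intro h φ hφ
    obtain ⟨K, -, -, β, -, hβ⟩ := h B Subset.rfl hB (push (↑) φ)
      (fun s hs => ((hs 0).2 (hs 0).1).elim) (by
        refine (pull_mem_locZero_iff (n := m + 2) hB).1 ?_
        convert hφ using 1
        exact congrArg (d A B (m + 1)) (pull_push_val φ))
    refine ⟨pull A (↑) m β, ?_⟩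
    convert (pull_mem_locZero_iff (n := m + 1) hB).2 hβ using 1
    rw [map_sub, pull_push_val]
    rfl

/-- The complement in `X` of a neighbourhood of `∞` in `OnePoint B` is compact. -/
lemma isCompact_sdiff_preimage_collapse {B : Set X} {u : Set (OnePoint B)} (hu : IsOpen u)
    (h : OnePoint.infty ∈ u) : IsCompact (B \ collapse B ⁻¹' u) := by
  have h1 := ((OnePoint.isOpen_iff_of_mem h).1 hu).2.image (continuous_subtype_val (p := (· ∈ B)))
  convert h1 using 1
  ext x
  constructor
  · rintro ⟨hxB, hx⟩
    refine ⟨⟨x, hxB⟩, fun hxu => hx ?_, rfl⟩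
    rw [mem_preimage, collapse_coe (⟨x, hxB⟩ : B)]
    exact hxu
  · rintro ⟨y, hy, rfl⟩
    refine ⟨y.2, fun h => hy ?_⟩
    rwa [mem_preimage, collapse_coe y] at h

/-- The neighbourhood of `∞` in `OnePoint B` complementary to a compact subset of `B`. -/
lemma isOpen_compl_image_coe_preimage {B K : Set X} (hKB : K ⊆ B) (hK : IsCompact K) :
    IsOpen (((↑) : B → OnePoint B) '' ((↑) ⁻¹' K))ᶜ := by
  have hc : IsCompact ((↑) ⁻¹' K : Set B) := by
    rw [Subtype.isCompact_iff, Subtype.image_preimage_coe, inter_eq_right.2 hKB]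
    exact hK
  exact OnePoint.isOpen_compl_image_coe.2 ⟨hc.isClosed, hc⟩

/-- A cochain on `OnePoint B` which vanishes near `∞` and on small tuples in `B` is locally
zero. -/
lemma mem_locZero_onePoint {B K : Set X} (hKB : K ⊆ B) (hK : IsCompact K) {n : ℕ}
    {φ : Cochain A (OnePoint B) n}
    (h0 : ∀ s, (∀ i, s i ∉ ((↑) : B → OnePoint B) '' ((↑) ⁻¹' K)) → φ s = 0)
    {ψ : Cochain A X n} (hψ : VanishesOnSmall B ψ)
    (hφψ : ∀ t : Fin (n + 1) → B, φ ((↑) ∘ t) = ψ ((↑) ∘ t)) :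
    φ ∈ locZero A (OnePoint B) n := by
  refine mem_locZero_iff.2 fun y => ?_
  induction y using OnePoint.rec with
  | infty => exact ⟨_, isOpen_compl_image_coe_preimage hKB hK, by simp, h0⟩
  | coe y =>
    obtain ⟨u, hu, hyu, H⟩ := mem_locZero_iff.1 hψ.pull_mem_locZero y
    refine ⟨_, OnePoint.isOpenEmbedding_coe.isOpenMap u hu, mem_image_of_mem _ hyu, fun s hs => ?_⟩
    choose t htu hts using hs
    obtain rfl : (fun i => (t i : OnePoint B)) = s := funext hts
    exact (hφψ t).trans (H t htu)

lemma vanishesOnSmall_of_locZero_onePoint {B K : Set X} (hKB : K ⊆ B) (hK : IsCompact K) {n : ℕ}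
    {φ : Cochain A (OnePoint B) n} (hφ : φ ∈ locZero A (OnePoint B) n) {ψ : Cochain A X n}
    (h0 : ∀ s, (∀ i, s i ∈ B \ K) → ψ s = 0)
    (hφψ : ∀ t : Fin (n + 1) → B, φ ((↑) ∘ t) = ψ ((↑) ∘ t)) : VanishesOnSmall B ψ := by
  refine .of_local hK h0 fun x hx => ?_
  obtain ⟨u, hu, hxu, H⟩ := mem_locZero_iff.1 hφ ((⟨x, hKB hx⟩ : B) : OnePoint B)
  obtain ⟨ε, hε, hball⟩ := Metric.isOpen_iff.1 (hu.preimage OnePoint.continuous_coe) _ hxu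
  exact ⟨ε, hε, fun s hs hsx => (hφψ fun i => ⟨s i, hs i⟩).symm.trans
    (H _ fun i => hball (hsx i))⟩

lemma subsingleton_ASH_onePoint_iff {B : Set X} {m : ℕ} :
    Subsingleton (ASH A (m + 1) (OnePoint B)) ↔ AcyclicWithCompactSupports A B m := by
  rw [subsingleton_ASH_succ_iff]
  have hcollapse : ∀ {k : ℕ} (t : Fin k → B),
      collapse B ∘ ((↑) ∘ t) = ((↑) ∘ t : Fin k → OnePoint B) :=
    fun t => funext fun i => collapse_coe (t i)
  constructor
  · intro h K hKB hK φ hφ0 hφ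
    let φ' : Cochain A (OnePoint B) (m + 1) := push (↑) fun t : Fin (m + 2) → B => φ ((↑) ∘ t)
    have hφ'φ : ∀ t : Fin (m + 2) → B, φ' ((↑) ∘ t) = φ ((↑) ∘ t) := fun t =>
      push_comp OnePoint.coe_injective _ t
    have hφ'0 : ∀ s, (∀ i, s i ∉ ((↑) : B → OnePoint B) '' ((↑) ⁻¹' K)) → φ' s = 0 := by
      intro s hs
      by_cases hsr : ∀ i, s i ∈ range ((↑) : B → OnePoint B)
      · choose t ht using hsr
        obtain rfl : (fun i => (t i : OnePoint B)) = s := funext ht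
        exact (hφ'φ t).trans (hφ0 _ fun i => ⟨(t i).2, fun hi => hs i ⟨t i, hi, rfl⟩⟩)
      · push Not at hsr
        obtain ⟨i, hi⟩ := hsr
        exact push_of_notMem _ i hi
    obtain ⟨χ, hχ⟩ := h φ' (mem_locZero_onePoint hKB hK (n := m + 2)
      (fun s hs => cobd_eq_zero fun i => hφ'0 _ fun j => hs _) hφ
      fun t => cobd_push OnePoint.coe_injective _ t)
    obtain ⟨u, hu, hinf, H⟩ := mem_locZero_iff.1 hχ OnePoint.infty
    let χ' : (Fin (m + 1) → OnePoint B) → A := slice OnePoint.infty (cobd A _ (m + 1) χ)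
    have hdχ' : cobd A _ (m + 1) χ' = cobd A _ (m + 1) χ := by
      simp only [χ', ← sub_cobd_slice, map_sub, cobd_cobd, sub_zero]
    have hχ'0 : ∀ s, (∀ i, s i ∈ u) → χ' s = 0 := by
      intro s hs
      have h1 := H (Fin.cons OnePoint.infty s : Fin (m + 2) → OnePoint B) fun i => by
        refine Fin.cases ?_ (fun i => ?_) i
        · simpa using hinf
        · simpa using hs i
      have h2 : φ' (Fin.cons OnePoint.infty s : Fin (m + 2) → OnePoint B) = 0 :=
        push_of_notMem _ 0 (by simp)
      rw [Pi.sub_apply, h2, zero_sub, neg_eq_zero] at h1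
      exact h1
    refine ⟨B \ collapse B ⁻¹' u, sdiff_subset, isCompact_sdiff_preimage_collapse hu hinf,
      fun s => χ' (collapse B ∘ s), fun s hs => hχ'0 _ fun i => ?_, ?_⟩
    · by_contra hi
      exact (hs i).2 ⟨(hs i).1, hi⟩
    · refine vanishesOnSmall_of_locZero_onePoint
        (union_subset hKB sdiff_subset)
        (hK.union (isCompact_sdiff_preimage_collapse hu hinf)) hχ (fun s hs => ?_)
        fun t => ?_
      · have hsu : ∀ i, collapse B (s i) ∈ u := fun i => by
          by_contra hi
          exact (hs i).2 (Or.inr ⟨(hs i).1, hi⟩)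
        rw [Pi.sub_apply, hφ0 s fun i => ⟨(hs i).1, fun hi => (hs i).2 (Or.inl hi)⟩,
          cobd_comp, cobd_eq_zero (s := collapse B ∘ s) fun i => hχ'0 _ fun j =>
            hsu (i.succAbove j), sub_zero]
      · rw [Pi.sub_apply, Pi.sub_apply, hφ'φ, cobd_comp, hcollapse, hdχ']
        rfl
  · intro h φ hφ
    obtain ⟨u, hu, hinf, H⟩ := mem_locZero_iff.1 hφ OnePoint.infty
    let φ' : (Fin (m + 2) → OnePoint B) → A := slice OnePoint.infty (cobd A _ (m + 2) φ)
    have hφ' : φ' = φ - cobd A _ (m + 1) (slice OnePoint.infty φ) := (sub_cobd_slice _ _).symm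
    have hdφ' : cobd A _ (m + 2) φ' = cobd A _ (m + 2) φ := by
      rw [hφ', map_sub, cobd_cobd, sub_zero]
    have hφ'0 : ∀ s, (∀ i, s i ∈ u) → φ' s = 0 := fun s hs => H _ fun i => by
      refine Fin.cases ?_ (fun i => ?_) i
      · simpa using hinf
      · simpa using hs i
    let K := B \ collapse B ⁻¹' u
    have hK : IsCompact K := isCompact_sdiff_preimage_collapse hu hinf
    have hK0 : ∀ s : Fin (m + 2) → X, (∀ i, s i ∈ B \ K) → φ' (collapse B ∘ s) = 0 :=
      fun s hs => hφ'0 _ fun i => by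
        by_contra hi
        exact (hs i).2 ⟨(hs i).1, hi⟩
    obtain ⟨K', hK'B, hK', β, hβ0, hβ⟩ := h K sdiff_subset hK (fun s => φ' (collapse B ∘ s)) hK0
      (vanishesOnSmall_of_locZero_onePoint (n := m + 2) sdiff_subset hK hφ
        (fun s hs => cobd_eq_zero fun i => hK0 _ fun j => hs _) fun t => by
          rw [cobd_comp, hcollapse, hdφ']
          rfl)
    let β' : (Fin (m + 1) → OnePoint B) → A := push (↑) fun t : Fin (m + 1) → B => β ((↑) ∘ t)
    have hβ'β : ∀ t : Fin (m + 1) → B, β' ((↑) ∘ t) = β ((↑) ∘ t) := fun t =>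
      push_comp OnePoint.coe_injective _ t
    refine ⟨slice OnePoint.infty φ + β', ?_⟩
    have hsum : φ - d A (OnePoint B) m (slice OnePoint.infty φ + β') =
        φ' - cobd A _ (m + 1) β' := by
      rw [hφ', map_add, d_eq_cobd, d_eq_cobd]
      abel
    rw [hsum]
    refine mem_locZero_onePoint (K := K ∪ K') (union_subset sdiff_subset hK'B) (hK.union hK')
      (fun s hs => ?_) hβ fun t => ?_
    · have h1 : φ' s = 0 := hφ'0 s fun i => by
        have hi := hs i
        generalize s i = y at hi
        induction y using OnePoint.rec with
        | infty => exact hinf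
        | coe y =>
          by_contra hyu
          refine hi ⟨y, Or.inl ⟨y.2, fun h => hyu ?_⟩, rfl⟩
          rwa [mem_preimage, collapse_coe y] at h
      rw [Pi.sub_apply, h1, zero_sub, neg_eq_zero]
      refine cobd_eq_zero fun i => ?_
      by_cases hsr : ∀ j, (s ∘ i.succAbove) j ∈ range ((↑) : B → OnePoint B)
      · choose t ht using hsr
        obtain h2 : (fun j => (t j : OnePoint B)) = s ∘ i.succAbove := funext ht
        rw [← h2]
        refine (hβ'β t).trans (hβ0 _ fun j => ⟨(t j).2, fun hj => ?_⟩)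
        exact hs (i.succAbove j) ⟨t j, Or.inr hj, ht j⟩
      · push Not at hsr
        obtain ⟨j, hj⟩ := hsr
        exact push_of_notMem _ j hj
    · rw [Pi.sub_apply, Pi.sub_apply, hcollapse]
      congr 1
      exact cobd_push OnePoint.coe_injective _ t

lemma subsingleton_Hc_succ_iff {B : Set X} {m : ℕ} :
    Subsingleton (Hc A (m + 1) B) ↔ AcyclicWithCompactSupports A B m := by
  rw [Hc]
  split_ifs with h
  · exact subsingleton_ASH_iff_of_isCompact (isCompact_iff_compactSpace.2 h)
  · exact subsingleton_ASH_onePoint_iff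

lemma cohDim_le_iff_subsingleton {n : ℕ} : cohDim A X ≤ n ↔
    ∀ m, n < m → ∀ B : Set X, LocallyCompactSpace B → Subsingleton (Hc A m B) := by
  rw [cohDim, sSup_le_iff]
  constructor
  · intro h m hm B hB
    by_contra hs
    exact absurd (h m ⟨m, rfl, B, hB, not_subsingleton_iff_nontrivial.1 hs⟩)
      (not_le.2 (Nat.cast_lt.2 hm))
  · rintro h _ ⟨m, rfl, B, hB, hN⟩
    by_contra hm
    exact not_subsingleton_iff_nontrivial.2 hN (h m (Nat.cast_lt.1 (not_le.1 hm)) B hB)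

end Translation

lemma cohDim_le_of_extendsCocycles {A : Type*} [AddCommGroup A] {X : Type*} [MetricSpace X]
    {n : ℕ} (h : ExtendsCocycles A X n) : cohDim A X ≤ n := by
  refine cohDim_le_iff_subsingleton.2 fun m hm B hB => ?_
  obtain ⟨m, rfl⟩ := Nat.exists_eq_succ_of_ne_zero (Nat.ne_zero_of_lt hm)
  exact subsingleton_Hc_succ_iff.2 (h.mono (Nat.lt_succ_iff.1 hm)).acyclicWithCompactSupports

lemma extendsCocycles_of_subsingleton {A : Type*} [AddCommGroup A] {X : Type*} [MetricSpace X]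
    [LocallyCompactSpace X] {n : ℕ} (h : ∀ U : Set X, IsOpen U → IsCompact (closure U) →
      Subsingleton (Hc A (n + 1) U)) : ExtendsCocycles A X n :=
  extendsCocycles_of_acyclic fun U hU hUc => subsingleton_Hc_succ_iff.1 (h U hU hUc)

end AS

/-- **Theorem 5** (Cohen).  For a locally compact metric space `X` and an abelian group `A`
the following are equivalent: (1) `dim_A X ≤ n`; (2) `H^{n+1}_c(U; A) = 0` for every
precompact open `U ⊆ X`; (3) for every compact pair `B ⊆ C` in `X` the restriction
homomorphism `H^n(C; A) → H^n(B; A)` is surjective. -/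
theorem cohDim_le_iff (X : Type) [MetricSpace X] [LocallyCompactSpace X]
    (A : Type*) [AddCommGroup A] (n : ℕ) :
    ((cohDim A X ≤ (n : ℕ∞)) ↔
      (∀ U : Set X, IsOpen U → IsCompact (closure U) → Subsingleton (AS.Hc A (n + 1) U))) ∧
    ((cohDim A X ≤ (n : ℕ∞)) ↔
      (∀ B C : Set X, IsCompact B → IsCompact C → ∀ (hBC : B ⊆ C),
        Function.Surjective (AS.ASHmap A (continuous_inclusion hBC) n))) := by
  have h12 : cohDim A X ≤ n → ∀ U : Set X, IsOpen U → IsCompact (closure U) →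
      Subsingleton (AS.Hc A (n + 1) U) := fun h U hU _ =>
    AS.cohDim_le_iff_subsingleton.1 h _ n.lt_succ_self U hU.locallyCompactSpace
  exact ⟨⟨h12, fun h => AS.cohDim_le_of_extendsCocycles (AS.extendsCocycles_of_subsingleton h)⟩,
    fun h => AS.extendsCocycles_iff.1 (AS.extendsCocycles_of_subsingleton (h12 h)),
    fun h => AS.cohDim_le_of_extendsCocycles (AS.extendsCocycles_iff.2 h)⟩
end
end

section
/- For every locally compact metric space X, dim_Z X ≤ dim X; and if dim X < ∞ then dim_Z X = dim X. -/
open Set Function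

open scoped ENNReal

noncomputable section

/-! ### Covering dimension -/

/-- `CovDimLE X n` : every open cover of `X` has an open refinement of order at most `n + 1`
(i.e. at most `n + 1` members of the refinement have a common point). -/
def CovDimLE (X : Type*) [TopologicalSpace X] (n : ℕ) : Prop :=
  ∀ U : Set (Set X), (∀ u ∈ U, IsOpen u) → ⋃₀ U = univ →
    ∃ V : Set (Set X), (∀ v ∈ V, IsOpen v) ∧ ⋃₀ V = univ ∧
      (∀ v ∈ V, ∃ u ∈ U, v ⊆ u) ∧
      ∀ T : Finset (Set X), ↑T ⊆ V → (⋂₀ (T : Set (Set X))).Nonempty → T.card ≤ n + 1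

/-- The (Lebesgue) covering dimension of a topological space, valued in `ℕ∞`. -/
noncomputable def covDim (X : Type*) [TopologicalSpace X] : ℕ∞ :=
  sInf {e : ℕ∞ | ∃ n : ℕ, e = (n : ℕ∞) ∧ CovDimLE X n}

namespace Covering

variable {V W : Type*} {k : ℕ}

/-- The coboundary of a cochain defined on `k`-tuples. -/
def D (φ : (Fin k → V) → ℤ) : (Fin (k + 1) → V) → ℤ :=
  fun s => ∑ i : Fin (k + 1), (-1) ^ (i : ℕ) * φ (s ∘ i.succAbove)

/-- Contraction of a cochain with a vertex. -/
def cone (a : V) (φ : (Fin (k + 1) → V) → ℤ) : (Fin k → V) → ℤ :=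
  fun s => φ (Fin.cons a s : Fin (k + 1) → V)

lemma d_eq_D (n : ℕ) (φ : (Fin (n + 1) → V) → ℤ) : AS.d ℤ V n φ = D φ := by
  funext s
  simp [D, AS.d]

lemma cons_comp_succAbove_succ (a : V) (s : Fin (k + 1) → V) (j : Fin (k + 1)) :
    (Fin.cons a s : Fin (k + 2) → V) ∘ j.succ.succAbove = Fin.cons a (s ∘ j.succAbove) := by
  funext i
  refine Fin.cases ?_ (fun i => ?_) i <;> simp

lemma cons_comp_succAbove_zero (a : V) (s : Fin k → V) :
    (Fin.cons a s : Fin (k + 1) → V) ∘ (0 : Fin (k + 1)).succAbove = s := by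
  funext i
  simp

lemma comp_cons (g : V → W) (a : V) (s : Fin k → V) :
    g ∘ (Fin.cons a s : Fin (k + 1) → V) = Fin.cons (g a) (g ∘ s) := by
  funext i
  refine Fin.cases ?_ (fun i => ?_) i <;> simp

lemma D_cons (a : V) (φ : (Fin (k + 1) → V) → ℤ) (s : Fin (k + 1) → V) :
    D φ (Fin.cons a s : Fin (k + 2) → V) = φ s - D (cone a φ) s := by
  rw [D, Fin.sum_univ_succ]
  simp only [cons_comp_succAbove_zero, cons_comp_succAbove_succ, Fin.val_zero, pow_zero, one_mul,
    Fin.val_succ, D, cone, pow_succ, mul_neg, mul_one, neg_mul, Finset.sum_neg_distrib]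
  ring

lemma D_zero_apply (φ : (Fin 0 → V) → ℤ) (s : Fin 1 → V) : D φ s = φ Fin.elim0 := by
  have : ∀ t : Fin 0 → V, t = Fin.elim0 := fun t => Subsingleton.elim _ _
  simp [D, this (s ∘ _)]

lemma D_add (φ ψ : (Fin k → V) → ℤ) : D (φ + ψ) = D φ + D ψ := by
  funext s; simp [D, mul_add, Finset.sum_add_distrib]

lemma D_sub (φ ψ : (Fin k → V) → ℤ) : D (φ - ψ) = D φ - D ψ := by
  funext s; simp [D, mul_sub, Finset.sum_sub_distrib]

lemma D_comp (g : V → W) (φ : (Fin k → W) → ℤ) (s : Fin (k + 1) → V) :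
    D (fun t : Fin k → V => φ (g ∘ t)) s = D φ (g ∘ s) := rfl

lemma D_congr {φ ψ : (Fin k → V) → ℤ} {s : Fin (k + 1) → V}
    (h : ∀ i : Fin (k + 1), φ (s ∘ i.succAbove) = ψ (s ∘ i.succAbove)) : D φ s = D ψ s := by
  simp only [D, h]

lemma D_eq_zero {φ : (Fin k → V) → ℤ} {s : Fin (k + 1) → V}
    (h : ∀ i : Fin (k + 1), φ (s ∘ i.succAbove) = 0) : D φ s = 0 := by
  simp only [D, h, mul_zero, Finset.sum_const_zero]

lemma cone_D (a : V) (φ : (Fin (k + 1) → V) → ℤ) : cone a (D φ) = φ - D (cone a φ) := by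
  funext s
  simp [cone, D_cons]

lemma D_D : ∀ {k : ℕ} (φ : (Fin k → V) → ℤ) (s : Fin (k + 2) → V), D (D φ) s = 0
  | 0, φ, s => by
    rw [D, Fin.sum_univ_two]
    simp [D_zero_apply]
  | k + 1, φ, s => by
    obtain ⟨a, r, rfl⟩ : ∃ a r, s = Fin.cons a r := ⟨s 0, Fin.tail s, (Fin.cons_self_tail s).symm⟩
    rw [D_cons, cone_D, D_sub, Pi.sub_apply, D_D (cone a φ) r]
    ring

/-- The prism operator between the chain maps induced by two maps of vertices. -/
def prism (f g : V → W) : {k : ℕ} → ((Fin (k + 1) → W) → ℤ) → (Fin k → V) → ℤ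
  | 0, _, _ => 0
  | _ + 1, φ, x => φ (Fin.cons (f (x 0)) (Fin.cons (g (x 0)) (g ∘ Fin.tail x))) -
      prism f g (cone (f (x 0)) φ) (Fin.tail x)

lemma prism_cons (f g : V → W) (φ : (Fin (k + 2) → W) → ℤ) (a : V) (r : Fin k → V) :
    prism f g φ (Fin.cons a r : Fin (k + 1) → V) =
      φ (Fin.cons (f a) (Fin.cons (g a) (g ∘ r))) - prism f g (cone (f a) φ) r := by
  simp [prism]

lemma prism_add (f g : V → W) : ∀ {k : ℕ} (φ ψ : (Fin (k + 1) → W) → ℤ) (x : Fin k → V),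
    prism f g (φ + ψ) x = prism f g φ x + prism f g ψ x
  | 0, _, _, _ => rfl
  | k + 1, φ, ψ, x => by
    have := prism_add f g (cone (f (x 0)) φ) (cone (f (x 0)) ψ) (Fin.tail x)
    have h : cone (f (x 0)) (φ + ψ) = cone (f (x 0)) φ + cone (f (x 0)) ψ := rfl
    simp only [prism, h, this, Pi.add_apply]; ring

lemma prism_sub (f g : V → W) (φ ψ : (Fin (k + 1) → W) → ℤ) (x : Fin k → V) :
    prism f g (φ - ψ) x = prism f g φ x - prism f g ψ x := by
  have := prism_add f g (φ - ψ) ψ x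
  rw [sub_add_cancel] at this
  linarith

lemma D_prism (f g : V → W) : ∀ {k : ℕ} (φ : (Fin (k + 1) → W) → ℤ) (x : Fin (k + 1) → V),
    D (prism f g φ) x + prism f g (D φ) x = φ (g ∘ x) - φ (f ∘ x)
  | 0, φ, x => by
    obtain ⟨a, r, rfl⟩ : ∃ a r, x = Fin.cons a r := ⟨x 0, Fin.tail x, (Fin.cons_self_tail x).symm⟩
    have h1 : (Fin.cons (g a) (g ∘ r) : Fin 1 → W) = g ∘ (Fin.cons a r : Fin 1 → V) :=
      (comp_cons g a r).symm
    have h2 : (Fin.cons (f a) (f ∘ r) : Fin 1 → W) = f ∘ (Fin.cons a r : Fin 1 → V) :=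
      (comp_cons f a r).symm
    rw [D_zero_apply, prism_cons, D_cons, D_zero_apply, ← h1, ← h2]
    have : (Fin.elim0 : Fin 0 → W) = f ∘ r := Subsingleton.elim _ _
    simp [prism, cone, this]
  | k + 1, φ, x => by
    obtain ⟨a, r, rfl⟩ : ∃ a r, x = Fin.cons a r := ⟨x 0, Fin.tail x, (Fin.cons_self_tail x).symm⟩
    have ih := D_prism f g (cone (f a) φ) r
    have e : cone a (prism f g φ) =
        (fun t : Fin k → V => cone (g a) (cone (f a) φ) (g ∘ t)) - prism f g (cone (f a) φ) := by
      funext t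
      simp only [cone, prism_cons, Pi.sub_apply]
    rw [D_cons, prism_cons, D_cons, cone_D, prism_sub, e, D_sub, Pi.sub_apply, D_cons]
    rw [D_comp]
    rw [comp_cons, comp_cons]
    have e2 : cone (f a) φ (f ∘ r) = φ (Fin.cons (f a) (f ∘ r)) := rfl
    rw [e2] at ih
    linarith

lemma prism_eq_zero (f g : V → W) : ∀ {k : ℕ} (φ : (Fin (k + 2) → W) → ℤ) (x : Fin (k + 1) → V),
    (∀ t : Fin (k + 2) → W, t 0 = f (x 0) → (∀ j, ∃ i, t j = f (x i) ∨ t j = g (x i)) → φ t = 0) →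
    prism f g φ x = 0
  | 0, φ, x, h => by
    rw [prism, prism, sub_zero]
    refine h _ rfl fun j => ?_
    refine Fin.cases ⟨0, Or.inl rfl⟩ (fun j => ?_) j
    refine Fin.cases ⟨0, Or.inr rfl⟩ (fun j => j.elim0) j
  | k + 1, φ, x, h => by
    rw [prism, h _ rfl, prism_eq_zero f g (cone (f (x 0)) φ), sub_zero]
    · intro t ht hj
      refine h _ rfl fun j => ?_
      refine Fin.cases ⟨0, Or.inl rfl⟩ (fun j => ?_) j
      obtain ⟨i, hi⟩ := hj j
      exact ⟨i.succ, hi⟩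
    · intro j
      refine Fin.cases ⟨0, Or.inl rfl⟩ (fun j => ?_) j
      refine Fin.cases ⟨0, Or.inr rfl⟩ (fun j => ?_) j
      exact ⟨j.succ, Or.inr rfl⟩

end Covering

namespace Covering

variable {V W : Type*} {k : ℕ}

/-- A tuple is contained in a simplex of `F`. -/
def Tup (F : Set (Finset V)) (s : Fin k → V) : Prop := ∃ σ ∈ F, ∀ j, s j ∈ σ

lemma Tup.comp {F : Set (Finset V)} {s : Fin k → V} (h : Tup F s) {l : ℕ} (r : Fin l → Fin k) :
    Tup F (s ∘ r) := by
  obtain ⟨σ, hσ, hs⟩ := h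
  exact ⟨σ, hσ, fun j => hs _⟩

lemma Tup.mono {F M : Set (Finset V)} (hMF : M ⊆ F) {s : Fin k → V} (h : Tup M s) : Tup F s := by
  obtain ⟨σ, hσ, hs⟩ := h
  exact ⟨σ, hMF hσ, hs⟩

lemma extend_one_simplex
    (ih : ∀ (F : Set (Finset V)), IsLowerSet F → ∀ (w : (Fin (k + 1) → V) → ℤ),
      (∀ s : Fin (k + 2) → V, Tup F s → D w s = 0) → (∀ σ ∈ F, σ.card ≤ k) →
      ∃ β : (Fin k → V) → ℤ, ∀ s, Tup F s → D β s = w s)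
    {M : Set (Finset V)} (hM : IsLowerSet M) {τ : Finset V} (hτ : τ ∉ M)
    (hτM : ∀ σ, σ ⊂ τ → σ ∈ M) (hcard : τ.card ≤ k + 1) (w : (Fin (k + 2) → V) → ℤ)
    (hw : ∀ s : Fin (k + 3) → V, (∀ j, s j ∈ τ) → D w s = 0)
    (β : (Fin (k + 1) → V) → ℤ) (hβ : ∀ s, Tup M s → D β s = w s) :
    ∃ β' : (Fin (k + 1) → V) → ℤ, (∀ s, Tup M s → β' s = β s) ∧
      ∀ s, Tup (insert τ M) s → D β' s = w s := by
  classical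
  rcases τ.eq_empty_or_nonempty with rfl | ⟨a, ha⟩
  · refine ⟨β, fun _ _ => rfl, fun s hs => hβ s ?_⟩
    obtain ⟨σ, rfl | hσ, hs⟩ := hs
    · exact absurd (hs 0) (by simp)
    · exact ⟨σ, hσ, hs⟩
  have hγ : ∀ s : Fin (k + 2) → V, (∀ j, s j ∈ τ) → D (cone a w) s = w s := by
    intro s hs
    have := D_cons a w s
    rw [hw] at this
    · linarith
    · intro j
      refine Fin.cases ha (fun j => hs j) j
  obtain ⟨η, hη⟩ := ih {σ | σ ⊂ τ} (fun σ ρ h hσ => lt_of_le_of_lt h hσ) (β - cone a w)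
    (by
      rintro s ⟨σ, hσ, hs⟩
      rw [D_sub, Pi.sub_apply, hβ s ⟨σ, hτM σ hσ, hs⟩, hγ s fun j => hσ.1 (hs j), sub_self])
    (fun σ hσ => by have := Finset.card_lt_card hσ; omega)
  have key : ∀ t : Fin (k + 1) → V, (∀ j, t j ∈ τ) → Tup M t → β t = (cone a w + D η) t := by
    rintro t ht ⟨σ, hσ, hs⟩
    have h1 := hη t ⟨σ ∩ τ, ⟨Finset.inter_subset_right, fun h => hτ (hM (fun x hx =>
      (Finset.mem_inter.1 (h hx)).1) hσ)⟩, fun j => Finset.mem_inter.2 ⟨hs j, ht j⟩⟩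
    simp only [Pi.sub_apply] at h1
    simp only [Pi.add_apply, h1]
    ring
  refine ⟨fun s => if Tup M s then β s else (cone a w + D η) s, fun s hs => if_pos hs, ?_⟩
  intro s hs
  by_cases hsM : Tup M s
  · rw [← hβ s hsM]
    exact D_congr fun i => if_pos (hsM.comp _)
  · obtain ⟨σ, rfl | hσ, hs⟩ := hs
    · have h2 : D (fun s => if Tup M s then β s else (cone a w + D η) s) s
          = D (cone a w + D η) s := by
        refine D_congr fun i => ?_
        by_cases h : Tup M (s ∘ i.succAbove)
        · rw [if_pos h]
          exact key (s ∘ i.succAbove) (fun j => hs _) h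
        · rw [if_neg h]
      rw [h2, D_add, Pi.add_apply, D_D, hγ s hs, add_zero]
    · exact absurd ⟨σ, hσ, hs⟩ hsM

/-- A cochain bounding a cocycle on a subcomplex extends over all simplices of small dimension. -/
theorem extend_cochain [Finite V] : ∀ (k : ℕ) (F M : Set (Finset V)), IsLowerSet F →
    IsLowerSet M → M ⊆ F → ∀ (w : (Fin (k + 1) → V) → ℤ),
    (∀ s : Fin (k + 2) → V, Tup F s → D w s = 0) → ∀ (β : (Fin k → V) → ℤ),
    (∀ s, Tup M s → D β s = w s) → (∀ σ ∈ F, σ ∉ M → σ.card ≤ k) →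
    ∃ β' : (Fin k → V) → ℤ, (∀ s, Tup M s → β' s = β s) ∧ ∀ s, Tup F s → D β' s = w s := by
  classical
  intro k
  induction k with
  | zero =>
    intro F M _ _ _ w _ β hβ hdim
    refine ⟨β, fun _ _ => rfl, fun s hs => hβ s ?_⟩
    obtain ⟨σ, hσ, hs⟩ := hs
    refine ⟨σ, by_contra fun h => ?_, hs⟩
    have := hdim σ hσ h
    have h3 : 0 < σ.card := Finset.card_pos.2 ⟨_, hs 0⟩
    omega
  | succ k ih =>
    have ih' : ∀ (F : Set (Finset V)), IsLowerSet F → ∀ (w : (Fin (k + 1) → V) → ℤ),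
      (∀ s : Fin (k + 2) → V, Tup F s → D w s = 0) → (∀ σ ∈ F, σ.card ≤ k) →
      ∃ β : (Fin k → V) → ℤ, ∀ s, Tup F s → D β s = w s := by
      intro F hF w hw hc
      obtain ⟨β, -, hβ⟩ := ih F ∅ hF (fun _ _ _ h => h.elim) (empty_subset _) w hw 0
        (fun s hs => by obtain ⟨_, h, _⟩ := hs; exact h.elim) (fun σ hσ _ => hc σ hσ)
      exact ⟨β, hβ⟩
    intro F M hF hM hMF w hw β hβ hdim
    induction hn : (F \ M).ncard using Nat.strong_induction_on generalizing M β with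
    | _ n IH =>
    rcases (F \ M).eq_empty_or_nonempty with he | hne
    · refine ⟨β, fun _ _ => rfl, fun s hs => hβ s (hs.mono ?_)⟩
      exact sdiff_eq_empty.1 he
    · obtain ⟨τ, hτ⟩ := (F \ M).toFinite.exists_minimal hne
      have hτM : ∀ σ, σ ⊂ τ → σ ∈ M := fun σ hσ => by_contra fun h =>
        hσ.2 (hτ.2 ⟨hF hσ.1 hτ.1.1, h⟩ hσ.1)
      have hM' : IsLowerSet (insert τ M) := by
        rintro σ ρ h (rfl | hσ)
        · rcases eq_or_ne ρ σ with rfl | hne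
          · exact Or.inl rfl
          · exact Or.inr (hτM _ (lt_of_le_of_ne h hne))
        · exact Or.inr (hM h hσ)
      obtain ⟨β1, h1, h2⟩ := extend_one_simplex ih' hM hτ.1.2 hτM (hdim τ hτ.1.1 hτ.1.2) w
        (fun s hs => hw s ⟨τ, hτ.1.1, hs⟩) β hβ
      obtain ⟨β2, h3, h4⟩ := IH (F \ insert τ M).ncard (by
          rw [← hn]
          refine Set.ncard_lt_ncard ⟨fun σ hσ => ⟨hσ.1, fun h => hσ.2 (Or.inr h)⟩, fun h => ?_⟩
          exact (h hτ.1).2 (Or.inl rfl)) (insert τ M) hM'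
        (insert_subset hτ.1.1 hMF) β1 h2 (fun σ hσ h => hdim σ hσ fun h' => h (Or.inr h')) rfl
      exact ⟨β2, fun s hs => (h3 s (hs.mono (subset_insert _ _))).trans (h1 s hs), h4⟩

/-- The cochain on labels in `Fin (m + 2)` whose coboundary is the orientation cochain of the
simplex. -/
def kappa (m : ℕ) : (Fin (m + 1) → Fin (m + 2)) → ℤ :=
  fun j => (Matrix.of fun i k : Fin (m + 1) => if j i = k.succ then (1 : ℤ) else 0).det

lemma D_kappa (m : ℕ) (j : Fin (m + 2) → Fin (m + 2)) :
    D (kappa m) j = (Matrix.of fun i k : Fin (m + 2) => if j i = k then (1 : ℤ) else 0).det := by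
  let A : Matrix (Fin (m + 2)) (Fin (m + 2)) ℤ := Matrix.of fun i k => if j i = k then 1 else 0
  have h := Matrix.det_updateCol_sum A 0 (fun _ => 1)
  have h0 : (fun k => ∑ i, (1 : ℤ) • A k i) = fun _ => 1 := by
    funext k
    simp [A]
  rw [one_smul, h0] at h
  change _ = A.det
  rw [← h, Matrix.det_succ_column_zero, D]
  refine Finset.sum_congr rfl fun i _ => ?_
  rw [Matrix.updateCol_self, mul_one]
  congr 1

lemma kappa_eq_zero {m : ℕ} {j : Fin (m + 1) → Fin (m + 2)} (i : Fin (m + 1)) (h : j i = 0) :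
    kappa m j = 0 := by
  refine Matrix.det_eq_zero_of_row_eq_zero i fun k => ?_
  simp [h, (Fin.succ_ne_zero k).symm]

lemma D_kappa_eq_zero {m : ℕ} {j : Fin (m + 2) → Fin (m + 2)} (i : Fin (m + 2))
    (h : ∀ k, j k ≠ i) : D (kappa m) j = 0 := by
  rw [D_kappa]
  refine Matrix.det_eq_zero_of_column_eq_zero i fun k => ?_
  simp [h]

lemma kappa_succ (m : ℕ) (j : Fin (m + 2) → Fin (m + 2)) :
    kappa (m + 1) (fun i => (j i).succ) = D (kappa m) j := by
  rw [D_kappa, kappa]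
  simp

end Covering

namespace Covering

variable {V : Type*}

/-- The barycentric subdivision of a simplicial complex. -/
def sd (F : Set (Finset V)) : Set (Finset (Finset V)) :=
  {c | (∀ σ ∈ c, σ ∈ F ∧ σ.Nonempty) ∧ ∀ σ ∈ c, ∀ τ ∈ c, σ ⊆ τ ∨ τ ⊆ σ}

lemma isLowerSet_sd (F : Set (Finset V)) : IsLowerSet (sd F) := fun _ _ h hc =>
  ⟨fun σ hσ => hc.1 σ (h hσ), fun σ hσ τ hτ => hc.2 σ (h hσ) τ (h hτ)⟩

lemma exists_top_of_mem_sd {F : Set (Finset V)} {c : Finset (Finset V)} (hc : c ∈ sd F)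
    (hne : c.Nonempty) : ∃ τ ∈ c, ∀ σ ∈ c, σ ⊆ τ := by
  obtain ⟨τ, hτ, hmax⟩ := c.exists_max_image Finset.card hne
  refine ⟨τ, hτ, fun σ hσ => ?_⟩
  rcases hc.2 σ hσ τ hτ with h | h
  · exact h
  · exact (Finset.eq_of_subset_of_card_le h (hmax σ hσ)).symm.subset

lemma exists_bot_of_mem_sd {F : Set (Finset V)} {c : Finset (Finset V)} (hc : c ∈ sd F)
    (hne : c.Nonempty) : ∃ τ ∈ c, ∀ σ ∈ c, τ ⊆ σ := by
  obtain ⟨τ, hτ, hmin⟩ := c.exists_min_image Finset.card hne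
  refine ⟨τ, hτ, fun σ hσ => ?_⟩
  rcases hc.2 τ hτ σ hσ with h | h
  · exact h
  · exact (Finset.eq_of_subset_of_card_le h (hmin σ hσ)).symm.subset

lemma card_le_of_mem_sd {F : Set (Finset V)} {c : Finset (Finset V)} (hc : c ∈ sd F)
    {a b : ℕ} (h : ∀ σ ∈ c, a ≤ σ.card ∧ σ.card ≤ b) : c.card ≤ b + 1 - a := by
  rw [← Nat.card_Icc]
  refine Finset.card_le_card_of_injOn Finset.card (fun σ hσ => by simpa using h σ hσ) ?_
  intro σ hσ τ hτ heq
  rcases hc.2 σ hσ τ hτ with h | h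
  · exact Finset.eq_of_subset_of_card_le h heq.ge
  · exact (Finset.eq_of_subset_of_card_le h heq.le).symm

lemma exists_continuous_partition {X : Type*} [TopologicalSpace X] [NormalSpace X] [Fintype V]
    (U : V → Set X) (hU : ∀ v, IsOpen (U v)) (hcov : ∀ x, ∃ v, x ∈ U v) :
    ∃ φ : V → X → ℝ, (∀ v, Continuous (φ v)) ∧ (∀ v x, 0 ≤ φ v x) ∧ (∀ x, ∑ v, φ v x = 1) ∧
      ∀ v x, 0 < φ v x → x ∈ U v := by
  obtain ⟨f, hf⟩ := PartitionOfUnity.exists_isSubordinate_of_locallyFinite (s := univ)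
    isClosed_univ U hU (locallyFinite_of_finite U) (fun x _ => mem_iUnion.2 (hcov x))
  refine ⟨fun v => f v, fun v => (f v).continuous, fun v x => f.nonneg v x, fun x => ?_,
    fun v x h => hf v (subset_tsupport _ h.ne')⟩
  rw [← finsum_eq_sum_of_fintype]
  exact f.sum_eq_one (mem_univ x)

/-- The nerve of a cover is contained in `F`. -/
def NerveIn {X : Type*} (U : V → Set X) (F : Set (Finset V)) : Prop :=
  ∀ σ : Finset V, (∃ x, ∀ v ∈ σ, x ∈ U v) → σ ∈ F

lemma exists_sd_cover {X : Type*} [TopologicalSpace X] [NormalSpace X] [Finite V]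
    (U : V → Set X) (hU : ∀ v, IsOpen (U v)) (hcov : ∀ x, ∃ v, x ∈ U v) {F : Set (Finset V)}
    (hF : NerveIn U F) :
    ∃ U' : Finset V → Set X, (∀ σ, IsOpen (U' σ)) ∧ (∀ x, ∃ σ, x ∈ U' σ) ∧
      (∀ σ x, x ∈ U' σ → σ.Nonempty ∧ ∀ v ∈ σ, x ∈ U v) ∧ NerveIn U' (sd F) := by
  classical
  have := Fintype.ofFinite V
  obtain ⟨φ, hc, h0, h1, hs⟩ := exists_continuous_partition U hU hcov
  have key : ∀ (σ : Finset V) x, (σ.Nonempty ∧ ∀ v ∈ σ, 0 < φ v x ∧ ∀ u, u ∉ σ → φ u x < φ v x) →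
      σ.Nonempty ∧ ∀ v ∈ σ, x ∈ U v := fun σ x h => ⟨h.1, fun v hv => hs v x (h.2 v hv).1⟩
  refine ⟨fun σ => {x | σ.Nonempty ∧ ∀ v ∈ σ, 0 < φ v x ∧ ∀ u, u ∉ σ → φ u x < φ v x}, ?_, ?_,
    key, ?_⟩
  · intro σ
    have : {x | σ.Nonempty ∧ ∀ v ∈ σ, 0 < φ v x ∧ ∀ u, u ∉ σ → φ u x < φ v x} =
        {_x | σ.Nonempty} ∩ ⋂ v ∈ σ, ({x | 0 < φ v x} ∩ ⋂ u, ⋂ (_ : u ∉ σ), {x | φ u x < φ v x}) := by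
      ext x
      simp only [mem_ofPred_eq, mem_inter_iff, mem_iInter]
    beta_reduce
    rw [this]
    refine isOpen_const.inter (isOpen_biInter_finset fun v _ => ?_)
    refine (isOpen_lt continuous_const (hc v)).inter ?_
    exact isOpen_iInter_of_finite fun u => isOpen_iInter_of_finite fun _ => isOpen_lt (hc u) (hc v)
  · intro x
    refine ⟨Finset.univ.filter fun v => 0 < φ v x, ?_, ?_⟩
    · by_contra h
      rw [Finset.not_nonempty_iff_eq_empty, Finset.filter_eq_empty_iff] at h
      have : ∑ v, φ v x = 0 := Finset.sum_eq_zero fun v hv => le_antisymm (not_lt.1 (h hv)) (h0 v x)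
      rw [h1] at this
      exact one_ne_zero this
    · intro v hv
      have hv : 0 < φ v x := by simpa using hv
      refine ⟨hv, fun u hu => lt_of_le_of_lt ?_ hv⟩
      simpa using hu
  · rintro c ⟨x, hx⟩
    refine ⟨fun σ hσ => ⟨hF σ ⟨x, (key σ x (hx σ hσ)).2⟩, (hx σ hσ).1⟩, fun σ hσ τ hτ => ?_⟩
    by_contra! h
    obtain ⟨⟨v, hv, hv'⟩, ⟨u, hu, hu'⟩⟩ := And.imp Finset.not_subset.1 Finset.not_subset.1 h
    exact lt_asymm (((hx σ hσ).2 v hv).2 u hu') (((hx τ hτ).2 u hu).2 v hv')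

/-- Data of a labelled cover of a space whose labels define, near part of the space, a map
homotopic to the boundary of a simplex which extends cohomologically. -/
structure HopfData (m : ℕ) (X V : Type) [TopologicalSpace X] where
  /-- the complex -/
  F : Set (Finset V)
  lower : IsLowerSet F
  card_le : ∀ σ ∈ F, σ.card ≤ m + 2
  /-- the cover -/
  U : V → Set X
  isOpen_U : ∀ v, IsOpen (U v)
  cov : ∀ x, ∃ v, x ∈ U v
  nerve : NerveIn U F
  /-- the vertices where the cocycle is the standard one -/
  I : Set V
  /-- the vertices where the tuples are required to be standard -/
  N : Set V
  I_subset : I ⊆ N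
  /-- the labels -/
  l : V → Fin (m + 2)
  not_full : ∀ σ ∈ F, (∀ v ∈ σ, v ∈ I) → ∃ i, ∀ v ∈ σ, l v ≠ i
  /-- the cocycle -/
  w : (Fin (m + 1) → V) → ℤ
  cocycle : ∀ s : Fin (m + 2) → V, Tup F s → D w s = 0
  standard : ∀ s : Fin (m + 1) → V, Tup F s → (∀ j, s j ∈ N) → w s = kappa m (l ∘ s)

/-- The conclusion that the identity labels can be realised by a cover with empty intersection. -/
def HopfData.Solvable {m : ℕ} {X V : Type} [TopologicalSpace X] (H : HopfData m X V) : Prop :=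
  ∃ W : Fin (m + 2) → Set X, (∀ i, IsOpen (W i)) ∧ (∀ x, ∃ i, x ∈ W i) ∧ (∀ x, ∃ i, x ∉ W i) ∧
    ∀ i x, x ∈ W i → (∀ v, x ∈ H.U v → v ∈ H.I) → ∃ v, x ∈ H.U v ∧ H.l v = i

lemma HopfData.solvable_zero {X V : Type} [TopologicalSpace X] (H : HopfData 0 X V) :
    H.Solvable := by
  classical
  have hsingle : ∀ v x, x ∈ H.U v → v ∈ H.I → H.w (fun _ => v) = kappa 0 fun _ => H.l v := by
    intro v x hx hv
    exact H.standard _ ⟨{v}, H.nerve _ ⟨x, by simpa using hx⟩, fun _ => by simp⟩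
      fun _ => H.I_subset hv
  have h01 : ∀ i : Fin 2, i = 0 ∨ i = 1 := by decide
  refine ⟨fun i => {x | ∃ v, x ∈ H.U v ∧ (H.w (fun _ => v) = 0 ↔ i = 0)}, ?_, ?_, ?_, ?_⟩
  · intro i
    have : {x | ∃ v, x ∈ H.U v ∧ (H.w (fun _ => v) = 0 ↔ i = 0)} =
        ⋃ v, ⋃ (_ : H.w (fun _ => v) = 0 ↔ i = 0), H.U v := by
      ext x; simp [and_comm]
    beta_reduce
    rw [this]
    exact isOpen_iUnion fun v => isOpen_iUnion fun _ => H.isOpen_U v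
  · intro x
    obtain ⟨v, hv⟩ := H.cov x
    by_cases h : H.w (fun _ => v) = 0
    · exact ⟨0, v, hv, by simp [h]⟩
    · exact ⟨1, v, hv, by simp [h]⟩
  · intro x
    by_contra! h
    obtain ⟨v, hv, hv0⟩ := h 0
    obtain ⟨u, hu, hu0⟩ := h 1
    have h1 := H.cocycle ![v, u] ⟨{v, u}, H.nerve _ ⟨x, by simp [hv, hu]⟩, fun j => by
      fin_cases j <;> simp⟩
    rw [D, Fin.sum_univ_two] at h1
    have e1 : (![v, u] : Fin 2 → V) ∘ Fin.succAbove 0 = fun _ => u := by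
      funext i; fin_cases i; rfl
    have e2 : (![v, u] : Fin 2 → V) ∘ Fin.succAbove 1 = fun _ => v := by
      funext i; fin_cases i; rfl
    rw [e1, e2] at h1
    simp at hv0 hu0 h1
    omega
  · rintro i x ⟨v, hv, hvi⟩ hI
    refine ⟨v, hv, ?_⟩
    rw [hsingle v x hv (hI v hv)] at hvi
    rcases h01 (H.l v) with h | h
    · rw [h] at hvi ⊢
      rw [kappa_eq_zero 0 rfl] at hvi
      simpa [eq_comm] using hvi
    · rw [h] at hvi ⊢
      have : kappa 0 (fun _ => 1) ≠ 0 := by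
        rw [kappa, Matrix.det_fin_one]; simp
      rcases h01 i with rfl | rfl
      · exact absurd (hvi.2 rfl) this
      · rfl

end Covering

namespace Covering

lemma kappa_one (a b : Fin 3) : kappa 1 ![a, b] =
    (if a = 1 then 1 else 0) * (if b = 2 then 1 else 0) -
      (if a = 2 then 1 else 0) * (if b = 1 then 1 else 0) := by
  rw [kappa, Matrix.det_fin_two]
  simp only [Matrix.of_apply]
  revert a b
  decide

/-- The left end points of three arcs of length `2 / 3` in the circle. -/
def arcStart : Fin 3 → ℝ := ![-1 / 3, 0, 1 / 3]

/-- The positions of the three vertices on the circle. -/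
def vertexPos : Fin 3 → ℝ := ![0, 1 / 3, -1 / 3]

lemma exists_arc (t : ℝ) : ∃ (i : Fin 3) (k : ℤ),
    arcStart i < t + k ∧ t + k < arcStart i + 2 / 3 := by
  have h0 := Int.fract_nonneg t
  have h1 := Int.fract_lt_one t
  have h2 := Int.self_sub_floor t
  rcases lt_or_ge (Int.fract t) (1 / 3) with h | h
  · exact ⟨0, -⌊t⌋, by push_cast; simp only [arcStart, Matrix.cons_val]; constructor <;> linarith⟩
  rcases lt_or_ge (Int.fract t) (2 / 3) with h' | h'
  · exact ⟨1, -⌊t⌋, by push_cast; simp only [arcStart, Matrix.cons_val]; constructor <;> linarith⟩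
  · exact ⟨2, -⌊t⌋, by push_cast; simp only [arcStart, Matrix.cons_val]; constructor <;> linarith⟩

lemma not_all_arcs (t : ℝ) : ∃ i : Fin 3, ∀ k : ℤ,
    ¬(arcStart i < t + k ∧ t + k < arcStart i + 2 / 3) := by
  by_contra! h
  obtain ⟨a, ha⟩ := h 0
  obtain ⟨b, hb⟩ := h 1
  obtain ⟨c, hc⟩ := h 2
  simp only [arcStart, Matrix.cons_val] at ha hb hc
  have e1 : a = b := by
    have h1 : ((b - a : ℤ) : ℝ) < 1 := by push_cast; linarith
    have h2 : (-1 : ℝ) < ((b - a : ℤ) : ℝ) := by push_cast; linarith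
    have h1 : b - a < 1 := by exact_mod_cast h1
    have h2 : -1 < b - a := by exact_mod_cast h2
    omega
  have e2 : b = c := by
    have h1 : ((c - b : ℤ) : ℝ) < 1 := by push_cast; linarith
    have h2 : (-1 : ℝ) < ((c - b : ℤ) : ℝ) := by push_cast; linarith
    have h1 : c - b < 1 := by exact_mod_cast h1
    have h2 : -1 < c - b := by exact_mod_cast h2
    omega
  subst e1 e2
  linarith

/-- If a label is missing, the corresponding arc misses an interval containing all terms. -/
lemma exists_interval (i a : Fin 3) (ha : a ≠ i) : ∃ p : ℝ, (∀ b : Fin 3, b ≠ i →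
    p ≤ (kappa 1 ![a, b] : ℤ) + vertexPos b ∧ (kappa 1 ![a, b] : ℤ) + vertexPos b ≤ p + 1 / 3) ∧
    ∀ t, p ≤ t → t ≤ p + 1 / 3 → ∀ k : ℤ,
      ¬(arcStart i < t + k ∧ t + k < arcStart i + 2 / 3) := by
  have avoid : ∀ (p q : ℝ), (∃ j : ℤ, q + 2 / 3 = p + j) →
      ∀ t, p ≤ t → t ≤ p + 1 / 3 → ∀ k : ℤ, ¬(q < t + k ∧ t + k < q + 2 / 3) := by
    rintro p q ⟨j, hj⟩ t h1 h2 k ⟨h3, h4⟩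
    have h5 : ((k - j : ℤ) : ℝ) < 0 := by push_cast; linarith
    have h6 : (-1 : ℝ) < ((k - j : ℤ) : ℝ) := by push_cast; linarith
    have h5 : k - j < 0 := by exact_mod_cast h5
    have h6 : -1 < k - j := by exact_mod_cast h6
    omega
  refine ⟨(![![0, 1 / 3, -2 / 3], ![-1 / 3, 0, -1 / 3], ![0, 0, 0]] : Fin 3 → Fin 3 → ℝ) i a,
    ?_, avoid _ _ ?_⟩
  · intro b hb
    rw [kappa_one]
    fin_cases i <;> fin_cases a <;> first
      | exact absurd rfl ha
      | (fin_cases b <;> first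
          | exact absurd rfl hb
          | (norm_num [vertexPos, Fin.ext_iff]))
  · fin_cases i <;> fin_cases a <;> first
      | exact absurd rfl ha
      | (refine ⟨0, ?_⟩; norm_num [arcStart]; done)
      | (refine ⟨1, ?_⟩; norm_num [arcStart])

lemma HopfData.solvable_one {X V : Type} [TopologicalSpace X] [NormalSpace X] [Finite V]
    (H : HopfData 1 X V) : H.Solvable := by
  classical
  have := Fintype.ofFinite V
  obtain ⟨φ, hφc, hφ0, hφ1, hφU⟩ := exists_continuous_partition H.U H.isOpen_U H.cov
  let f : V → X → ℝ := fun v x => ∑ u, φ u x * ((H.w ![v, u] : ℤ) + vertexPos (H.l u))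
  have hfc : ∀ v, Continuous (f v) := fun v =>
    continuous_finsetSum _ fun u _ => (hφc u).mul continuous_const
  have hpos : ∀ x, ∃ v, 0 < φ v x := by
    intro x
    by_contra! h
    have : ∑ v, φ v x = 0 := Finset.sum_eq_zero fun v _ => le_antisymm (h v) (hφ0 v x)
    rw [hφ1] at this
    exact one_ne_zero this
  have hcoc : ∀ x a b c, x ∈ H.U a → x ∈ H.U b → x ∈ H.U c →
      H.w ![b, c] - H.w ![a, c] + H.w ![a, b] = 0 := by
    intro x a b c ha hb hc
    have h := H.cocycle ![a, b, c] ⟨{a, b, c}, H.nerve _ ⟨x, by simp [ha, hb, hc]⟩,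
      fun j => by fin_cases j <;> simp⟩
    rw [D, Fin.sum_univ_three] at h
    have e1 : (![a, b, c] : Fin 3 → V) ∘ Fin.succAbove 0 = ![b, c] := by
      funext i; fin_cases i <;> rfl
    have e2 : (![a, b, c] : Fin 3 → V) ∘ Fin.succAbove 1 = ![a, c] := by
      funext i; fin_cases i <;> rfl
    have e3 : (![a, b, c] : Fin 3 → V) ∘ Fin.succAbove 2 = ![a, b] := by
      funext i; fin_cases i <;> rfl
    rw [e1, e2, e3] at h
    simp at h
    linarith
  have hdiff : ∀ x a b, 0 < φ a x → 0 < φ b x → f a x = f b x + H.w ![a, b] := by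
    intro x a b ha hb
    have : f a x - f b x = ∑ u, φ u x * (H.w ![a, b] : ℤ) := by
      rw [← Finset.sum_sub_distrib]
      refine Finset.sum_congr rfl fun u _ => ?_
      rcases (hφ0 u x).eq_or_lt with h | h
      · rw [← h]; ring
      · have := hcoc x a b u (hφU a x ha) (hφU b x hb) (hφU u x h)
        have e : H.w ![a, b] = H.w ![a, u] - H.w ![b, u] := by linarith
        rw [e]; push_cast; ring
    rw [← Finset.sum_mul, hφ1, one_mul] at this
    linarith
  refine ⟨fun i => {x | ∃ v, ∃ k : ℤ, 0 < φ v x ∧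
    (arcStart i < f v x + k ∧ f v x + k < arcStart i + 2 / 3)}, ?_, ?_, ?_, ?_⟩
  · intro i
    have : {x | ∃ v, ∃ k : ℤ, 0 < φ v x ∧
        (arcStart i < f v x + k ∧ f v x + k < arcStart i + 2 / 3)} =
        ⋃ v, ⋃ k : ℤ, {x | 0 < φ v x} ∩
          ({x | arcStart i < f v x + k} ∩ {x | f v x + k < arcStart i + 2 / 3}) := by
      ext x; simp
    beta_reduce
    rw [this]
    refine isOpen_iUnion fun v => isOpen_iUnion fun k => ?_
    exact (isOpen_lt continuous_const (hφc v)).inter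
      ((isOpen_lt continuous_const ((hfc v).add continuous_const)).inter
        (isOpen_lt ((hfc v).add continuous_const) continuous_const))
  · intro x
    obtain ⟨v, hv⟩ := hpos x
    obtain ⟨i, k, h⟩ := exists_arc (f v x)
    exact ⟨i, v, k, hv, h⟩
  · intro x
    obtain ⟨v, hv⟩ := hpos x
    obtain ⟨i, hi⟩ := not_all_arcs (f v x)
    refine ⟨i, ?_⟩
    rintro ⟨u, k, hu, h⟩
    refine hi (H.w ![u, v] + k) ?_
    rw [hdiff x u v hu hv] at h
    push_cast
    rwa [← add_assoc]
  · rintro i x ⟨v, k, hv, h⟩ hI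
    by_contra! hne
    obtain ⟨p, hp, hp'⟩ := exists_interval i (H.l v) (hne v (hφU v x hv))
    have hterm : ∀ u, 0 < φ u x → p ≤ (H.w ![v, u] : ℤ) + vertexPos (H.l u) ∧
        (H.w ![v, u] : ℤ) + vertexPos (H.l u) ≤ p + 1 / 3 := by
      intro u hu
      have hs := H.standard ![v, u] ⟨{v, u}, H.nerve _ ⟨x, by
        simp [hφU v x hv, hφU u x hu]⟩, fun j => by fin_cases j <;> simp⟩ (fun j => by
          fin_cases j
          · exact H.I_subset (hI v (hφU v x hv))
          · exact H.I_subset (hI u (hφU u x hu)))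
      have e : H.l ∘ ![v, u] = ![H.l v, H.l u] := by
        funext i; fin_cases i <;> rfl
      rw [hs, e]
      exact hp _ (hne u (hφU u x hu))
    refine hp' (f v x) ?_ ?_ k h
    · calc p = ∑ u, φ u x * p := by rw [← Finset.sum_mul, hφ1, one_mul]
        _ ≤ f v x := by
          refine Finset.sum_le_sum fun u _ => ?_
          rcases (hφ0 u x).eq_or_lt with h | h
          · rw [← h]; simp
          · exact mul_le_mul_of_nonneg_left (hterm u h).1 h.le
    · calc f v x = ∑ u, φ u x * ((H.w ![v, u] : ℤ) + vertexPos (H.l u)) := rfl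
        _ ≤ ∑ u, φ u x * (p + 1 / 3) := by
          refine Finset.sum_le_sum fun u _ => ?_
          rcases (hφ0 u x).eq_or_lt with h | h
          · rw [← h]; simp
          · exact mul_le_mul_of_nonneg_left (hterm u h).2 h.le
        _ = p + 1 / 3 := by rw [← Finset.sum_mul, hφ1, one_mul]

end Covering

namespace Covering

lemma exists_choice {V : Type*} [Nonempty V] (P : V → Prop) :
    ∃ g : Finset V → V, (∀ σ, σ.Nonempty → g σ ∈ σ) ∧
      ∀ σ, (∃ v ∈ σ, P v) → g σ ∈ σ ∧ P (g σ) := by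
  classical
  have : ∀ σ : Finset V, ∃ v, (σ.Nonempty → v ∈ σ) ∧ ((∃ v ∈ σ, P v) → v ∈ σ ∧ P v) := by
    intro σ
    by_cases h : ∃ v ∈ σ, P v
    · obtain ⟨v, hv, hP⟩ := h
      exact ⟨v, fun _ => hv, fun _ => ⟨hv, hP⟩⟩
    · rcases σ.eq_empty_or_nonempty with rfl | ⟨v, hv⟩
      · exact ⟨Classical.arbitrary V, fun h => absurd h (by simp), fun h' => absurd h' h⟩
      · exact ⟨v, fun _ => hv, fun h' => absurd h' h⟩
  choose g h1 h2 using this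
  exact ⟨g, h1, h2⟩

lemma Tup.comp_choice {V : Type*} {k : ℕ} {F : Set (Finset V)} {g : Finset V → V}
    (hg : ∀ σ, σ.Nonempty → g σ ∈ σ) {s : Fin (k + 1) → Finset V} (hs : Tup (sd F) s) :
    Tup F (g ∘ s) := by
  obtain ⟨c, hc, hs⟩ := hs
  obtain ⟨τ, hτ, htop⟩ := exists_top_of_mem_sd hc ⟨_, hs 0⟩
  exact ⟨τ, (hc.1 τ hτ).1, fun j => htop _ (hs j) (hg _ (hc.1 _ (hs j)).2)⟩

lemma solvable_of_isEmpty {m : ℕ} {X V : Type} [TopologicalSpace X] [IsEmpty X]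
    (H : HopfData m X V) : H.Solvable :=
  ⟨fun _ => ∅, fun _ => isOpen_empty, fun x => isEmptyElim x, fun x => isEmptyElim x,
    fun _ x => isEmptyElim x⟩

/-- The labels are standard on all simplices meeting `I`. -/
def HopfData.Star {m : ℕ} {X V : Type} [TopologicalSpace X] (H : HopfData m X V) : Prop :=
  ∀ σ ∈ H.F, (∃ v ∈ σ, v ∈ H.I) → ∀ v ∈ σ, v ∈ H.N

lemma HopfData.exists_star {m : ℕ} {X V : Type} [TopologicalSpace X] [NormalSpace X] [Finite V]
    [Nonempty V] (H : HopfData m X V) :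
    ∃ H' : HopfData m X (Finset V), H'.Star ∧ (H'.Solvable → H.Solvable) := by
  classical
  obtain ⟨U', hU'o, hU'c, hU', hnerve⟩ := exists_sd_cover H.U H.isOpen_U H.cov H.nerve
  obtain ⟨g, hg, hgI⟩ := exists_choice fun v => v ∈ H.I
  refine ⟨{ F := sd H.F
            lower := isLowerSet_sd _
            card_le := fun c hc => ?_
            U := U'
            isOpen_U := hU'o
            cov := hU'c
            nerve := hnerve
            I := {σ | σ.Nonempty ∧ ∀ v ∈ σ, v ∈ H.I}
            N := {σ | ∃ v ∈ σ, v ∈ H.I}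
            I_subset := fun σ ⟨⟨v, hv⟩, h⟩ => ⟨v, hv, h v hv⟩
            l := H.l ∘ g
            not_full := fun c hc hI => ?_
            w := fun s => H.w (g ∘ s)
            cocycle := fun s hs => ?_
            standard := fun s hs hN => ?_ }, ?_, ?_⟩
  · have := card_le_of_mem_sd hc (a := 1) (b := m + 2) fun σ hσ =>
      ⟨Finset.card_pos.2 (hc.1 σ hσ).2, H.card_le σ (hc.1 σ hσ).1⟩
    omega
  · rcases c.eq_empty_or_nonempty with rfl | hne
    · exact ⟨0, by simp⟩
    · obtain ⟨τ, hτ, htop⟩ := exists_top_of_mem_sd hc hne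
      obtain ⟨i, hi⟩ := H.not_full τ (hc.1 τ hτ).1 (hI τ hτ).2
      exact ⟨i, fun σ hσ => hi _ (htop σ hσ (hg σ (hI σ hσ).1))⟩
  · rw [D_comp]
    exact H.cocycle _ (hs.comp_choice hg)
  · exact H.standard _ (hs.comp_choice hg) fun j => H.I_subset (hgI _ (hN j)).2
  · rintro c hc ⟨σ, hσ, hσI⟩ ρ hρ
    rcases hc.2 σ hσ ρ hρ with h | h
    · obtain ⟨v, hv⟩ := hσI.1
      exact ⟨v, h hv, hσI.2 v hv⟩
    · obtain ⟨v, hv⟩ := (hc.1 ρ hρ).2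
      exact ⟨v, hv, hσI.2 v (h hv)⟩
  · rintro ⟨W, hWo, hWc, hW0, hW⟩
    refine ⟨W, hWo, hWc, hW0, fun i x hx hI => ?_⟩
    obtain ⟨σ, hσ, hl⟩ := hW i x hx fun σ hσ =>
      ⟨(hU' σ x hσ).1, fun v hv => hI v ((hU' σ x hσ).2 v hv)⟩
    exact ⟨g σ, (hU' σ x hσ).2 _ (hg σ (hU' σ x hσ).1), hl⟩

/-- Collapses the label `0` to the first of the remaining labels. -/
def dropZero {m : ℕ} (i : Fin (m + 3)) : Fin (m + 2) := Fin.cases 0 id i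

lemma succ_dropZero {m : ℕ} {i : Fin (m + 3)} (hi : i ≠ 0) : (dropZero i).succ = i := by
  obtain ⟨j, rfl⟩ := Fin.exists_succ_eq.2 hi
  rfl

/-- Separates a cover with empty intersection on a closed subspace from its complement. -/
lemma exists_open_extension {X : Type*} [TopologicalSpace X] [NormalSpace X] {X₀ : Set X}
    (hX₀ : IsClosed X₀) {ι : Type*} [Finite ι] [Nonempty ι] (W : ι → Set X₀) (hW : ∀ i, IsOpen (W i))
    (hcov : ∀ x, ∃ i, x ∈ W i) (hempty : ∀ x, ∃ i, x ∉ W i) :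
    ∃ (E : ι → Set X₀) (O : ι → Set X), (∀ i, E i ⊆ W i) ∧ (∀ x, ∃ i, x ∈ E i) ∧
      (∀ i, IsOpen (O i)) ∧ (∀ i, ∀ x ∈ E i, (x : X) ∈ O i) ∧ ∀ x, ∃ i, x ∉ O i := by
  have : NormalSpace X₀ := hX₀.isClosedEmbedding_subtypeVal.normalSpace
  obtain ⟨E, hE1, hE2, hE3⟩ := exists_iUnion_eq_closed_subset hW (fun _ => toFinite _)
    (eq_univ_of_forall fun x => mem_iUnion.2 (hcov x))
  have hEc : ∀ i, IsClosed (Subtype.val '' E i) := fun i =>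
    hX₀.isClosedEmbedding_subtypeVal.isClosedMap _ (hE2 i)
  obtain ⟨K, hK1, hK2, hK3⟩ := exists_iUnion_eq_closed_subset (u := fun i => (Subtype.val '' E i)ᶜ)
    (fun i => (hEc i).isOpen_compl) (fun _ => toFinite _) (eq_univ_of_forall fun x => by
      by_contra h
      rw [mem_iUnion] at h
      push Not at h
      simp only [notMem_compl_iff] at h
      let i₀ := Classical.arbitrary ι
      obtain ⟨y, -, rfl⟩ := h i₀
      obtain ⟨i, hi⟩ := hempty y
      obtain ⟨z, hz, hzy⟩ := h i
      exact hi (Subtype.ext hzy ▸ hE3 i hz))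
  refine ⟨E, fun i => (K i)ᶜ, hE3, fun x => mem_iUnion.1 (hE1 ▸ mem_univ x),
    fun i => (hK2 i).isOpen_compl, fun i x hx hK => hK3 i hK ⟨x, hx, rfl⟩, fun x => ?_⟩
  obtain ⟨i, hi⟩ := mem_iUnion.1 (hK1 ▸ mem_univ x)
  exact ⟨i, fun h => h hi⟩

end Covering

namespace Covering

lemma isLowerSet_filter_sd {V : Type*} (F : Set (Finset V)) (P : Finset V → Prop) :
    IsLowerSet {c | c ∈ sd F ∧ ∀ σ ∈ c, P σ} := fun _ _ h hc =>
  ⟨isLowerSet_sd F h hc.1, fun σ hσ => hc.2 σ (h hσ)⟩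

/-- The two partial primitives of the cocycle used in the inductive step. -/
lemma HopfData.exists_primitives {m : ℕ} (hm : 1 ≤ m) {X V : Type} [TopologicalSpace X]
    [Finite V] (H : HopfData (m + 1) X V) (hstar : H.Star) (g : Finset V → V)
    (hg : ∀ σ, σ.Nonempty → g σ ∈ σ)
    (hg0 : ∀ σ, (∃ v ∈ σ, H.l v = 0) → g σ ∈ σ ∧ H.l (g σ) = 0) (L T : Finset V → Prop)
    (hL : ∀ σ, L σ ↔ ∀ v ∈ σ, v ∈ H.N ∧ H.l v ≠ 0)
    (hT : ∀ σ, T σ ↔ (L σ ∨ (σ.card ≤ m + 1 ∧ ¬∃ v ∈ σ, v ∈ H.I ∧ H.l v = 0))) :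
    ∃ βp βm : (Fin (m + 1) → Finset V) → ℤ,
      (∀ s, Tup {c | c ∈ sd H.F ∧ ∀ σ ∈ c, L σ} s →
        βp s = kappa m fun j => dropZero (H.l (g (s j)))) ∧
      (∀ s, Tup {c | c ∈ sd H.F ∧ ∀ σ ∈ c, T σ} s → D βp s = H.w (g ∘ s)) ∧
      (∀ s, Tup {c | c ∈ sd H.F ∧ ∀ σ ∈ c, ¬T σ ∧ (∀ v ∈ σ, v ∈ H.N) ∧ ∃ v ∈ σ, H.l v = 0} s →
        βm s = 0) ∧
      (∀ s, Tup {c | c ∈ sd H.F ∧ ∀ σ ∈ c, ¬T σ} s → D βm s = H.w (g ∘ s)) := by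
  have hcoc : ∀ P : Finset V → Prop, ∀ s : Fin (m + 3) → Finset V,
      Tup {c | c ∈ sd H.F ∧ ∀ σ ∈ c, P σ} s →
      D (fun t : Fin (m + 2) → Finset V => H.w (g ∘ t)) s = 0 := by
    intro P s hs
    rw [D_comp]
    exact H.cocycle _ ((hs.mono fun c hc => hc.1).comp_choice hg)
  have hcardF : ∀ c ∈ sd H.F, ∀ σ ∈ c, 1 ≤ σ.card ∧ σ.card ≤ m + 3 := fun c hc σ hσ =>
    ⟨Finset.card_pos.2 (hc.1 σ hσ).2, H.card_le σ (hc.1 σ hσ).1⟩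
  obtain ⟨βp, h1, h2⟩ := extend_cochain (m + 1) {c | c ∈ sd H.F ∧ ∀ σ ∈ c, T σ}
    {c | c ∈ sd H.F ∧ ∀ σ ∈ c, L σ} (isLowerSet_filter_sd _ _) (isLowerSet_filter_sd _ _)
    (fun c hc => ⟨hc.1, fun σ hσ => (hT σ).2 (Or.inl (hc.2 σ hσ))⟩)
    (fun t => H.w (g ∘ t)) (hcoc _) (fun s => kappa m fun j => dropZero (H.l (g (s j))))
    (by
      intro s hs
      have hsT := (hs.mono fun c hc => hc.1).comp_choice hg
      obtain ⟨c, hc, hsc⟩ := hs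
      have hl : ∀ j, g (s j) ∈ H.N ∧ H.l (g (s j)) ≠ 0 := fun j =>
        (hL _).1 (hc.2 _ (hsc j)) _ (hg _ (hc.1.1 _ (hsc j)).2)
      rw [H.standard _ hsT fun j => (hl j).1]
      have e : H.l ∘ g ∘ s = fun j => (dropZero (H.l (g (s j)))).succ := by
        funext j
        exact (succ_dropZero (hl j).2).symm
      rw [e, kappa_succ]
      rfl)
    (by
      intro c hc hcM
      have hne : c.Nonempty := by
        rw [Finset.nonempty_iff_ne_empty]
        rintro rfl
        exact hcM ⟨hc.1, by simp⟩
      obtain ⟨τ, hτ, htop⟩ := exists_top_of_mem_sd hc.1 hne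
      have hτL : ¬L τ := fun h => hcM ⟨hc.1, fun σ hσ => (hL σ).2 fun v hv =>
        (hL τ).1 h v (htop σ hσ hv)⟩
      have hτc : τ.card ≤ m + 1 := (((hT τ).1 (hc.2 τ hτ)).resolve_left hτL).1
      have := card_le_of_mem_sd hc.1 (a := 1) (b := m + 1) fun σ hσ =>
        ⟨(hcardF c hc.1 σ hσ).1, (Finset.card_le_card (htop σ hσ)).trans hτc⟩
      omega)
  obtain ⟨βm, h3, h4⟩ := extend_cochain (m + 1) {c | c ∈ sd H.F ∧ ∀ σ ∈ c, ¬T σ}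
    {c | c ∈ sd H.F ∧ ∀ σ ∈ c, ¬T σ ∧ (∀ v ∈ σ, v ∈ H.N) ∧ ∃ v ∈ σ, H.l v = 0}
    (isLowerSet_filter_sd _ _) (isLowerSet_filter_sd _ _)
    (fun c hc => ⟨hc.1, fun σ hσ => (hc.2 σ hσ).1⟩)
    (fun t => H.w (g ∘ t)) (hcoc _) (fun _ => 0)
    (by
      intro s hs
      have hsT := (hs.mono fun c hc => hc.1).comp_choice hg
      obtain ⟨c, hc, hsc⟩ := hs
      have hl : ∀ j, g (s j) ∈ H.N ∧ H.l (g (s j)) = 0 := fun j => by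
        have h := hg0 _ (hc.2 _ (hsc j)).2.2
        exact ⟨(hc.2 _ (hsc j)).2.1 _ h.1, h.2⟩
      rw [H.standard _ hsT fun j => (hl j).1, kappa_eq_zero 0 (hl 0).2]
      exact D_eq_zero fun _ => rfl)
    (by
      intro c hc hcM
      have := card_le_of_mem_sd hc.1 (a := m + 2) (b := m + 3) fun ρ hρ =>
        ⟨by
          by_contra hlt
          obtain ⟨τ, hτ, hbot⟩ := exists_bot_of_mem_sd hc.1 ⟨ρ, hρ⟩
          have hτc : τ.card ≤ m + 1 := by
            have := Finset.card_le_card (hbot ρ hρ)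
            omega
          have hZ : ∃ v ∈ τ, v ∈ H.I ∧ H.l v = 0 := by
            by_contra h
            exact hc.2 τ hτ ((hT τ).2 (Or.inr ⟨hτc, h⟩))
          obtain ⟨v, hv, hvI, hv0⟩ := hZ
          exact hcM ⟨hc.1, fun σ hσ => ⟨hc.2 σ hσ,
            hstar σ (hc.1.1 σ hσ).1 ⟨v, hbot σ hσ hv, hvI⟩, v, hbot σ hσ hv, hv0⟩⟩,
        (hcardF c hc.1 ρ hρ).2⟩
      omega)
  exact ⟨βp, βm, h1, h2, h3, h4⟩

lemma image_mem_of_tup {V : Type*} [DecidableEq V] {F : Set (Finset V)} (hF : IsLowerSet F) {k : ℕ}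
    {s : Fin k → V} (hs : Tup F s) : Finset.univ.image s ∈ F := by
  obtain ⟨σ, hσ, h⟩ := hs
  refine hF (fun v hv => ?_) hσ
  obtain ⟨j, -, rfl⟩ := Finset.mem_image.1 hv
  exact h j

/-- A tuple of flags is contained in one of its members. -/
lemma exists_top_of_tup {V : Type*} {F : Set (Finset V)} {k : ℕ} {s : Fin (k + 1) → Finset V}
    (hs : Tup (sd F) s) : ∃ j₀, ∀ j, s j ⊆ s j₀ := by
  classical
  obtain ⟨τ, hτ, htop⟩ := exists_top_of_mem_sd (image_mem_of_tup (isLowerSet_sd F) hs)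
    ⟨s 0, Finset.mem_image_of_mem _ (Finset.mem_univ _)⟩
  obtain ⟨j₀, -, rfl⟩ := Finset.mem_image.1 hτ
  exact ⟨j₀, fun j => htop _ (Finset.mem_image_of_mem _ (Finset.mem_univ _))⟩

theorem HopfData.solvable_succ_of_star {m : ℕ} (hm : 1 ≤ m)
    (ih : ∀ (X V : Type) [TopologicalSpace X] [NormalSpace X] [Finite V] (H : HopfData m X V),
      H.Solvable)
    {X V : Type} [TopologicalSpace X] [NormalSpace X] [Finite V] [Nonempty V]
    (H : HopfData (m + 1) X V) (hstar : H.Star) : H.Solvable := by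
  classical
  obtain ⟨U', hU'o, hU'c, hU', hnerve'⟩ := exists_sd_cover H.U H.isOpen_U H.cov H.nerve
  obtain ⟨U2, hU2o, hU2c, hU2, hnerve2⟩ := exists_sd_cover U' hU'o hU'c hnerve'
  obtain ⟨g, hg, hg0⟩ := exists_choice fun v => H.l v = 0
  obtain ⟨L, hL⟩ : ∃ L : Finset V → Prop, ∀ σ, L σ ↔ ∀ v ∈ σ, v ∈ H.N ∧ H.l v ≠ 0 :=
    ⟨_, fun _ => Iff.rfl⟩
  obtain ⟨T, hT⟩ : ∃ T : Finset V → Prop, ∀ σ, T σ ↔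
    (L σ ∨ (σ.card ≤ m + 1 ∧ ¬∃ v ∈ σ, v ∈ H.I ∧ H.l v = 0)) := ⟨_, fun _ => Iff.rfl⟩
  obtain ⟨βp, βm, hp1, hp2, hm1, hm2⟩ := H.exists_primitives hm hstar g hg hg0 L T hL hT
  obtain ⟨πp, -, hπp⟩ := exists_choice T
  obtain ⟨πm, -, hπm⟩ := exists_choice fun σ => ¬T σ
  have hIL : ∀ σ, (∀ v ∈ σ, v ∈ H.I) → T σ → L σ := by
    intro σ hσ h
    refine ((hT σ).1 h).elim id fun h => (hL σ).2 fun v hv => ⟨H.I_subset (hσ v hv), fun h0 => ?_⟩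
    exact h.2 ⟨v, hv, hσ v hv, h0⟩
  have hI0 : ∀ σ, (∀ v ∈ σ, v ∈ H.I) → ¬T σ → ∃ v ∈ σ, H.l v = 0 := by
    intro σ hσ h
    by_contra! h0
    exact h ((hT σ).2 (Or.inl ((hL σ).2 fun v hv => ⟨H.I_subset (hσ v hv), h0 v hv⟩)))
  let mixed : Finset (Finset V) → Prop := fun c => (∃ σ ∈ c, T σ) ∧ ∃ σ ∈ c, ¬T σ
  let I2 : Set (Finset (Finset V)) := {c | ∀ σ ∈ c, ∀ v ∈ σ, v ∈ H.I}
  let F2 : Set (Finset (Finset (Finset V))) := {C | C ∈ sd (sd H.F) ∧ ∀ c ∈ C, mixed c}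
  let X₀ : Set X := {x | ∀ c, x ∈ U2 c → mixed c}
  let l2 : Finset (Finset V) → Fin (m + 2) := fun c => dropZero (H.l (g (πp c)))
  have hX₀ : IsClosed X₀ := by
    have : X₀ᶜ = ⋃ c, ⋃ (_ : ¬mixed c), U2 c := by
      ext x
      simp only [X₀, mem_compl_iff, mem_ofPred_eq, not_forall, mem_iUnion, exists_prop]
      simp only [and_comm]
    rw [← isOpen_compl_iff, this]
    exact isOpen_iUnion fun c => isOpen_iUnion fun _ => hU2o c
  have : NormalSpace X₀ := hX₀.isClosedEmbedding_subtypeVal.normalSpace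
  -- tuples of mixed flags, projected to a common flag
  have hflag : ∀ {k : ℕ} (s : Fin (k + 1) → Finset (Finset V)), Tup F2 s →
      ∃ j₀, (∀ j, s j ⊆ s j₀) ∧ s j₀ ∈ sd H.F ∧ ∀ j, mixed (s j) := by
    intro k s hs
    obtain ⟨j₀, hj₀⟩ := exists_top_of_tup (hs.mono fun C hC => hC.1)
    obtain ⟨C, hC, hsC⟩ := hs
    exact ⟨j₀, hj₀, (hC.1.1 _ (hsC j₀)).1, fun j => hC.2 _ (hsC j)⟩
  let H2 : HopfData m X₀ (Finset (Finset V)) :=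
    { F := F2
      lower := isLowerSet_filter_sd _ _
      card_le := by
        intro C hC
        have := card_le_of_mem_sd hC.1 (a := 2) (b := m + 3) fun c hc => by
          constructor
          · obtain ⟨⟨σ, hσ, h1⟩, ρ, hρ, h2⟩ := hC.2 c hc
            refine Finset.one_lt_card.2 ⟨σ, hσ, ρ, hρ, ?_⟩
            rintro rfl
            exact h2 h1
          · have hcF := (hC.1.1 c hc).1
            have := card_le_of_mem_sd hcF (a := 1) (b := m + 3) fun σ hσ =>
              ⟨Finset.card_pos.2 (hcF.1 σ hσ).2, H.card_le σ (hcF.1 σ hσ).1⟩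
            omega
        omega
      U := fun c => Subtype.val ⁻¹' U2 c
      isOpen_U := fun c => (hU2o c).preimage continuous_subtype_val
      cov := fun x => hU2c x
      nerve := fun C ⟨x, hx⟩ => ⟨hnerve2 C ⟨x, hx⟩, fun c hc => x.2 c (hx c hc)⟩
      I := I2
      N := I2
      I_subset := Subset.rfl
      l := l2
      not_full := by
        intro C hC hCI
        rcases C.eq_empty_or_nonempty with rfl | hne
        · exact ⟨0, by simp⟩
        obtain ⟨c, hc, hctop⟩ := exists_top_of_mem_sd hC.1 hne
        obtain ⟨⟨σ, hσ, h1⟩, ρ, hρ, h2⟩ := hC.2 c hc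
        have hcF := (hC.1.1 c hc).1
        obtain ⟨τ, hτ, htop⟩ := exists_top_of_mem_sd hcF ⟨σ, hσ⟩
        obtain ⟨i, hi⟩ := H.not_full τ (hcF.1 τ hτ).1 (hCI c hc τ hτ)
        rcases Fin.eq_zero_or_eq_succ i with rfl | ⟨i, rfl⟩
        · obtain ⟨v, hv, hv0⟩ := hI0 ρ (hCI c hc ρ hρ) h2
          exact absurd hv0 (hi v (htop ρ hρ hv))
        · refine ⟨i, fun c' hc' hl => ?_⟩
          have hπ := hπp c' (hC.2 c' hc').1
          have hLπ := hIL _ (hCI c' hc' _ hπ.1) hπ.2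
          have hgm := hg (πp c') (hcF.1 _ (hctop c' hc' hπ.1)).2
          have h0 := ((hL _).1 hLπ _ hgm).2
          refine hi _ (htop _ (hctop c' hc' hπ.1) hgm) ?_
          rw [← succ_dropZero h0, ← hl]
      w := fun s => βp (πp ∘ s) - βm (πm ∘ s) - prism πm πp (fun t => H.w (g ∘ t)) s
      cocycle := by
        intro s hs
        obtain ⟨j₀, htop, hcF, hmix⟩ := hflag s hs
        have e : (fun s : Fin (m + 1) → Finset (Finset V) =>
            βp (πp ∘ s) - βm (πm ∘ s) - prism πm πp (fun t => H.w (g ∘ t)) s) =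
            (fun s => βp (πp ∘ s)) - (fun s => βm (πm ∘ s)) -
              prism πm πp (fun t => H.w (g ∘ t)) := rfl
        have h1 := hp2 (πp ∘ s) ⟨(s j₀).filter T,
          ⟨isLowerSet_sd _ (Finset.filter_subset _ _) hcF, fun σ hσ => (Finset.mem_filter.1 hσ).2⟩,
          fun j => Finset.mem_filter.2 ⟨htop j (hπp _ (hmix j).1).1, (hπp _ (hmix j).1).2⟩⟩
        have h2 := hm2 (πm ∘ s) ⟨(s j₀).filter fun σ => ¬T σ,
          ⟨isLowerSet_sd _ (Finset.filter_subset _ _) hcF, fun σ hσ => (Finset.mem_filter.1 hσ).2⟩,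
          fun j => Finset.mem_filter.2 ⟨htop j (hπm _ (hmix j).2).1, (hπm _ (hmix j).2).2⟩⟩
        have h3 := D_prism πm πp (fun t : Fin (m + 2) → Finset V => H.w (g ∘ t)) s
        have h4 : prism πm πp (D fun t : Fin (m + 2) → Finset V => H.w (g ∘ t)) s = 0 := by
          refine prism_eq_zero _ _ _ _ fun t _ ht => ?_
          rw [D_comp]
          refine H.cocycle _ (Tup.comp_choice hg ⟨s j₀, hcF, fun j => ?_⟩)
          obtain ⟨i, hi | hi⟩ := ht j
          · rw [hi]; exact htop i (hπm _ (hmix i).2).1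
          · rw [hi]; exact htop i (hπp _ (hmix i).1).1
        rw [e, D_sub, D_sub, Pi.sub_apply, Pi.sub_apply, D_comp, D_comp]
        rw [h1, h2]
        rw [h4] at h3
        linarith
      standard := by
        intro s hs hsI
        obtain ⟨j₀, htop, hcF, hmix⟩ := hflag s hs
        have hI : ∀ σ ∈ s j₀, ∀ v ∈ σ, v ∈ H.I := hsI j₀
        have h1 := hp1 (πp ∘ s) ⟨(s j₀).filter T,
          ⟨isLowerSet_sd _ (Finset.filter_subset _ _) hcF, fun σ hσ =>
            hIL _ (hI σ (Finset.mem_filter.1 hσ).1) (Finset.mem_filter.1 hσ).2⟩,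
          fun j => Finset.mem_filter.2 ⟨htop j (hπp _ (hmix j).1).1, (hπp _ (hmix j).1).2⟩⟩
        have h2 := hm1 (πm ∘ s) ⟨(s j₀).filter fun σ => ¬T σ,
          ⟨isLowerSet_sd _ (Finset.filter_subset _ _) hcF, fun σ hσ =>
            ⟨(Finset.mem_filter.1 hσ).2, fun v hv =>
              H.I_subset (hI σ (Finset.mem_filter.1 hσ).1 v hv),
              hI0 _ (hI σ (Finset.mem_filter.1 hσ).1) (Finset.mem_filter.1 hσ).2⟩⟩,
          fun j => Finset.mem_filter.2 ⟨htop j (hπm _ (hmix j).2).1, (hπm _ (hmix j).2).2⟩⟩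
        have h4 : prism πm πp (fun t : Fin (m + 2) → Finset V => H.w (g ∘ t)) s = 0 := by
          refine prism_eq_zero _ _ _ _ fun t ht0 ht => ?_
          have htm : ∀ j, t j ∈ s j₀ := by
            intro j
            obtain ⟨i, hi | hi⟩ := ht j
            · rw [hi]; exact htop i (hπm _ (hmix i).2).1
            · rw [hi]; exact htop i (hπp _ (hmix i).1).1
          rw [H.standard _ (Tup.comp_choice hg ⟨s j₀, hcF, htm⟩) fun j =>
            H.I_subset (hI _ (htm j) _ (hg _ (hcF.1 _ (htm j)).2))]
          refine kappa_eq_zero 0 ?_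
          have hm0 := hπm _ (hmix 0).2
          have := hg0 _ (hI0 _ (hI _ (htop 0 hm0.1)) hm0.2)
          rw [← ht0] at this
          exact this.2
        rw [h1, h2, h4, sub_zero, sub_zero]
        rfl }
  obtain ⟨W, hWo, hWc, hW0, hW⟩ := ih X₀ _ H2
  obtain ⟨E, O, hEW, hEc, hOo, hEO, hO⟩ := exists_open_extension hX₀ W hWo hWc hW0
  let G : Fin (m + 3) → Set X := fun i => {x | (∀ v, x ∈ H.U v → v ∈ H.I) → ∃ v, x ∈ H.U v ∧ H.l v = i}
  have hGo : ∀ i, IsOpen (G i) := by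
    intro i
    have : G i = (⋃ v, ⋃ (_ : v ∉ H.I), H.U v) ∪ ⋃ v, ⋃ (_ : H.l v = i), H.U v := by
      ext x
      simp only [G, mem_ofPred_eq, mem_union, mem_iUnion, exists_prop]
      constructor
      · intro h
        by_cases h' : ∀ v, x ∈ H.U v → v ∈ H.I
        · obtain ⟨v, hv, hi⟩ := h h'
          exact Or.inr ⟨v, hi, hv⟩
        · push Not at h'
          obtain ⟨v, hv, hi⟩ := h'
          exact Or.inl ⟨v, hi, hv⟩
      · rintro (⟨v, hi, hv⟩ | ⟨v, hi, hv⟩) h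
        · exact absurd (h v hv) hi
        · exact ⟨v, hv, hi⟩
    rw [this]
    exact (isOpen_iUnion fun v => isOpen_iUnion fun _ => H.isOpen_U v).union
      (isOpen_iUnion fun v => isOpen_iUnion fun _ => H.isOpen_U v)
  have hmem2 : ∀ {c x}, x ∈ U2 c → ∀ σ ∈ c, σ.Nonempty ∧ ∀ v ∈ σ, x ∈ H.U v := fun hx σ hσ =>
    hU' σ _ ((hU2 _ _ hx).2 σ hσ)
  -- the label of a flag near `I`
  have hlabel : ∀ {c x i}, x ∈ U2 c → (∃ σ ∈ c, T σ) → l2 c = i →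
      (∀ v, x ∈ H.U v → v ∈ H.I) → ∃ v, x ∈ H.U v ∧ H.l v = i.succ := by
    intro c x i hx hc hl hI
    have hπ := hπp c hc
    have hm := hmem2 hx _ hπ.1
    have hLπ := hIL _ (fun v hv => hI v (hm.2 v hv)) hπ.2
    have hgm := hg _ hm.1
    refine ⟨g (πp c), hm.2 _ hgm, ?_⟩
    rw [← succ_dropZero ((hL _).1 hLπ _ hgm).2, ← hl]
  let W' : Fin (m + 3) → Set X := Fin.cases (⋃ c, ⋃ (_ : ∀ σ ∈ c, ¬T σ), U2 c)
    fun i => (O i ∩ G i.succ) ∪ ⋃ c, ⋃ (_ : (∀ σ ∈ c, T σ) ∧ l2 c = i), U2 c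
  have hW'0 : ∀ x, x ∈ W' 0 ↔ ∃ c, (∀ σ ∈ c, ¬T σ) ∧ x ∈ U2 c := by
    intro x
    simp only [W', Fin.cases_zero, mem_iUnion, exists_prop]
  have hW's : ∀ i x, x ∈ W' (Fin.succ i) ↔ (x ∈ O i ∧ x ∈ G i.succ) ∨
      ∃ c, ((∀ σ ∈ c, T σ) ∧ l2 c = i) ∧ x ∈ U2 c := by
    intro i x
    simp only [W', Fin.cases_succ, mem_iUnion, exists_prop, mem_union, mem_inter_iff]
  refine ⟨W', ?_, ?_, ?_, ?_⟩
  · intro i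
    refine Fin.cases ?_ (fun i => ?_) i
    · exact isOpen_iUnion fun c => isOpen_iUnion fun _ => hU2o c
    · exact ((hOo i).inter (hGo _)).union (isOpen_iUnion fun c => isOpen_iUnion fun _ => hU2o c)
  · intro x
    by_cases hx : x ∈ X₀
    · obtain ⟨i, hi⟩ := hEc ⟨x, hx⟩
      refine ⟨i.succ, (hW's i x).2 (Or.inl ⟨hEO i _ hi, fun hI => ?_⟩)⟩
      obtain ⟨c, hc, hl⟩ := hW i _ (hEW i hi) fun c hc σ hσ v hv => hI v ((hmem2 hc σ hσ).2 v hv)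
      exact hlabel hc (hx c hc).1 hl hI
    · obtain ⟨c, hc, hmix⟩ : ∃ c, x ∈ U2 c ∧ ¬mixed c := by
        simpa [X₀] using hx
      by_cases h : ∃ σ ∈ c, T σ
      · refine ⟨(l2 c).succ, (hW's _ x).2 (Or.inr ⟨c, ⟨fun σ hσ => ?_, rfl⟩, hc⟩)⟩
        by_contra hn
        exact hmix ⟨h, σ, hσ, hn⟩
      · push Not at h
        exact ⟨0, (hW'0 x).2 ⟨c, h, hc⟩⟩
  · intro x
    by_contra! h
    obtain ⟨c, hc, hxc⟩ := (hW'0 x).1 (h 0)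
    obtain ⟨i, hi⟩ := hO x
    rcases (hW's i x).1 (h i.succ) with h | ⟨c', ⟨hc', -⟩, hxc'⟩
    · exact hi h.1
    · have := hnerve2 {c, c'} ⟨x, by simp [hxc, hxc']⟩
      obtain ⟨σ, hσ⟩ := (hU2 c x hxc).1
      obtain ⟨σ', hσ'⟩ := (hU2 c' x hxc').1
      rcases this.2 c (by simp) c' (by simp) with h | h
      · exact hc σ hσ (hc' σ (h hσ))
      · exact hc σ' (h hσ') (hc' σ' hσ')
  · intro i x hx hI
    rcases Fin.eq_zero_or_eq_succ i with rfl | ⟨i, rfl⟩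
    · obtain ⟨c, hc, hxc⟩ := (hW'0 x).1 hx
      obtain ⟨σ, hσ⟩ := (hU2 c x hxc).1
      have hm := hmem2 hxc σ hσ
      obtain ⟨v, hv, hv0⟩ := hI0 σ (fun v hv => hI v (hm.2 v hv)) (hc σ hσ)
      exact ⟨v, hm.2 v hv, hv0⟩
    · rcases (hW's i x).1 hx with h | ⟨c, ⟨hc, hl⟩, hxc⟩
      · exact h.2 hI
      · obtain ⟨σ, hσ⟩ := (hU2 c x hxc).1
        exact hlabel hxc ⟨σ, hσ, hc σ hσ⟩ hl hI

/-- A combinatorial form of Hopf's theorem. -/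
theorem HopfData.solvable (m : ℕ) : ∀ (X V : Type) [TopologicalSpace X] [NormalSpace X] [Finite V]
    (H : HopfData m X V), H.Solvable := by
  induction m with
  | zero => exact fun X V _ _ _ H => H.solvable_zero
  | succ m ih =>
    rcases m.eq_zero_or_pos with rfl | hm
    · exact fun X V _ _ _ H => H.solvable_one
    · intro X V _ _ _ H
      rcases isEmpty_or_nonempty X with hX | ⟨⟨x⟩⟩
      · exact solvable_of_isEmpty H
      · have : Nonempty V := ⟨(H.cov x).choose⟩
        obtain ⟨H', hs, hH'⟩ := H.exists_star
        exact hH' (H'.solvable_succ_of_star hm ih hs)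

end Covering

namespace Covering

lemma exists_precise_refinement {X κ : Type*} [TopologicalSpace X] {n : ℕ} (h : CovDimLE X n)
    (U : κ → Set X) (hU : ∀ k, IsOpen (U k)) (hcov : ∀ x, ∃ k, x ∈ U k) :
    ∃ V : κ → Set X, (∀ k, IsOpen (V k)) ∧ (∀ x, ∃ k, x ∈ V k) ∧ (∀ k, V k ⊆ U k) ∧
      ∀ σ : Finset κ, (∃ x, ∀ k ∈ σ, x ∈ V k) → σ.card ≤ n + 1 := by
  classical
  obtain ⟨V, hVo, hVc, hVU, hord⟩ := h (range U) (by rintro _ ⟨k, rfl⟩; exact hU k)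
    (by rw [sUnion_range]; exact eq_univ_of_forall fun x => mem_iUnion.2 (hcov x))
  have hr : ∀ v : V, ∃ k, (v : Set X) ⊆ U k := by
    rintro ⟨v, hv⟩
    obtain ⟨_, ⟨k, rfl⟩, hk⟩ := hVU v hv
    exact ⟨k, hk⟩
  choose r hr using hr
  refine ⟨fun k => ⋃ v : V, ⋃ (_ : r v = k), (v : Set X), fun k => ?_, fun x => ?_, fun k => ?_, ?_⟩
  · exact isOpen_iUnion fun v => isOpen_iUnion fun _ => hVo v v.2
  · obtain ⟨v, hv, hx⟩ : x ∈ ⋃₀ V := hVc ▸ mem_univ x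
    exact ⟨r ⟨v, hv⟩, mem_iUnion₂.2 ⟨⟨v, hv⟩, rfl, hx⟩⟩
  · refine iUnion₂_subset fun v hv => ?_
    rw [← hv]
    exact hr v
  · rintro σ ⟨x, hx⟩
    have hx : ∀ k : σ, ∃ v : V, r v = k ∧ x ∈ (v : Set X) := fun k => by
      simpa [and_comm] using hx k k.2
    choose f hf hxf using hx
    have hinj : Injective fun k : σ => (f k : Set X) := fun a b hab => by
      have : f a = f b := Subtype.ext hab
      exact Subtype.ext (by rw [← hf a, ← hf b, this])
    have := hord (Finset.univ.image fun k : σ => (f k : Set X)) (by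
      intro s hs
      obtain ⟨k, -, rfl⟩ := Finset.mem_image.1 (Finset.mem_coe.1 hs)
      exact (f k).2) ⟨x, by
      intro s hs
      obtain ⟨k, -, rfl⟩ := Finset.mem_image.1 (Finset.mem_coe.1 hs)
      exact hxf k⟩
    rwa [Finset.card_image_of_injective _ hinj, Finset.card_univ, Fintype.card_coe] at this

lemma covDimLE_of_indexed {Y : Type*} [TopologicalSpace Y] {n : ℕ}
    (h : ∀ U : Set (Set Y), (∀ u ∈ U, IsOpen u) → ⋃₀ U = univ → ∃ (κ : Type _) (V : κ → Set Y),
      (∀ k, IsOpen (V k)) ∧ (∀ x, ∃ k, x ∈ V k) ∧ (∀ k, (V k).Nonempty → ∃ u ∈ U, V k ⊆ u) ∧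
      ∀ σ : Finset κ, (∃ x, ∀ k ∈ σ, x ∈ V k) → σ.card ≤ n + 1) : CovDimLE Y n := by
  classical
  intro U hU hcov
  obtain ⟨κ, V, hVo, hVc, hVU, hord⟩ := h U hU hcov
  refine ⟨{v | ∃ k, V k = v ∧ v.Nonempty}, ?_, ?_, ?_, ?_⟩
  · rintro _ ⟨k, rfl, -⟩
    exact hVo k
  · refine eq_univ_of_forall fun x => ?_
    obtain ⟨k, hk⟩ := hVc x
    exact ⟨V k, ⟨k, rfl, x, hk⟩, hk⟩
  · rintro _ ⟨k, rfl, hne⟩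
    exact hVU k hne
  · rintro T hT ⟨x, hx⟩
    have : ∀ v : T, ∃ k, V k = v := fun v => by
      obtain ⟨k, hk, -⟩ := hT v.2
      exact ⟨k, hk⟩
    choose f hf using this
    have hinj : Injective f := fun a b hab => Subtype.ext (by rw [← hf a, ← hf b, hab])
    have := hord (Finset.univ.image f) ⟨x, by
      intro k hk
      obtain ⟨v, -, rfl⟩ := Finset.mem_image.1 hk
      rw [hf]
      exact hx v v.2⟩
    rwa [Finset.card_image_of_injective _ hinj, Finset.card_univ, Fintype.card_coe] at this

lemma covDimLE_of_isClosed {X : Type*} [TopologicalSpace X] {n : ℕ} (h : CovDimLE X n)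
    {B : Set X} (hB : IsClosed B) : CovDimLE B n := by
  classical
  refine covDimLE_of_indexed fun U hU hcov => ?_
  have : ∀ u : U, ∃ o : Set X, IsOpen o ∧ Subtype.val ⁻¹' o = (u : Set B) := fun u =>
    isOpen_induced_iff.1 (hU u u.2)
  choose O hOo hO using this
  obtain ⟨V, hVo, hVc, hVU, hord⟩ := exists_precise_refinement h
    (fun k : Option U => k.elim Bᶜ O) (by rintro (_ | u); exacts [hB.isOpen_compl, hOo u]) (by
      intro x
      by_cases hx : x ∈ B
      · obtain ⟨u, hu, hxu⟩ : (⟨x, hx⟩ : B) ∈ ⋃₀ U := hcov ▸ mem_univ _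
        have : (⟨x, hx⟩ : B) ∈ Subtype.val ⁻¹' O ⟨u, hu⟩ := by rw [hO]; exact hxu
        exact ⟨some ⟨u, hu⟩, this⟩
      · exact ⟨none, hx⟩)
  refine ⟨U, fun u => Subtype.val ⁻¹' V (some u),
    fun u => (hVo _).preimage continuous_subtype_val, fun x => ?_, fun u _ => ⟨u, u.2, ?_⟩, ?_⟩
  · obtain ⟨_ | u, hk⟩ := hVc x
    · exact absurd x.2 (hVU none hk)
    · exact ⟨u, hk⟩
  · rw [← hO u]
    exact preimage_mono (hVU (some u))
  · rintro σ ⟨x, hx⟩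
    have := hord (σ.map Embedding.some) ⟨x, fun k hk => by
      obtain ⟨u, hu, rfl⟩ := Finset.mem_map.1 hk
      exact hx u hu⟩
    rwa [Finset.card_map] at this

lemma covDimLE_onePoint {X : Type*} [TopologicalSpace X] {n : ℕ} (h : CovDimLE X n)
    [T2Space X] {B : Set X} [LocallyCompactSpace B] : CovDimLE (OnePoint B) n := by
  classical
  refine covDimLE_of_indexed fun U hU hcov => ?_
  obtain ⟨uinf, huinf, hinf⟩ : OnePoint.infty ∈ ⋃₀ U := hcov ▸ mem_univ (OnePoint.infty (X := B))
  have hK : IsCompact ((↑) ⁻¹' uinfᶜ : Set B) :=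
    (OnePoint.isOpen_iff_of_mem hinf).1 (hU _ huinf) |>.2
  obtain ⟨L, hL, hKL⟩ := exists_compact_superset hK
  obtain ⟨O, hOo, hO⟩ := isOpen_induced_iff.1 (isOpen_interior (s := L))
  have : ∀ u : U, ∃ o : Set X, IsOpen o ∧ Subtype.val ⁻¹' o = ((↑) ⁻¹' (u : Set (OnePoint B)) : Set B) :=
    fun u => isOpen_induced_iff.1 ((hU u u.2).preimage OnePoint.continuous_coe)
  choose P hPo hP using this
  have hKc : IsClosed (Subtype.val '' ((↑) ⁻¹' uinfᶜ : Set B) : Set X) :=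
    (hK.image continuous_subtype_val).isClosed
  by_cases hX : ∀ x : X, x ∈ Subtype.val '' ((↑) ⁻¹' uinfᶜ : Set B) → ∃ u, x ∈ P u ∩ O
  swap
  · exfalso
    push Not at hX
    obtain ⟨_, ⟨b, hb, rfl⟩, h'⟩ := hX
    obtain ⟨u, hu, hbu⟩ : (b : OnePoint B) ∈ ⋃₀ U := hcov ▸ mem_univ _
    refine h' ⟨u, hu⟩ ⟨?_, ?_⟩
    · have : b ∈ ((↑) ⁻¹' u : Set B) := hbu
      rw [← hP ⟨u, hu⟩] at this
      exact this
    · have := hKL hb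
      rw [← hO] at this
      exact this
  obtain ⟨V, hVo, hVc, hVU, hord⟩ := exists_precise_refinement h
    (fun k : Option U => k.elim (Subtype.val '' ((↑) ⁻¹' uinfᶜ : Set B))ᶜ fun u => P u ∩ O)
    (by rintro (_ | u); exacts [hKc.isOpen_compl, (hPo u).inter hOo]) (by
      intro x
      by_cases hx : x ∈ Subtype.val '' ((↑) ⁻¹' uinfᶜ : Set B)
      · obtain ⟨u, hu⟩ := hX x hx
        exact ⟨some u, hu⟩
      · exact ⟨none, hx⟩)
  have hsome : ∀ u (b : B), (b : X) ∈ V (some u) → b ∈ L := fun u b hb => by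
    have : b ∈ Subtype.val ⁻¹' O := (hVU (some u) hb).2
    rw [hO] at this
    exact interior_subset this
  have hopen : ∀ k, IsOpen ((↑) '' (Subtype.val ⁻¹' V k : Set B) : Set (OnePoint B)) := fun k =>
    OnePoint.isOpenEmbedding_coe.isOpenMap _ ((hVo k).preimage continuous_subtype_val)
  have hmem : ∀ k (b : B), (b : OnePoint B) ∈ ((↑) '' (Subtype.val ⁻¹' V k : Set B) :
      Set (OnePoint B)) ↔ (b : X) ∈ V k := fun k b => by
    simp
  let W : Option U → Set (OnePoint B) := fun k =>
    ((↑) '' (Subtype.val ⁻¹' V k : Set B)) ∪ k.elim ((↑) '' L)ᶜ fun _ => ∅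
  refine ⟨Option U, W, ?_, ?_, ?_, ?_⟩
  · rintro (_ | u)
    · exact (hopen none).union (OnePoint.isOpen_compl_image_coe.2 ⟨hL.isClosed, hL⟩)
    · exact (hopen (some u)).union isOpen_empty
  · intro y
    by_cases hy : y ∈ ((↑) '' L : Set (OnePoint B))
    · obtain ⟨b, hb, rfl⟩ := hy
      obtain ⟨k, hk⟩ := hVc b
      exact ⟨k, Or.inl ((hmem k b).2 hk)⟩
    · exact ⟨none, Or.inr hy⟩
  · rintro (_ | u) -
    · refine ⟨uinf, huinf, union_subset ?_ ?_⟩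
      · rintro _ ⟨b, hb, rfl⟩
        by_contra hbu
        exact hVU none hb ⟨b, hbu, rfl⟩
      · intro y hy
        by_contra hyu
        induction y using OnePoint.rec with
        | infty => exact hyu hinf
        | coe b => exact hy ⟨b, interior_subset (hKL hyu), rfl⟩
    · refine ⟨u, u.2, union_subset ?_ (empty_subset _)⟩
      rintro _ ⟨b, hb, rfl⟩
      have : b ∈ Subtype.val ⁻¹' P u := (hVU (some u) hb).1
      rw [hP] at this
      exact this
  · rintro σ ⟨y, hy⟩
    by_cases hyL : y ∈ ((↑) '' L : Set (OnePoint B))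
    · obtain ⟨b, hb, rfl⟩ := hyL
      refine hord σ ⟨b, fun k hk => ?_⟩
      rcases hy k hk with h | h
      · exact (hmem k b).1 h
      · rcases k with _ | u
        · exact absurd ⟨b, hb, rfl⟩ h
        · exact h.elim
    · have : σ ⊆ {none} := by
        intro k hk
        rcases k with _ | u
        · simp
        · rcases hy _ hk with ⟨b, hb, rfl⟩ | h
          · exact absurd ⟨b, hsome u b hb, rfl⟩ hyL
          · exact h.elim
      have := Finset.card_le_card this
      simp at this
      omega

end Covering

namespace Covering

lemma exists_barycentric_refinement {Y : Type*} [TopologicalSpace Y] [CompactSpace Y] [NormalSpace Y]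
    {U : Set (Set Y)} (hU : AS.IsOpenCover U) : ∃ W : Y → Set Y, (∀ x, IsOpen (W x)) ∧
      (∀ x, x ∈ W x) ∧ ∀ y, ∃ u ∈ U, ∀ x, y ∈ W x → W x ⊆ u := by
  obtain ⟨T, hTU, hTf, hTc⟩ := isCompact_univ.elim_finite_subcover_image (b := U) (c := id)
    hU.1 (by simp only [id, ← sUnion_eq_biUnion, hU.2, subset_refl])
  have : Finite T := hTf
  obtain ⟨F, hF, hFc, hFT⟩ := exists_iUnion_eq_closed_subset (u := fun t : T => (t : Set Y))
    (fun t => hU.1 t (hTU t.2)) (fun _ => Set.toFinite _)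
    (by rw [← sUnion_eq_iUnion, sUnion_eq_biUnion]; exact univ_subset_iff.1 hTc)
  refine ⟨fun x => (⋂ t : T, {y | x ∈ F t → y ∈ (t : Set Y)}) ∩ ⋂ t : T, {y | x ∉ F t → y ∉ F t},
    fun x => IsOpen.inter (isOpen_iInter_of_finite fun t => ?_)
      (isOpen_iInter_of_finite fun t => ?_), fun x => ⟨?_, ?_⟩, fun y => ?_⟩
  · by_cases h : x ∈ F t
    · simpa [h] using hU.1 t (hTU t.2)
    · simp [h]
  · by_cases h : x ∈ F t
    · simp [h]
    · simp only [h, not_false_eq_true, forall_const]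
      exact (hFc t).isOpen_compl
  · exact mem_iInter.2 fun t h => hFT t h
  · exact mem_iInter.2 fun t h => h
  · obtain ⟨t, ht⟩ := mem_iUnion.1 (hF ▸ mem_univ y : y ∈ ⋃ t, F t)
    refine ⟨t, hTU t.2, fun x hx z hz => mem_iInter.1 hz.1 t ?_⟩
    by_contra h
    exact mem_iInter.1 hx.2 t h ht

lemma exists_pointed_cover {Y : Type} [TopologicalSpace Y] [CompactSpace Y] [NormalSpace Y] {n : ℕ}
    (h : CovDimLE Y n) {U : Set (Set Y)} (hU : AS.IsOpenCover U) :
    ∃ (ι : Type) (_ : Finite ι) (V : ι → Set Y) (p : ι → Y), (∀ v, IsOpen (V v)) ∧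
      (∀ x, ∃ v, x ∈ V v) ∧ (∀ v, p v ∈ V v) ∧ (∀ x, ∃ u ∈ U, ∀ v, x ∈ V v → V v ⊆ u) ∧
      ∀ σ : Finset ι, (∃ x, ∀ v ∈ σ, x ∈ V v) → σ.card ≤ n + 1 := by
  classical
  obtain ⟨W, hWo, hxW, hW⟩ := exists_barycentric_refinement hU
  obtain ⟨V, hVo, hVc, hVW, hord⟩ := exists_precise_refinement h W hWo fun x => ⟨x, hxW x⟩
  obtain ⟨T, hT⟩ := isCompact_univ.elim_finite_subcover V hVo fun x _ => mem_iUnion.2 (hVc x)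
  refine ⟨{v : T // (V v).Nonempty}, inferInstance, fun v => V v.1, fun v => v.2.choose,
    fun v => hVo _, fun x => ?_, fun v => v.2.choose_spec, fun x => ?_, ?_⟩
  · obtain ⟨v, hv, hx⟩ := mem_iUnion₂.1 (hT (mem_univ x))
    exact ⟨⟨⟨v, hv⟩, x, hx⟩, hx⟩
  · obtain ⟨u, hu, hux⟩ := hW x
    exact ⟨u, hu, fun v hv => (hVW _).trans (hux v.1 (hVW _ hv))⟩
  · rintro σ ⟨x, hx⟩
    have hinj : Injective fun v : {v : T // (V v).Nonempty} => (v.1 : Y) :=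
      Subtype.val_injective.comp Subtype.val_injective
    rw [← Finset.card_image_of_injective σ hinj]
    refine hord _ ⟨x, fun k hk => ?_⟩
    obtain ⟨v, hv, rfl⟩ := Finset.mem_image.1 hk
    exact hx v hv

/-- The nerve of a family of sets. -/
def nerveOf {Y ι : Type*} (V : ι → Set Y) : Set (Finset ι) := {σ | ∃ x, ∀ v ∈ σ, x ∈ V v}

lemma isLowerSet_nerveOf {Y ι : Type*} (V : ι → Set Y) : IsLowerSet (nerveOf V) := by
  rintro σ τ h ⟨x, hx⟩
  exact ⟨x, fun v hv => hx v (h hv)⟩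

lemma Tup.nerveOf {Y ι : Type*} {V : ι → Set Y} {k : ℕ} {s : Fin k → ι} (h : Tup (nerveOf V) s) :
    ∃ x, ∀ j, x ∈ V (s j) := by
  obtain ⟨σ, ⟨x, hx⟩, hs⟩ := h
  exact ⟨x, fun j => hx _ (hs j)⟩

lemma tup_nerveOf {Y ι : Type*} [DecidableEq ι] {V : ι → Set Y} {k : ℕ} {s : Fin k → ι} {x : Y}
    (h : ∀ j, x ∈ V (s j)) : Tup (Covering.nerveOf V) s :=
  ⟨Finset.univ.image s, ⟨x, by simpa using h⟩, by simp⟩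

theorem exists_primitive_of_covDimLE {Y : Type} [TopologicalSpace Y] [CompactSpace Y]
    [NormalSpace Y] {n m : ℕ} (h : CovDimLE Y n) (hnm : n < m) (φ : (Fin (m + 1) → Y) → ℤ)
    {U : Set (Set Y)} (hU : AS.IsOpenCover U) (hφ : ∀ s, AS.Small U s → D φ s = 0) :
    ∃ ψ : (Fin m → Y) → ℤ, ∃ O, AS.IsOpenCover O ∧ ∀ s, AS.Small O s → φ s = D ψ s := by
  classical
  obtain ⟨ι, _, V, p, hVo, hVc, hp, hVU, hord⟩ := exists_pointed_cover h hU
  obtain ⟨F, hF, hFc, hFV⟩ := exists_iUnion_eq_closed_subset hVo (fun _ => Set.toFinite _)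
    (eq_univ_of_forall fun x => mem_iUnion.2 (hVc x))
  have hF : ∀ x, ∃ v, x ∈ F v := fun x => mem_iUnion.1 (hF ▸ mem_univ x)
  choose r hr using hF
  obtain ⟨β, -, hβ⟩ := extend_cochain m (nerveOf V) ∅ (isLowerSet_nerveOf V) isLowerSet_empty
    (empty_subset _) (fun s => φ (p ∘ s)) (by
      intro s hs
      rw [D_comp]
      obtain ⟨x, hx⟩ := hs.nerveOf
      obtain ⟨u, hu, hxu⟩ := hVU x
      exact hφ _ ⟨u, hu, fun j => hxu _ (hx j) (hp _)⟩) 0 (by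
      rintro s ⟨σ, hσ, -⟩
      exact hσ.elim) (fun σ hσ _ => (hord σ hσ).trans hnm)
  let O : Y → Set Y := fun x => ⋂ v : ι, {y | x ∉ F v → y ∉ F v}
  have hO : ∀ x y, y ∈ O x → ∀ v, y ∈ F v → x ∈ F v := fun x y hy v hv => by
    by_contra h'
    exact mem_iInter.1 hy v h' hv
  refine ⟨(fun s => β (r ∘ s)) - prism id (p ∘ r) φ, range O, ⟨?_, ?_⟩, ?_⟩
  · rintro _ ⟨x, rfl⟩
    refine isOpen_iInter_of_finite fun v => ?_
    by_cases h' : x ∈ F v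
    · simp [h']
    · simp only [h', not_false_eq_true, forall_const]
      exact (hFc v).isOpen_compl
  · exact eq_univ_of_forall fun x => ⟨O x, ⟨x, rfl⟩, mem_iInter.2 fun v h' => h'⟩
  · rintro s ⟨_, ⟨x, rfl⟩, hs⟩
    have hx : ∀ j, x ∈ V (r (s j)) := fun j => hFV _ (hO x _ (hs j) _ (hr _))
    have h1 : D β (r ∘ s) = φ (p ∘ r ∘ s) := hβ _ (tup_nerveOf hx)
    obtain ⟨u, hu, hxu⟩ := hVU x
    have h2 : prism id (p ∘ r) (D φ) s = 0 := by
      refine prism_eq_zero _ _ _ _ fun t _ ht => hφ _ ⟨u, hu, fun j => ?_⟩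
      obtain ⟨i, hi | hi⟩ := ht j
      · rw [hi]
        exact hxu _ (hx i) (hFV _ (hr _))
      · rw [hi]
        exact hxu _ (hx i) (hp _)
    have h3 := D_prism id (p ∘ r) φ s
    have h4 : D (fun s => β (r ∘ s)) s = D β (r ∘ s) := rfl
    rw [D_sub, Pi.sub_apply, h4, h1]
    rw [h2] at h3
    have h5 : φ (id ∘ s) = φ s := rfl
    have h6 : φ ((p ∘ r) ∘ s) = φ (p ∘ r ∘ s) := rfl
    rw [h5, h6] at h3
    linarith

end Covering

namespace Covering

/-- A cochain vanishes near the diagonal. -/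
def LocZero {Y : Type*} [TopologicalSpace Y] {k : ℕ} (φ : (Fin k → Y) → ℤ) : Prop :=
  ∃ U, AS.IsOpenCover U ∧ ∀ s, AS.Small U s → φ s = 0

lemma subsingleton_ASH_iff {Y : Type*} [TopologicalSpace Y] (m : ℕ) :
    Subsingleton (AS.ASH ℤ (m + 1) Y) ↔ ∀ φ : (Fin (m + 2) → Y) → ℤ, LocZero (D φ) →
      ∃ ψ : (Fin (m + 1) → Y) → ℤ, LocZero (φ - D ψ) := by
  unfold AS.ASH
  rw [QuotientAddGroup.subsingleton_iff, AddSubgroup.eq_top_iff']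
  constructor
  · intro h φ hφ
    have hmem : (QuotientAddGroup.mk φ : AS.QC ℤ Y (m + 1)) ∈ AS.cocycles ℤ Y (m + 1) := by
      show AS.dQ ℤ Y (m + 1) _ = 0
      rw [AS.dQ, QuotientAddGroup.map_mk, QuotientAddGroup.eq_zero_iff]
      rw [← d_eq_D] at hφ
      exact hφ
    obtain ⟨q, hq⟩ := h ⟨_, hmem⟩
    obtain ⟨ψ, rfl⟩ := QuotientAddGroup.mk_surjective q
    refine ⟨ψ, ?_⟩
    have hq : AS.dQ ℤ Y m (QuotientAddGroup.mk ψ) = QuotientAddGroup.mk φ := hq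
    rw [AS.dQ, QuotientAddGroup.map_mk, QuotientAddGroup.eq, d_eq_D, neg_add_eq_sub] at hq
    exact hq
  · rintro h ⟨q, hq⟩
    obtain ⟨φ, rfl⟩ := QuotientAddGroup.mk_surjective q
    have hq : AS.dQ ℤ Y (m + 1) (QuotientAddGroup.mk φ) = 0 := hq
    rw [AS.dQ, QuotientAddGroup.map_mk, QuotientAddGroup.eq_zero_iff, d_eq_D] at hq
    obtain ⟨ψ, hψ⟩ := h φ hq
    refine ⟨QuotientAddGroup.mk ψ, ?_⟩
    show AS.dQ ℤ Y m (QuotientAddGroup.mk ψ) = QuotientAddGroup.mk φ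
    rw [AS.dQ, QuotientAddGroup.map_mk, QuotientAddGroup.eq, d_eq_D, neg_add_eq_sub]
    exact hψ

lemma subsingleton_ASH_of_covDimLE {Y : Type} [TopologicalSpace Y] [CompactSpace Y]
    [NormalSpace Y] {n m : ℕ} (h : CovDimLE Y n) (hnm : n < m + 1) :
    Subsingleton (AS.ASH ℤ (m + 1) Y) := by
  rw [subsingleton_ASH_iff]
  rintro φ ⟨U, hU, hφ⟩
  obtain ⟨ψ, O, hO, hs⟩ := exists_primitive_of_covDimLE h hnm φ hU hφ
  exact ⟨ψ, O, hO, fun s h => sub_eq_zero.2 (hs s h)⟩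

lemma cohDim_le_of_covDimLE {X : Type} [MetricSpace X] [LocallyCompactSpace X] {n : ℕ}
    (h : CovDimLE X n) : cohDim ℤ X ≤ n := by
  refine sSup_le ?_
  rintro _ ⟨m, rfl, B, hB, hne⟩
  by_contra hnm
  have hnm : n < m := by
    push Not at hnm
    exact_mod_cast hnm
  obtain ⟨m, rfl⟩ := Nat.exists_eq_succ_of_ne_zero (Nat.ne_zero_of_lt hnm)
  rw [← not_subsingleton_iff_nontrivial] at hne
  refine hne ?_
  unfold AS.Hc
  split_ifs with hc
  · exact subsingleton_ASH_of_covDimLE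
      (covDimLE_of_isClosed h (isCompact_iff_compactSpace.2 hc).isClosed) hnm
  · exact subsingleton_ASH_of_covDimLE (covDimLE_onePoint h) hnm

/-- Vanishing of the compactly supported cohomology, in terms of cochains. -/
lemma exists_compact_primitive {B : Type*} [TopologicalSpace B] [T2Space B] [LocallyCompactSpace B]
    {m : ℕ} (h : Subsingleton (AS.Hc ℤ (m + 1) B)) (e : (Fin (m + 2) → B) → ℤ) {K : Set B}
    (hK : IsCompact K) (heK : ∀ s, (∃ j, s j ∉ K) → e s = 0) (he : LocZero (D e)) :
    ∃ (c : (Fin (m + 1) → B) → ℤ) (K' : Set B), IsCompact K' ∧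
      (∀ s, (∀ j, s j ∉ K') → c s = 0) ∧ LocZero (e - D c) := by
  classical
  unfold AS.Hc at h
  split_ifs at h with hc
  · obtain ⟨c, hc⟩ := (subsingleton_ASH_iff m).1 h e he
    exact ⟨c, univ, isCompact_univ, fun s hs => absurd (mem_univ _) (hs 0), hc⟩
  have coe_inj : Injective ((↑) : B → OnePoint B) := OnePoint.coe_injective
  let E : (Fin (m + 2) → OnePoint B) → ℤ := fun s =>
    if hs : ∃ t : Fin (m + 2) → B, (fun j => (t j : OnePoint B)) = s then e hs.choose else 0
  have hE : ∀ t : Fin (m + 2) → B, E ((↑) ∘ t) = e t := by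
    intro t
    have hs : ∃ t' : Fin (m + 2) → B, (fun j => (t' j : OnePoint B)) = (↑) ∘ t := ⟨t, rfl⟩
    simp only [E, dif_pos hs]
    congr 1
    exact funext fun j => coe_inj (congrFun hs.choose_spec j)
  have hE0 : ∀ s, (∃ j, ∀ b ∈ K, s j ≠ (b : OnePoint B)) → E s = 0 := by
    rintro s ⟨j, hj⟩
    by_cases hs : ∃ t : Fin (m + 2) → B, (fun j => (t j : OnePoint B)) = s
    · obtain ⟨t, rfl⟩ := hs
      have := hE t
      rw [show (fun j => (t j : OnePoint B)) = (↑) ∘ t from rfl, this]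
      exact heK t ⟨j, fun h => hj _ h rfl⟩
    · simp only [E, dif_neg hs]
  obtain ⟨U, hU, heU⟩ := he
  have hDE : LocZero (D E) := by
    refine ⟨insert ((↑) '' K)ᶜ ((fun u => (↑) '' u) '' U), ⟨?_, ?_⟩, ?_⟩
    · rintro _ (rfl | ⟨u, hu, rfl⟩)
      · exact OnePoint.isOpen_compl_image_coe.2 ⟨hK.isClosed, hK⟩
      · exact OnePoint.isOpenEmbedding_coe.isOpenMap _ (hU.1 u hu)
    · refine eq_univ_of_forall fun y => ?_
      induction y using OnePoint.rec with
      | infty => exact ⟨_, mem_insert _ _, by simp⟩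
      | coe b =>
        obtain ⟨u, hu, hb⟩ : b ∈ ⋃₀ U := hU.2 ▸ mem_univ b
        exact ⟨_, mem_insert_of_mem _ ⟨u, hu, rfl⟩, b, hb, rfl⟩
    · rintro s ⟨_, rfl | ⟨u, hu, rfl⟩, hs⟩
      · exact D_eq_zero fun i => hE0 _ ⟨0, fun b hb h => hs _ ⟨b, hb, h.symm⟩⟩
      · choose t ht hts using hs
        obtain rfl : (fun j => (t j : OnePoint B)) = s := funext hts
        have := heU t ⟨u, hu, ht⟩
        rwa [← show (fun t : Fin (m + 2) → B => E ((↑) ∘ t)) = e from funext hE] at this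
  obtain ⟨c, O, hO, hcO⟩ := (subsingleton_ASH_iff m).1 h E hDE
  obtain ⟨u, hu, hinf⟩ : OnePoint.infty ∈ ⋃₀ O := hO.2 ▸ mem_univ (OnePoint.infty (X := B))
  let N : Set (OnePoint B) := u \ (↑) '' K
  have hu' : IsCompact ((↑) ⁻¹' uᶜ : Set B) :=
    (OnePoint.isOpen_iff_of_mem hinf).1 (hO.1 _ hu) |>.2
  let b : (Fin m → OnePoint B) → ℤ := fun t =>
    if ∀ j, t j ∈ N then c (Fin.cons OnePoint.infty t : Fin (m + 1) → OnePoint B) else 0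
  let c' : (Fin (m + 1) → OnePoint B) → ℤ := c - D b
  have hN : ∀ s, (∀ j, s j ∈ N) → c' s = 0 := by
    intro s hs
    have h1 : D b s = D (cone OnePoint.infty c) s := D_congr fun i => by
      simp only [b, cone]
      exact if_pos fun j => hs _
    have h2 := D_cons OnePoint.infty c s
    have h3 : (E - D c) (Fin.cons OnePoint.infty s : Fin (m + 2) → OnePoint B) = 0 :=
      hcO _ ⟨u, hu, fun j => Fin.cases hinf (fun j => (hs j).1) j⟩
    have h4 : E (Fin.cons OnePoint.infty s : Fin (m + 2) → OnePoint B) = 0 :=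
      hE0 _ ⟨0, fun b _ h => OnePoint.infty_ne_coe b h⟩
    rw [Pi.sub_apply, h4, h2] at h3
    show c s - D b s = 0
    rw [h1]
    linarith
  refine ⟨fun s => c' ((↑) ∘ s), K ∪ (↑) ⁻¹' uᶜ, hK.union hu', fun s hs => hN _ fun j => ⟨?_, ?_⟩,
    (fun o => (↑) ⁻¹' o) '' O, ⟨?_, ?_⟩, ?_⟩
  · by_contra h'
    exact hs j (Or.inr h')
  · rintro ⟨k, hk, hkj⟩
    exact hs j (Or.inl (coe_inj hkj ▸ hk))
  · rintro _ ⟨o, ho, rfl⟩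
    exact (hO.1 o ho).preimage OnePoint.continuous_coe
  · refine eq_univ_of_forall fun x => ?_
    obtain ⟨o, ho, hx⟩ : (x : OnePoint B) ∈ ⋃₀ O := hO.2 ▸ mem_univ _
    exact ⟨_, ⟨o, ho, rfl⟩, hx⟩
  · rintro s ⟨_, ⟨o, ho, rfl⟩, hs⟩
    have h1 : (E - D c) ((↑) ∘ s) = 0 := hcO _ ⟨o, ho, hs⟩
    rw [Pi.sub_apply, hE] at h1
    have h2 : D (fun s : Fin (m + 1) → B => c' ((↑) ∘ s)) s = D c' ((↑) ∘ s) := rfl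
    rw [Pi.sub_apply, h2]
    show e s - D (c - D b) _ = 0
    rw [D_sub, Pi.sub_apply, D_D]
    linarith

end Covering

namespace Covering

/-- If the compactly supported cohomology of the intersection of an open cover by `m + 2` sets
vanishes in degree `m + 1`, the cover can be shrunk to have empty intersection. -/
theorem exists_shrinking_of_subsingleton_Hc {m : ℕ} {Q B : Type} [TopologicalSpace Q]
    [CompactSpace Q] [T2Space Q] (hQ : CovDimLE Q (m + 1)) {V : Fin (m + 2) → Set Q}
    (hVo : ∀ i, IsOpen (V i)) (hVc : ∀ x, ∃ i, x ∈ V i) [TopologicalSpace B] {j : B → Q}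
    (hj : Topology.IsOpenEmbedding j) (hjV : range j = ⋂ i, V i)
    [LocallyCompactSpace B] (h : Subsingleton (AS.Hc ℤ (m + 1) B)) :
    ∃ W : Fin (m + 2) → Set Q, (∀ i, IsOpen (W i)) ∧ (∀ x, ∃ i, x ∈ W i) ∧ (∀ i, W i ⊆ V i) ∧
      ∀ x, ∃ i, x ∉ W i := by
  classical
  have : T2Space B := hj.toIsEmbedding.t2Space
  obtain ⟨F, hF, hFc, hFV⟩ := exists_iUnion_eq_closed_subset hVo (fun _ => Set.toFinite _)
    (eq_univ_of_forall fun x => mem_iUnion.2 (hVc x))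
  have hF : ∀ x, ∃ i, x ∈ F i := fun x => mem_iUnion.1 (hF ▸ mem_univ x)
  choose r hr using hF
  have hC : IsCompact (j ⁻¹' ⋂ i, F i) := hj.isInducing.isCompact_preimage'
    (isClosed_iInter hFc).isCompact (by rw [hjV]; exact iInter_mono hFV)
  obtain ⟨K, hK, hCK⟩ := exists_compact_superset hC
  let e : (Fin (m + 2) → B) → ℤ := fun t =>
    if ∀ k, t k ∈ K then D (kappa m) (r ∘ j ∘ t) else 0
  have he0 : ∀ (t : Fin (m + 2) → B) (i), (∀ k, j (t k) ∉ F i) → e t = 0 := by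
    intro t i hi
    simp only [e]
    split_ifs
    · exact D_kappa_eq_zero i fun k h => hi k (h ▸ hr _)
    · rfl
  have hDe : LocZero (D e) := by
    refine ⟨insert (interior K) (range fun i => j ⁻¹' (F i)ᶜ), ⟨?_, ?_⟩, ?_⟩
    · rintro _ (rfl | ⟨i, rfl⟩)
      · exact isOpen_interior
      · exact (hFc i).isOpen_compl.preimage hj.continuous
    · refine eq_univ_of_forall fun b => ?_
      by_cases hb : b ∈ j ⁻¹' ⋂ i, F i
      · exact ⟨_, mem_insert _ _, hCK hb⟩
      · have : ∃ i, j b ∉ F i := by simpa using hb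
        obtain ⟨i, hi⟩ := this
        exact ⟨_, mem_insert_of_mem _ ⟨i, rfl⟩, hi⟩
    · rintro s ⟨_, rfl | ⟨i, rfl⟩, hs⟩
      · have hsK : ∀ k, s k ∈ K := fun k => interior_subset (hs k)
        have h1 : D e s = D (fun t : Fin (m + 2) → B => D (kappa m) ((r ∘ j) ∘ t)) s :=
          D_congr fun i => if_pos fun k => hsK _
        rw [h1, D_comp, D_D]
      · exact D_eq_zero fun k => he0 _ i fun l => hs _
  obtain ⟨c, K', hK', hc, O, hO, hcO⟩ := exists_compact_primitive h e hK
    (fun s hs => if_neg (by push Not; exact hs)) hDe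
  let L : Set Q := j '' (K ∪ K')
  have hL : IsClosed L := ((hK.union hK').image hj.continuous).isClosed
  have hLV : ∀ x ∈ L, ∀ i, x ∈ V i := by
    rintro _ ⟨b, -, rfl⟩ i
    exact mem_iInter.1 (hjV ▸ mem_range_self b) i
  let C : (Fin (m + 1) → Q) → ℤ := fun s =>
    if hs : ∃ t : Fin (m + 1) → B, j ∘ t = s then c hs.choose else 0
  have hCj : ∀ t, C (j ∘ t) = c t := by
    intro t
    have hs : ∃ t' : Fin (m + 1) → B, j ∘ t' = j ∘ t := ⟨t, rfl⟩
    simp only [C, dif_pos hs]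
    congr 1
    exact funext fun k => hj.injective (congrFun hs.choose_spec k)
  have hC0 : ∀ s, (∀ k, s k ∉ L) → C s = 0 := by
    intro s hs
    by_cases ht : ∃ t : Fin (m + 1) → B, j ∘ t = s
    · obtain ⟨t, rfl⟩ := ht
      rw [hCj]
      exact hc t fun k hk => hs k ⟨t k, Or.inr hk, rfl⟩
    · simp only [C, dif_neg ht]
  let w : (Fin (m + 1) → Q) → ℤ := (fun s => kappa m (r ∘ s)) - C
  let U : Set (Set Q) := {u | IsOpen u ∧
    ((∃ o ∈ O, u ⊆ j '' o ∧ (u ⊆ j '' K ∨ ∃ i, ∀ x ∈ u, x ∉ F i)) ∨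
      ((∀ x ∈ u, x ∉ L) ∧ (∃ i, ∀ x ∈ u, x ∉ F i) ∧ ∀ i, ∀ x ∈ u, x ∈ F i → u ⊆ V i))}
  have hU : AS.IsOpenCover U := by
    refine ⟨fun u hu => hu.1, eq_univ_of_forall fun x => ?_⟩
    by_cases hx : x ∈ range j
    · obtain ⟨b, rfl⟩ := hx
      obtain ⟨o, ho, hb⟩ : b ∈ ⋃₀ O := hO.2 ▸ mem_univ b
      by_cases hbF : ∀ i, j b ∈ F i
      · refine ⟨j '' (o ∩ interior K), ⟨hj.isOpenMap _ ((hO.1 o ho).inter isOpen_interior),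
          Or.inl ⟨o, ho, image_mono inter_subset_left,
            Or.inl (image_mono (inter_subset_right.trans interior_subset))⟩⟩,
          b, ⟨hb, hCK ?_⟩, rfl⟩
        exact mem_iInter.2 hbF
      · push Not at hbF
        obtain ⟨i, hi⟩ := hbF
        exact ⟨j '' o ∩ (F i)ᶜ, ⟨(hj.isOpenMap _ (hO.1 o ho)).inter (hFc i).isOpen_compl,
          Or.inl ⟨o, ho, inter_subset_left, Or.inr ⟨i, fun x hx => hx.2⟩⟩⟩, ⟨b, hb, rfl⟩, hi⟩
    · have : ∃ i, x ∉ V i := by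
        rw [hjV] at hx
        simpa using hx
      obtain ⟨i, hi⟩ := this
      refine ⟨Lᶜ ∩ ⋂ k, {y | (x ∈ V k → y ∈ V k) ∧ (x ∉ V k → y ∉ F k)},
        ⟨hL.isOpen_compl.inter (isOpen_iInter_of_finite fun k => ?_), Or.inr ⟨fun y hy => hy.1,
          ⟨i, fun y hy => (mem_iInter.1 hy.2 i).2 hi⟩, fun k y hy hyF z hz =>
            (mem_iInter.1 hz.2 k).1 ?_⟩⟩, fun hxL => hi (hLV x hxL i),
        mem_iInter.2 fun k => ⟨fun h => h, fun h h' => h (hFV k h')⟩⟩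
      · by_cases hk : x ∈ V k
        · simp only [hk, forall_const, not_true_eq_false, false_imp_iff, and_true]
          exact hVo k
        · simp only [hk, false_imp_iff, not_false_eq_true, forall_const, true_and]
          exact (hFc k).isOpen_compl
      · by_contra hk
        exact (mem_iInter.1 hy.2 k).2 hk hyF
  have hw : ∀ s, AS.Small U s → D w s = 0 := by
    rintro s ⟨u, ⟨-, hu⟩, hs⟩
    have h1 : D w s = D (kappa m) (r ∘ s) - D C s := by
      rw [D_sub]
      rfl
    have h2 : ∀ i, (∀ x ∈ u, x ∉ F i) → D (kappa m) (r ∘ s) = 0 := fun i hi =>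
      D_kappa_eq_zero i fun k h => hi _ (hs k) (h ▸ hr _)
    rw [h1]
    rcases hu with ⟨o, ho, huo, hu⟩ | ⟨huL, ⟨i, hi⟩, -⟩
    · choose t ht hts using fun k => huo (hs k)
      obtain rfl : j ∘ t = s := funext hts
      have h3 : D C (j ∘ t) = D c t := by
        rw [← show (fun t : Fin (m + 1) → B => C (j ∘ t)) = c from funext hCj]
        rfl
      have h4 : e t - D c t = 0 := hcO t ⟨o, ho, ht⟩
      have h5 : D (kappa m) (r ∘ j ∘ t) = e t := by
        rcases hu with hu | ⟨i, hi⟩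
        · refine (if_pos fun k => ?_).symm
          obtain ⟨b, hb, hbt⟩ := hu (hs k)
          exact hj.injective hbt ▸ hb
        · rw [h2 i hi, he0 t i fun k => hi _ (hs k)]
      rw [h3, h5, h4]
    · rw [h2 i hi, D_eq_zero fun k => hC0 _ fun l => huL _ (hs _), sub_zero]
  obtain ⟨ι, _, P, p, hPo, hPc, hp, hPU, hord⟩ := exists_pointed_cover hQ hU
  let H : HopfData m Q ι :=
    { F := nerveOf P
      lower := isLowerSet_nerveOf P
      card_le := fun σ hσ => hord σ hσ
      U := P
      isOpen_U := hPo
      cov := hPc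
      nerve := fun σ hσ => hσ
      I := {v | p v ∉ L}
      N := {v | p v ∉ L}
      I_subset := subset_rfl
      l := fun v => r (p v)
      not_full := by
        rintro σ ⟨x, hx⟩ hσ
        obtain ⟨u, ⟨-, hu⟩, hxu⟩ := hPU x
        have hpu : ∀ v ∈ σ, p v ∈ u := fun v hv => hxu v (hx v hv) (hp v)
        have key : ∀ i, (∀ x ∈ u, x ∉ F i) → ∃ i, ∀ v ∈ σ, r (p v) ≠ i := fun i hi =>
          ⟨i, fun v hv h => hi _ (hpu v hv) (h ▸ hr _)⟩
        rcases hu with ⟨o, ho, huo, hu | ⟨i, hi⟩⟩ | ⟨-, ⟨i, hi⟩, -⟩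
        · refine ⟨0, fun v hv => (hσ v hv ?_).elim⟩
          exact image_mono subset_union_left (hu (hpu v hv))
        · exact key i hi
        · exact key i hi
      w := fun s => w (p ∘ s)
      cocycle := by
        intro s hs
        obtain ⟨x, hx⟩ := hs.nerveOf
        obtain ⟨u, hu, hxu⟩ := hPU x
        exact hw (p ∘ s) ⟨u, hu, fun k => hxu _ (hx k) (hp _)⟩
      standard := by
        intro s _ hs
        show kappa m (r ∘ p ∘ s) - C (p ∘ s) = _
        rw [hC0 (p ∘ s) hs, sub_zero]
        rfl }
  obtain ⟨W, hWo, hWc, hW0, hW⟩ := HopfData.solvable m Q ι H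
  refine ⟨W, hWo, hWc, fun i x hx => ?_, hW0⟩
  obtain ⟨u, ⟨-, hu⟩, hxu⟩ := hPU x
  obtain ⟨v, hv⟩ := hPc x
  have hxu' : x ∈ u := hxu v hv hv
  rcases hu with ⟨o, -, huo, -⟩ | ⟨huL, -, huF⟩
  · have : x ∈ range j := image_subset_range _ _ (huo hxu')
    rw [hjV] at this
    exact mem_iInter.1 this i
  · obtain ⟨v, hv, hvi⟩ := hW i x hx fun v hv => huL _ (hxu v hv (hp v))
    have hvi : r (p v) = i := hvi
    exact huF i (p v) (hxu v hv (hp v)) (hvi ▸ hr _) hxu'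

end Covering

namespace Covering

/-- The sets to be removed from an open swelling of `⋂ v ∈ σ, closure (P v)` in order to reduce the
order of a cover there. -/
lemma exists_closed_of_subsingleton_Hc {X : Type} [TopologicalSpace X] [T2Space X]
    [LocallyCompactSpace X] {m : ℕ} (hX : CovDimLE X (m + 1))
    (hB : ∀ B : Set X, LocallyCompactSpace B → Subsingleton (AS.Hc ℤ (m + 1) B))
    {ι : Type*} {P : ι → Set X} (hP : ∀ v, IsOpen (P v)) {σ : Finset ι} (hσ : σ.card = m + 2)
    (hc : IsCompact (⋂ v ∈ σ, closure (P v)))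
    (hcov : ∀ x ∈ ⋂ v ∈ σ, closure (P v), ∃ v ∈ σ, x ∈ P v) :
    ∃ G : ι → Set X, (∀ v, IsClosed (G v)) ∧ (∀ v, G v ⊆ ⋂ v ∈ σ, closure (P v)) ∧
      (∀ x ∈ ⋂ v ∈ σ, closure (P v), ∃ v ∈ σ, x ∈ P v ∧ x ∉ G v) ∧
      ∀ x ∈ ⋂ v ∈ σ, closure (P v), ∃ v ∈ σ, x ∈ G v := by
  classical
  set Q : Set X := ⋂ v ∈ σ, closure (P v) with hQ
  let B : Set X := ⋂ v ∈ σ, P v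
  have hBo : IsOpen B := isOpen_biInter_finset fun v _ => hP v
  have hBQ : B ⊆ Q := iInter₂_mono fun v _ => subset_closure
  have : CompactSpace Q := isCompact_iff_compactSpace.1 hc
  have hBlc : LocallyCompactSpace B := hBo.locallyCompactSpace
  let f : Fin (m + 2) ≃ σ := (σ.equivFinOfCardEq hσ).symm
  obtain ⟨W, hWo, hWc, hWP, hW⟩ := exists_shrinking_of_subsingleton_Hc (m := m) (Q := Q) (B := B)
    (covDimLE_of_isClosed hX hc.isClosed) (V := fun i => Subtype.val ⁻¹' P (f i))
    (fun i => (hP _).preimage continuous_subtype_val)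
    (fun x => by
      obtain ⟨v, hv, hx⟩ := hcov x x.2
      exact ⟨f.symm ⟨v, hv⟩, by simpa using hx⟩)
    (j := inclusion hBQ)
    ⟨Topology.IsEmbedding.inclusion hBQ, by
      rw [range_inclusion]
      exact hBo.preimage continuous_subtype_val⟩
    (by
      rw [range_inclusion]
      ext x
      simp only [B, mem_ofPred_eq, mem_iInter, mem_preimage]
      exact ⟨fun h i => h _ (f i).2, fun h v hv => by simpa using h (f.symm ⟨v, hv⟩)⟩)
    (hB B hBlc)
  refine ⟨fun v => if hv : v ∈ σ then Subtype.val '' (W (f.symm ⟨v, hv⟩))ᶜ else ∅, fun v => ?_,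
    fun v => ?_, fun x hx => ?_, fun x hx => ?_⟩
  · beta_reduce
    split_ifs with hv
    · exact (hc.isClosed.isClosedEmbedding_subtypeVal).isClosedMap _ (hWo _).isClosed_compl
    · exact isClosed_empty
  · beta_reduce
    split_ifs with hv
    · rintro _ ⟨x, -, rfl⟩
      exact x.2
    · exact empty_subset _
  · obtain ⟨i, hi⟩ := hWc ⟨x, hx⟩
    refine ⟨f i, (f i).2, hWP i hi, ?_⟩
    beta_reduce
    rw [dif_pos (f i).2]
    rintro ⟨y, hy, rfl⟩
    exact hy (by simpa using hi)
  · obtain ⟨i, hi⟩ := hW ⟨x, hx⟩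
    refine ⟨f i, (f i).2, ?_⟩
    beta_reduce
    rw [dif_pos (f i).2]
    exact ⟨⟨x, hx⟩, by simpa using hi, rfl⟩

theorem covDimLE_of_subsingleton_Hc {X : Type} [MetricSpace X] [LocallyCompactSpace X] {m : ℕ}
    (hX : CovDimLE X (m + 1))
    (hB : ∀ B : Set X, LocallyCompactSpace B → Subsingleton (AS.Hc ℤ (m + 1) B)) :
    CovDimLE X m := by
  classical
  refine covDimLE_of_indexed fun U hU hcov => ?_
  have : ∀ x : X, ∃ A, IsOpen A ∧ x ∈ A ∧ IsCompact (closure A) ∧ ∃ u ∈ U, A ⊆ u := fun x => by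
    obtain ⟨u, hu, hx⟩ : x ∈ ⋃₀ U := hcov ▸ mem_univ x
    obtain ⟨K, hK, hxK, hKu⟩ := exists_compact_subset (hU u hu) hx
    exact ⟨interior K, isOpen_interior, hxK,
      hK.of_isClosed_subset isClosed_closure (closure_minimal interior_subset hK.isClosed),
      u, hu, interior_subset.trans hKu⟩
  choose A hAo hxA hAc u hu hAu using this
  obtain ⟨A', hA'o, hA'c, hA'f, hA'A⟩ := precise_refinement A hAo
    (eq_univ_of_forall fun x => mem_iUnion.2 ⟨x, hxA x⟩)
  obtain ⟨V, hVo, hVc, hVA', hord⟩ := exists_precise_refinement hX A' hA'o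
    fun x => mem_iUnion.1 (hA'c ▸ mem_univ x)
  have hVf : LocallyFinite V := hA'f.subset hVA'
  obtain ⟨P, hPc, hPo, hPV⟩ := exists_iUnion_eq_closure_subset hVo (fun x => hVf.point_finite x)
    (eq_univ_of_forall fun x => mem_iUnion.2 (hVc x))
  have hPc : ∀ x, ∃ v, x ∈ P v := fun x => mem_iUnion.1 (hPc ▸ mem_univ x)
  have hQV : ∀ {σ : Finset X} {x : X}, x ∈ ⋂ v ∈ σ, closure (P v) → ∀ v ∈ σ, x ∈ V v :=
    fun hx v hv => hPV v (mem_iInter₂.1 hx v hv)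
  have hG : ∀ σ : {σ : Finset X // σ.card = m + 2}, ∃ G : X → Set X, (∀ v, IsClosed (G v)) ∧
      (∀ v, G v ⊆ ⋂ v ∈ σ.1, closure (P v)) ∧
      (∀ x ∈ ⋂ v ∈ σ.1, closure (P v), ∃ v ∈ σ.1, x ∈ P v ∧ x ∉ G v) ∧
      ∀ x ∈ ⋂ v ∈ σ.1, closure (P v), ∃ v ∈ σ.1, x ∈ G v := fun ⟨σ, hσ⟩ => by
    refine exists_closed_of_subsingleton_Hc hX hB hPo hσ ?_ fun x hx => ?_
    · obtain ⟨v, hv⟩ : σ.Nonempty := Finset.card_pos.1 (by omega)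
      refine (hAc v).of_isClosed_subset (isClosed_biInter fun _ _ => isClosed_closure) ?_
      exact fun x hx => subset_closure (hA'A v (hVA' v (hQV hx v hv)))
    · obtain ⟨v, hv⟩ := hPc x
      refine ⟨v, ?_, hv⟩
      by_contra hvσ
      have := hord (insert v σ) ⟨x, fun k hk => by
        obtain rfl | hk := Finset.mem_insert.1 hk
        · exact hPV _ (subset_closure hv)
        · exact hQV hx k hk⟩
      rw [Finset.card_insert_of_notMem hvσ, hσ] at this
      omega
  choose G hGc hGQ hGcov hGord using hG
  have huniq : ∀ (σ τ : {σ : Finset X // σ.card = m + 2}) (x : X), x ∈ ⋂ v ∈ σ.1, closure (P v) →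
      x ∈ ⋂ v ∈ τ.1, closure (P v) → σ = τ := fun σ τ x hσ hτ => by
    have h1 := hord (σ.1 ∪ τ.1) ⟨x, fun v hv => by
      obtain hv | hv := Finset.mem_union.1 hv
      · exact hQV hσ v hv
      · exact hQV hτ v hv⟩
    have h2 : σ.1 = σ.1 ∪ τ.1 := Finset.eq_of_subset_of_card_le Finset.subset_union_left
      (by rw [σ.2]; exact h1)
    have h3 : τ.1 = σ.1 ∪ τ.1 := Finset.eq_of_subset_of_card_le Finset.subset_union_right
      (by rw [τ.2]; exact h1)
    exact Subtype.ext (h2.trans h3.symm)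
  have hQf : LocallyFinite fun σ : {σ : Finset X // σ.card = m + 2} =>
      ⋂ v ∈ σ.1, closure (P v) := fun x => by
    obtain ⟨t, ht, hf⟩ := hVf x
    refine ⟨t, ht, Set.Finite.subset (s := Subtype.val ⁻¹' (hf.toFinset.powerset : Set (Finset X)))
      ((Finset.finite_toSet _).preimage Subtype.val_injective.injOn) ?_⟩
    rintro σ ⟨y, hy, hyt⟩
    simp only [mem_preimage, Finset.coe_powerset, mem_powerset_iff]
    intro v hv
    simpa using ⟨y, hQV hy v hv, hyt⟩
  refine ⟨X, fun v => P v \ ⋃ σ : {σ : Finset X // σ.card = m + 2}, {x | v ∈ σ.1 ∧ x ∈ G σ v},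
    fun v => (hPo v).sdiff (LocallyFinite.isClosed_iUnion (hQf.subset fun σ x hx =>
      hGQ σ v hx.2) fun σ => ?_), fun x => ?_, fun v _ => ⟨u v, hu v, ?_⟩, ?_⟩
  · by_cases hv : v ∈ σ.1
    · simpa [hv] using hGc σ v
    · simp [hv]
  · by_cases hx : ∃ σ : {σ : Finset X // σ.card = m + 2}, x ∈ ⋂ v ∈ σ.1, closure (P v)
    · obtain ⟨σ, hσ⟩ := hx
      obtain ⟨v, hv, hxv, hxG⟩ := hGcov σ x hσ
      refine ⟨v, hxv, fun h => ?_⟩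
      obtain ⟨τ, -, hτ⟩ := mem_iUnion.1 h
      exact hxG (huniq σ τ x hσ (hGQ τ v hτ) ▸ hτ)
    · obtain ⟨v, hv⟩ := hPc x
      refine ⟨v, hv, fun h => ?_⟩
      obtain ⟨τ, -, hτ⟩ := mem_iUnion.1 h
      exact hx ⟨τ, hGQ τ v hτ⟩
  · exact fun x hx => hAu v (hA'A v (hVA' v (hPV v (subset_closure hx.1))))
  · rintro σ ⟨x, hx⟩
    by_contra hσ
    obtain ⟨τ, hτσ, hτ⟩ := Finset.exists_subset_card_eq (show m + 2 ≤ σ.card by omega)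
    obtain ⟨v, hv, hxv⟩ := hGord ⟨τ, hτ⟩ x
      (mem_iInter₂.2 fun v hv => subset_closure (hx v (hτσ hv)).1)
    exact (hx v (hτσ hv)).2 (mem_iUnion.2 ⟨⟨τ, hτ⟩, hv, hxv⟩)

end Covering

/-- **Theorem 6** (Alexandroff's fundamental theorem of homological dimension).
For every locally compact metric space `X`, `dim_ℤ X ≤ dim X`, and if `dim X < ∞` then
`dim_ℤ X = dim X`. -/
theorem cohDim_int_le_covDim (X : Type) [MetricSpace X] [LocallyCompactSpace X] :
    cohDim ℤ X ≤ covDim X ∧ (covDim X < ⊤ → cohDim ℤ X = covDim X) := by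
  have hle : cohDim ℤ X ≤ covDim X :=
    le_sInf fun _ ⟨n, hn, h⟩ => hn ▸ Covering.cohDim_le_of_covDimLE h
  refine ⟨hle, fun hlt => hle.antisymm ?_⟩
  obtain ⟨_, ⟨n, rfl, hn⟩, -⟩ := sInf_lt_iff.1 hlt
  have hdim : ∀ n : ℕ, CovDimLE X n → covDim X ≤ n := fun n hn => sInf_le ⟨n, rfl, hn⟩
  induction n with
  | zero => exact (hdim 0 hn).trans (by simp)
  | succ m ih =>
    by_cases hB : ∀ B : Set X, LocallyCompactSpace B → Subsingleton (AS.Hc ℤ (m + 1) B)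
    · exact ih (Covering.covDimLE_of_subsingleton_Hc hn hB)
    · push Not at hB
      obtain ⟨B, hlc, hne⟩ := hB
      exact (hdim (m + 1) hn).trans (le_sSup ⟨m + 1, rfl, B, hlc, hne⟩)
end
end
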